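/- arXiv:2003.11002 — 6 statements merged into one kernel-verified Lean document; each statement's English description precedes it below -/
import Mathlib

section
/- (V. A. Markov's theorem on real Banach spaces.) Let X be a real Banach space, let P be a continuous polynomial of degree at most n on X with ‖P‖ ≤ 1, and let 1 ≤ k ≤ n. Then for every x ∈ X with ‖x‖ ≤ 1, ‖D̂^k P(x)‖ ≤ T_n^{(k)}(1) = n²(n²−1²)⋯(n²−(k−1)²)/(1·3⋯(2k−1)). -/
open Metric

/-- `T_n^{(k)}(1)`: the `k`-th derivative of the `n`-th Chebyshev polynomial of the
first kind, evaluated at `1`. -/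
noncomputable def chebTDerivOne (n k : ℕ) : ℝ :=
  (Polynomial.derivative^[k] (Polynomial.Chebyshev.T ℝ (n : ℤ))).eval 1


namespace MB

open Polynomial

def NN (p : ℝ[X]) : Prop := ∀ k, 0 ≤ p.coeff k

lemma NN.mul {p q : ℝ[X]} (hp : NN p) (hq : NN q) : NN (p * q) := fun k => by
  rw [coeff_mul]; exact Finset.sum_nonneg fun i _ => mul_nonneg (hp _) (hq _)

lemma NN.add {p q : ℝ[X]} (hp : NN p) (hq : NN q) : NN (p + q) := fun k => by
  rw [coeff_add]; exact add_nonneg (hp _) (hq _)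

lemma NN.C {a : ℝ} (ha : 0 ≤ a) : NN (C a) := fun k => by
  rw [coeff_C]; split_ifs <;> simp [ha]

lemma NN.X : NN (X : ℝ[X]) := fun k => by
  rw [coeff_X]; split_ifs <;> simp

lemma NN.prod {ι : Type*} (s : Finset ι) (f : ι → ℝ[X]) (h : ∀ i ∈ s, NN (f i)) :
    NN (∏ i ∈ s, f i) :=
  Finset.prod_induction f NN (fun _ _ => NN.mul) (by simpa using NN.C zero_le_one) h

noncomputable def Q (p : ℝ) : ℝ[X] := C ((1 - p) ^ 2) + C p * X

lemma NN_Q {p : ℝ} (hp : 0 ≤ p) : NN (Q p) :=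
  (NN.C (sq_nonneg _)).add ((NN.C hp).mul NN.X)

lemma eval_Q (p c : ℝ) (hc : c ≠ 0) :
    (Q p).eval (2 - c ^ 2 - c⁻¹ ^ 2) = (c ^ 2 - p) * (c⁻¹ ^ 2 - p) := by
  simp [Q]; field_simp; ring

noncomputable def PQ (A : Finset ℝ) : ℝ[X] := ∏ t ∈ A, Q (t ^ 2)

lemma NN_PQ (A : Finset ℝ) : NN (PQ A) := NN.prod _ _ fun _ _ => NN_Q (sq_nonneg _)

lemma PQ_split (A : Finset ℝ) (hpos : ∀ t ∈ A, 0 < t) (z : ℝ) (hz : z ≠ 0 → |z| ∈ A) :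
    PQ A = Q (z ^ 2) * PQ (A.filter fun t => t ^ 2 ≠ z ^ 2) := by
  by_cases h0 : z = 0
  · subst h0
    have : A.filter (fun t => t ^ 2 ≠ (0:ℝ) ^ 2) = A := by
      apply Finset.filter_true_of_mem
      intro t ht
      have := hpos t ht
      exact (by simpa using this.ne')
    rw [this]; simp [Q]
  · have : A.filter (fun t => t ^ 2 ≠ z ^ 2) = A.erase |z| := by
      ext t
      simp only [Finset.mem_filter, Finset.mem_erase]
      constructor
      · rintro ⟨h1, h2⟩
        refine ⟨fun h => h2 ?_, h1⟩
        rw [h, sq_abs]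
      · rintro ⟨h1, h2⟩
        refine ⟨h2, fun h => h1 ?_⟩
        rw [sq_eq_sq_iff_abs_eq_abs, abs_of_pos (hpos t h2)] at h
        exact h
    rw [this, PQ, PQ, ← Finset.mul_prod_erase A _ (hz h0), sq_abs]

noncomputable def Zp (Z : Finset ℝ) : Finset ℝ := Z.filter fun t => 0 < t

lemma nodal_mul (Z : Finset ℝ) (hsym : ∀ z ∈ Z, -z ∈ Z) (c : ℝ) (hc : c ≠ 0) :
    (Lagrange.nodal Z id).eval c * (Lagrange.nodal Z id).eval c⁻¹
      = (PQ (Zp Z)).eval (2 - c ^ 2 - c⁻¹ ^ 2) := by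
  have hp : (PQ (Zp Z)).eval (2 - c ^ 2 - c⁻¹ ^ 2)
      = ∏ t ∈ Zp Z, (c ^ 2 - t ^ 2) * (c⁻¹ ^ 2 - t ^ 2) := by
    rw [PQ, eval_prod]
    exact Finset.prod_congr rfl fun t _ => eval_Q _ _ hc
  rw [hp, Lagrange.eval_nodal, Lagrange.eval_nodal, ← Finset.prod_mul_distrib]
  simp only [id]
  rw [← Finset.prod_filter_mul_prod_filter_not Z (fun t => 0 < t),
    ← Finset.prod_filter_mul_prod_filter_not (Z.filter (fun t => ¬ 0 < t)) (fun t => t < 0)]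
  have h0 : ∏ x ∈ (Z.filter (fun t => ¬ 0 < t)).filter (fun t => ¬ t < 0),
      (c - x) * (c⁻¹ - x) = 1 := by
    apply Finset.prod_eq_one
    intro x hx
    simp only [Finset.mem_filter] at hx
    have : x = 0 := by linarith [hx.1.2, hx.2]
    subst this
    simp [hc]
  have h1 : ∏ x ∈ (Z.filter (fun t => ¬ 0 < t)).filter (fun t => t < 0),
      (c - x) * (c⁻¹ - x) = ∏ x ∈ Zp Z, (c + x) * (c⁻¹ + x) := by
    refine Finset.prod_bij (fun x _ => -x) ?_ ?_ ?_ ?_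
    · intro a ha
      simp only [Finset.mem_filter, Zp] at ha ⊢
      exact ⟨hsym _ ha.1.1, by linarith⟩
    · intro a _ b _ h; linarith
    · intro b hb
      simp only [Finset.mem_filter, Zp] at hb
      refine ⟨-b, ?_, by simp⟩
      simp only [Finset.mem_filter]
      exact ⟨⟨hsym _ hb.1, by linarith⟩, by linarith⟩
    · intro a _; ring
  rw [h0, h1, mul_one, Zp, ← Finset.prod_mul_distrib]
  exact Finset.prod_congr rfl fun t _ => by ring

open Classical in
noncomputable def K (Z : Finset ℝ) (z z' : ℝ) : ℝ[X] :=
  if z ^ 2 = z' ^ 2 then C (1 + z * z') * PQ ((Zp Z).filter fun t => t ^ 2 ≠ z ^ 2)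
  else C ((1 + z * z') / 2) * ((C (2 * (1 - z ^ 2) * (1 - z' ^ 2)) + C (z ^ 2 + z' ^ 2) * X) *
    PQ (((Zp Z).filter fun t => t ^ 2 ≠ z ^ 2).filter fun t => t ^ 2 ≠ z' ^ 2))

lemma NN_K (Z : Finset ℝ) (z z' : ℝ) (hz : |z| ≤ 1) (hz' : |z'| ≤ 1) : NN (K Z z z') := by
  have h1 : 0 ≤ 1 - z ^ 2 := by nlinarith [abs_le.mp hz]
  have h2 : 0 ≤ 1 - z' ^ 2 := by nlinarith [abs_le.mp hz']
  have h3 : 0 ≤ 1 + z * z' := by nlinarith [sq_nonneg (z + z')]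
  unfold K
  split_ifs
  · exact (NN.C h3).mul (NN_PQ _)
  · exact (NN.C (by positivity)).mul (((NN.C (by positivity)).add
      ((NN.C (by positivity)).mul NN.X)).mul (NN_PQ _))

lemma alg1 (c y z z' : ℝ) (h1 : c - z ≠ 0) (h2 : y - z' ≠ 0) (h3 : c + z ≠ 0) (h4 : y + z' ≠ 0) :
    (c - z)⁻¹ * (y - z')⁻¹ + (-c - z)⁻¹ * (-y - z')⁻¹
      = 2 * (c * y + z * z') / ((c ^ 2 - z ^ 2) * (y ^ 2 - z' ^ 2)) := by
  have e1 : -c - z = -(c + z) := by ring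
  have e2 : -y - z' = -(y + z') := by ring
  have e3 : c ^ 2 - z ^ 2 = (c - z) * (c + z) := by ring
  have e4 : y ^ 2 - z' ^ 2 = (y - z') * (y + z') := by ring
  rw [e1, e2, e3, e4]
  field_simp
  ring

lemma key (Z : Finset ℝ) (hsym : ∀ z ∈ Z, -z ∈ Z) (c : ℝ) (hc : c ≠ 0)
    (hcZ : c ∉ Z) (hcZ' : c⁻¹ ∉ Z) (z z' : ℝ) (hz : z ∈ Z) (hz' : z' ∈ Z) :
    let l := fun z => Lagrange.basis Z id z
    (l z).eval c * (l z').eval c⁻¹ + (l z).eval c⁻¹ * (l z').eval c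
      + (l z).eval (-c) * (l z').eval (-c⁻¹) + (l z).eval (-c⁻¹) * (l z').eval (-c)
      = 4 * (Lagrange.nodalWeight Z id z * Lagrange.nodalWeight Z id z' *
          (K Z z z').eval (2 - c ^ 2 - c⁻¹ ^ 2)) := by
  intro l
  have hn : ∀ a, a ∉ Z → ∀ t ∈ Z, a - t ≠ 0 := fun a ha t ht h => ha (by
    rw [sub_eq_zero] at h; rwa [h])
  have hne : ∀ a, a ∉ Z → -a ∉ Z := fun a ha h => ha (by simpa using hsym _ h)
  have hp : ∀ a, a ∉ Z → ∀ t ∈ Z, a + t ≠ 0 := fun a ha t ht h => hn a ha (-t) (hsym t ht) (by simpa)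
  have hl : ∀ a, a ∉ Z → ∀ t ∈ Z, (l t).eval a =
      (Lagrange.nodal Z id).eval a * (Lagrange.nodalWeight Z id t * (a - t)⁻¹) := by
    intro a ha t ht
    exact Lagrange.eval_basis_not_at_node ht (fun h => ha (by rw [h]; exact ht))
  rw [hl c hcZ z hz, hl c hcZ z' hz', hl _ hcZ' z hz, hl _ hcZ' z' hz', hl _ (hne _ hcZ) z hz,
    hl _ (hne _ hcZ) z' hz', hl _ (hne _ hcZ') z hz, hl _ (hne _ hcZ') z' hz']
  have B1 := nodal_mul Z hsym c hc
  have B2 := nodal_mul Z hsym (-c) (neg_ne_zero.2 hc)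
  rw [inv_neg, neg_sq, neg_sq] at B2
  set ρ := 2 - c ^ 2 - c⁻¹ ^ 2 with hρ
  set y := c⁻¹ with hy
  have hcy : c * y = 1 := mul_inv_cancel₀ hc
  have A1 := alg1 c y z z' (hn _ hcZ _ hz) (hn _ hcZ' _ hz') (hp _ hcZ _ hz) (hp _ hcZ' _ hz')
  have A2 := alg1 y c z z' (hn _ hcZ' _ hz) (hn _ hcZ _ hz') (hp _ hcZ' _ hz) (hp _ hcZ _ hz')
  rw [mul_comm y c] at A2
  rw [hcy] at A1 A2
  have habs : ∀ t ∈ Z, t ≠ 0 → |t| ∈ Zp Z := by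
    intro t ht h0
    simp only [Zp, Finset.mem_filter, abs_pos]
    refine ⟨?_, h0⟩
    rcases abs_choice t with h | h <;> rw [h]
    · exact ht
    · exact hsym _ ht
  have hpos : ∀ t ∈ Zp Z, 0 < t := fun t ht => (Finset.mem_filter.1 ht).2
  have n1 : ∀ t ∈ Z, c ^ 2 - t ^ 2 ≠ 0 := fun t ht => by
    rw [sq_sub_sq]; exact mul_ne_zero (hp _ hcZ _ ht) (hn _ hcZ _ ht)
  have n2 : ∀ t ∈ Z, y ^ 2 - t ^ 2 ≠ 0 := fun t ht => by
    rw [sq_sub_sq]; exact mul_ne_zero (hp _ hcZ' _ ht) (hn _ hcZ' _ ht)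
  have S1 := PQ_split (Zp Z) hpos z (habs z hz)
  have E1 : (PQ (Zp Z)).eval ρ = ((c ^ 2 - z ^ 2) * (y ^ 2 - z ^ 2)) *
      (PQ ((Zp Z).filter fun t => t ^ 2 ≠ z ^ 2)).eval ρ := by
    rw [S1, eval_mul, eval_Q _ _ hc]
  set w := Lagrange.nodalWeight Z id z
  set w' := Lagrange.nodalWeight Z id z'
  set D := (PQ (Zp Z)).eval ρ
  have main : D * (2 * (1 + z * z') / ((c ^ 2 - z ^ 2) * (y ^ 2 - z' ^ 2))
      + 2 * (1 + z * z') / ((y ^ 2 - z ^ 2) * (c ^ 2 - z' ^ 2))) = 4 * (K Z z z').eval ρ := by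
    unfold K
    have a1 := n1 z hz
    have a2 := n1 z' hz'
    have a3 := n2 z hz
    have a4 := n2 z' hz'
    split_ifs with h
    · rw [E1, ← h, eval_mul, eval_C]
      field_simp
      ring
    · have S2 := PQ_split ((Zp Z).filter fun t => t ^ 2 ≠ z ^ 2)
        (fun t ht => hpos t (Finset.mem_filter.1 ht).1) z' (fun h0 => by
          rw [Finset.mem_filter]
          exact ⟨habs z' hz' h0, by rw [sq_abs]; exact fun h' => h h'.symm⟩)
      have E2 : (PQ ((Zp Z).filter fun t => t ^ 2 ≠ z ^ 2)).eval ρ =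
          ((c ^ 2 - z' ^ 2) * (y ^ 2 - z' ^ 2)) *
          (PQ (((Zp Z).filter fun t => t ^ 2 ≠ z ^ 2).filter fun t => t ^ 2 ≠ z' ^ 2)).eval ρ := by
        rw [S2, eval_mul, eval_Q _ _ hc]
      rw [E1, E2]
      simp only [eval_mul, eval_add, eval_C, eval_X]
      have : 2 * (1 - z ^ 2) * (1 - z' ^ 2) + (z ^ 2 + z' ^ 2) * ρ
        = (y ^ 2 - z ^ 2) * (c ^ 2 - z' ^ 2) + (c ^ 2 - z ^ 2) * (y ^ 2 - z' ^ 2) := by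
        have : c ^ 2 * y ^ 2 = 1 := by rw [← mul_pow, hcy, one_pow]
        rw [hρ]; linear_combination (-2) * this
      rw [this]
      field_simp
      ring
  rw [← A1, ← A2] at main
  linear_combination w * w' * main + w * w' * ((c - z)⁻¹ * (y - z')⁻¹ + (y - z)⁻¹ * (c - z')⁻¹) * B1
    + w * w' * ((-c - z)⁻¹ * (-y - z')⁻¹ + (-y - z)⁻¹ * (-c - z')⁻¹) * B2


noncomputable def fp (i h : ℕ) : ℝ[X] := X ^ i * (1 - X ^ 2) ^ h

lemma fp_eval (i h : ℕ) (z : ℝ) : (fp i h).eval z = z ^ i * (1 - z ^ 2) ^ h := by simp [fp]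

lemma fp_deg (i h : ℕ) : (fp i h).natDegree ≤ i + 2 * h := by
  unfold fp; compute_degree; omega

lemma infinite_rho (Z : Finset ℝ) :
    Set.Infinite ((fun c : ℝ => 2 - c ^ 2 - c⁻¹ ^ 2) ''
      {c | 1 < c ∧ c ∉ Z ∧ c⁻¹ ∉ Z}) := by
  apply Set.Infinite.image
  · rintro a ⟨ha, -⟩ b ⟨hb, -⟩ h
    simp only at h
    have ha0 : 0 < a := by linarith
    have hb0 : 0 < b := by linarith
    field_simp at h
    have h2 : (a ^ 2 - b ^ 2) * ((a * b) ^ 2 - 1) = 0 := by nlinarith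
    have h3 : 1 < a * b := by nlinarith
    have h4 : (a * b) ^ 2 - 1 ≠ 0 := by nlinarith
    have h5 : a ^ 2 = b ^ 2 := by
      have := (mul_eq_zero.1 h2).resolve_right h4
      linarith
    exact (pow_left_inj₀ ha0.le hb0.le two_ne_zero).1 h5
  · have : {c : ℝ | 1 < c ∧ c ∉ Z ∧ c⁻¹ ∉ Z}
        = Set.Ioi 1 \ ((Z ∪ Z.image (fun z => z⁻¹) : Finset ℝ) : Set ℝ) := by
      ext c
      simp only [Set.mem_ofPred_eq, Set.mem_sdiff, Set.mem_Ioi, Finset.coe_union, Set.mem_union,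
        Finset.mem_coe, Finset.mem_image, not_or]
      refine and_congr_right fun _ => and_congr_right fun _ => not_congr ?_
      constructor
      · intro h; exact ⟨_, h, inv_inv c⟩
      · rintro ⟨a, ha, rfl⟩; simpa using ha
    rw [this]
    exact (Set.Ioi_infinite 1).sdiff (Finset.finite_toSet _)

lemma core (Z : Finset ℝ) (hsym : ∀ z ∈ Z, -z ∈ Z) (i h : ℕ) (hdeg : i + 2 * h < Z.card) :
    (X : ℝ[X]) ^ h = ∑ z ∈ Z, ∑ z' ∈ Z, C ((fp i h).eval z * (fp i h).eval z' *
      (Lagrange.nodalWeight Z id z * Lagrange.nodalWeight Z id z')) * K Z z z' := by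
  refine Polynomial.eq_of_infinite_eval_eq _ _ ((infinite_rho Z).mono ?_)
  rintro _ ⟨c, ⟨hc1, hcZ, hcZ'⟩, rfl⟩
  have hc : c ≠ 0 := by linarith
  simp only [Set.mem_ofPred_eq]
  have hint : ∀ a, (fp i h).eval a = ∑ z ∈ Z, (fp i h).eval z * (Lagrange.basis Z id z).eval a := by
    intro a
    have := Lagrange.eq_interpolate (s := Z) (v := id) (f := fp i h) (Set.injOn_id _)
      (lt_of_le_of_lt (degree_le_natDegree) (by exact_mod_cast lt_of_le_of_lt (fp_deg i h) hdeg))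
    conv_lhs => rw [this]
    rw [Lagrange.interpolate_apply, eval_finsetSum]
    simp
  have hprod : ∀ a : ℝ, a ≠ 0 → (2 - a ^ 2 - a⁻¹ ^ 2) ^ h = ∑ z ∈ Z, ∑ z' ∈ Z,
      (fp i h).eval z * (fp i h).eval z' * ((Lagrange.basis Z id z).eval a
        * (Lagrange.basis Z id z').eval a⁻¹) := by
    intro a ha
    have e1 : (2 - a ^ 2 - a⁻¹ ^ 2) ^ h = (fp i h).eval a * (fp i h).eval a⁻¹ := by
      rw [fp_eval, fp_eval]
      have : (2 - a ^ 2 - a⁻¹ ^ 2) = (1 - a ^ 2) * (1 - a⁻¹ ^ 2) := by field_simp; ring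
      rw [this, mul_pow]
      have : a ^ i * a⁻¹ ^ i = 1 := by rw [← mul_pow, mul_inv_cancel₀ ha, one_pow]
      linear_combination (-(1 - a ^ 2) ^ h * (1 - a⁻¹ ^ 2) ^ h) * this
    rw [e1, hint a, hint a⁻¹, Finset.sum_mul_sum]
    exact Finset.sum_congr rfl fun z _ => Finset.sum_congr rfl fun z' _ => by ring
  have p1 := hprod c hc
  have p2 := hprod c⁻¹ (inv_ne_zero hc)
  have p3 := hprod (-c) (neg_ne_zero.2 hc)
  have p4 := hprod (-c⁻¹) (neg_ne_zero.2 (inv_ne_zero hc))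
  simp only [inv_neg, inv_inv, neg_sq] at p2 p3 p4
  have e2 : 2 - c⁻¹ ^ 2 - c ^ 2 = 2 - c ^ 2 - c⁻¹ ^ 2 := by ring
  rw [e2] at p2 p4
  have tot : 4 * (2 - c ^ 2 - c⁻¹ ^ 2) ^ h = ∑ z ∈ Z, ∑ z' ∈ Z,
      (fp i h).eval z * (fp i h).eval z' * (4 * (Lagrange.nodalWeight Z id z *
        Lagrange.nodalWeight Z id z' * (K Z z z').eval (2 - c ^ 2 - c⁻¹ ^ 2))) := by
    have : 4 * (2 - c ^ 2 - c⁻¹ ^ 2) ^ h = (2 - c ^ 2 - c⁻¹ ^ 2) ^ h + (2 - c ^ 2 - c⁻¹ ^ 2) ^ h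
      + (2 - c ^ 2 - c⁻¹ ^ 2) ^ h + (2 - c ^ 2 - c⁻¹ ^ 2) ^ h := by ring
    rw [this]
    nth_rw 1 [p1]
    nth_rw 1 [p2]
    nth_rw 1 [p3]
    nth_rw 1 [p4]
    simp only [← Finset.sum_add_distrib]
    refine Finset.sum_congr rfl fun z hz => Finset.sum_congr rfl fun z' hz' => ?_
    rw [← key Z hsym c hc hcZ hcZ' z z' hz hz']
    ring
  simp only [eval_pow, eval_X, eval_finsetSum, eval_mul, eval_C]
  have : (2 - c ^ 2 - c⁻¹ ^ 2) ^ h = (1/4) * (4 * (2 - c ^ 2 - c⁻¹ ^ 2) ^ h) := by ring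
  rw [this, tot]
  simp only [Finset.mul_sum]
  refine Finset.sum_congr rfl fun z hz => Finset.sum_congr rfl fun z' hz' => ?_
  ring

/-- inner symbol: the terms with parity of `k` -/
noncomputable def Phi (n k : ℕ) (b : ℕ → ℕ → ℝ) (z z' : ℝ) : ℝ :=
  ∑ j ∈ Finset.range (n + 1), ∑ l ∈ Finset.range (j + 1),
    if l % 2 = k % 2 then b j l * ((fp (j - l) (l / 2)).eval z * (fp (j - l) (l / 2)).eval z')
    else 0

noncomputable def ec (n k : ℕ) (b : ℕ → ℕ → ℝ) : ℝ :=
  ∑ j ∈ Finset.range (n + 1), ∑ l ∈ Finset.range (j + 1), if l = k then b j l else 0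

lemma core2 (Z : Finset ℝ) (hsym : ∀ z ∈ Z, -z ∈ Z) (n k : ℕ)
    (hcard : n < Z.card + k % 2) (b : ℕ → ℕ → ℝ) :
    ec n k b = ∑ z ∈ Z, ∑ z' ∈ Z, Phi n k b z z' *
      (Lagrange.nodalWeight Z id z * Lagrange.nodalWeight Z id z' * (K Z z z').coeff (k / 2)) := by
  have h1 : ∀ j ∈ Finset.range (n + 1), ∀ l ∈ Finset.range (j + 1), l % 2 = k % 2 →
      (if l = k then (1:ℝ) else 0) = ∑ z ∈ Z, ∑ z' ∈ Z,
        ((fp (j - l) (l / 2)).eval z * (fp (j - l) (l / 2)).eval z') *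
      (Lagrange.nodalWeight Z id z * Lagrange.nodalWeight Z id z' *
        (K Z z z').coeff (k / 2)) := by
    intro j hj l hl hlk
    simp only [Finset.mem_range] at hj hl
    have := congrArg (fun p : ℝ[X] => p.coeff (k / 2)) (core Z hsym (j - l) (l / 2) (by omega))
    simp only [coeff_X_pow, finsetSum_coeff, coeff_C_mul] at this
    have e : (k / 2 = l / 2) ↔ l = k := by omega
    simp only [e] at this
    rw [this]
    refine Finset.sum_congr rfl fun z hz => Finset.sum_congr rfl fun z' hz' => ?_
    ring
  have h2 : ec n k b = ∑ j ∈ Finset.range (n + 1), ∑ l ∈ Finset.range (j + 1), ∑ z ∈ Z, ∑ z' ∈ Z,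
      (if l % 2 = k % 2 then
        b j l * ((fp (j - l) (l / 2)).eval z * (fp (j - l) (l / 2)).eval z') else 0) *
      (Lagrange.nodalWeight Z id z * Lagrange.nodalWeight Z id z' *
        (K Z z z').coeff (k / 2)) := by
    unfold ec
    refine Finset.sum_congr rfl fun j hj => Finset.sum_congr rfl fun l hl => ?_
    by_cases hlk : l % 2 = k % 2
    · simp only [hlk, if_true]
      have := h1 j hj l hl hlk
      calc (if l = k then b j l else 0) = b j l * (if l = k then 1 else 0) := by simp
        _ = _ := by
          rw [this]
          simp only [Finset.mul_sum]
          refine Finset.sum_congr rfl fun z hz => Finset.sum_congr rfl fun z' hz' => ?_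
          ring
    · have : l ≠ k := fun h => hlk (by rw [h])
      simp [hlk, this]
  rw [h2]
  unfold Phi
  simp only [Finset.sum_mul]
  have hs : ∀ j, ∀ g : ℕ → ℝ → ℝ → ℝ, ∑ l ∈ Finset.range (j + 1), ∑ z ∈ Z, ∑ z' ∈ Z, g l z z'
      = ∑ z ∈ Z, ∑ z' ∈ Z, ∑ l ∈ Finset.range (j + 1), g l z z' := by
    intro j g
    rw [Finset.sum_comm]
    exact Finset.sum_congr rfl fun z _ => Finset.sum_comm
  simp only [hs]

/-- comparison -/
lemma compare (Z : Finset ℝ) (hsym : ∀ z ∈ Z, -z ∈ Z) (hb : ∀ z ∈ Z, |z| ≤ 1) (n k : ℕ)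
    (hcard : n < Z.card + k % 2) (b b' : ℕ → ℕ → ℝ) (σ : ℝ → ℝ)
    (hσ : ∀ z ∈ Z, 0 ≤ σ z * Lagrange.nodalWeight Z id z)
    (h1 : ∀ z ∈ Z, ∀ z' ∈ Z, |Phi n k b z z'| ≤ |σ z * σ z'|)
    (h2 : ∀ z ∈ Z, ∀ z' ∈ Z, Phi n k b' z z' = σ z * σ z') :
    |ec n k b| ≤ ec n k b' := by
  rw [core2 Z hsym n k hcard b, core2 Z hsym n k hcard b']
  refine (Finset.abs_sum_le_sum_abs _ _).trans (Finset.sum_le_sum fun z hz => ?_)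
  refine (Finset.abs_sum_le_sum_abs _ _).trans (Finset.sum_le_sum fun z' hz' => ?_)
  have hk := NN_K Z z z' (hb z hz) (hb z' hz') (k / 2)
  rw [h2 z hz z' hz', abs_mul]
  calc _ ≤ |σ z * σ z'| * |Lagrange.nodalWeight Z id z * Lagrange.nodalWeight Z id z' *
        (K Z z z').coeff (k / 2)| := 
      mul_le_mul_of_nonneg_right (h1 z hz z' hz') (abs_nonneg _)
    _ = |(σ z * Lagrange.nodalWeight Z id z) * (σ z' * Lagrange.nodalWeight Z id z') *
        (K Z z z').coeff (k / 2)| := by rw [← abs_mul]; ring_nf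
    _ = (σ z * Lagrange.nodalWeight Z id z) * (σ z' * Lagrange.nodalWeight Z id z') *
        (K Z z z').coeff (k / 2) :=
      abs_of_nonneg (mul_nonneg (mul_nonneg (hσ z hz) (hσ z' hz')) hk)
    _ = _ := by ring

open Real

noncomputable def FF (n : ℕ) (b : ℕ → ℕ → ℝ) (t u : ℝ) : ℝ :=
  ∑ j ∈ Finset.range (n + 1), ∑ l ∈ Finset.range (j + 1), b j l * t ^ (j - l) * u ^ l

lemma Phi_even (n k : ℕ) (hk : k % 2 = 0) (b : ℕ → ℕ → ℝ) (z z' u : ℝ)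
    (hu : u ^ 2 = (1 - z ^ 2) * (1 - z' ^ 2)) :
    2 * Phi n k b z z' = FF n b (z * z') u + FF n b (z * z') (-u) := by
  unfold Phi FF
  rw [Finset.mul_sum, ← Finset.sum_add_distrib]
  refine Finset.sum_congr rfl fun j _ => ?_
  rw [Finset.mul_sum, ← Finset.sum_add_distrib]
  refine Finset.sum_congr rfl fun l _ => ?_
  rw [hk]
  obtain ⟨m, h | h⟩ := Nat.even_or_odd' l
  · have h1 : l % 2 = 0 := by omega
    have h2 : l / 2 = m := by omega
    rw [if_pos h1, fp_eval, fp_eval, h2]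
    generalize j - l = i
    subst h
    rw [pow_mul, pow_mul, neg_sq, hu, mul_pow, mul_pow]
    ring
  · have h1 : ¬ l % 2 = 0 := by omega
    rw [if_neg h1]
    have : (-u) ^ l = - u ^ l := Odd.neg_pow ⟨_, h⟩ u
    rw [this]; ring

lemma Phi_odd (n k : ℕ) (hk : k % 2 = 1) (b : ℕ → ℕ → ℝ) (z z' u : ℝ)
    (hu : u ^ 2 = (1 - z ^ 2) * (1 - z' ^ 2)) :
    2 * u * Phi n k b z z' = FF n b (z * z') u - FF n b (z * z') (-u) := by
  unfold Phi FF
  rw [Finset.mul_sum, ← Finset.sum_sub_distrib]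
  refine Finset.sum_congr rfl fun j _ => ?_
  rw [Finset.mul_sum, ← Finset.sum_sub_distrib]
  refine Finset.sum_congr rfl fun l _ => ?_
  rw [hk]
  obtain ⟨m, h | h⟩ := Nat.even_or_odd' l
  · have h1 : ¬ l % 2 = 1 := by omega
    rw [if_neg h1]
    have : (-u) ^ l = u ^ l := Even.neg_pow ⟨m, by omega⟩ u
    rw [this]; ring
  · have h1 : l % 2 = 1 := by omega
    have h2 : l / 2 = m := by omega
    rw [if_pos h1, fp_eval, fp_eval, h2]
    have h3 : (-u) ^ l = - u ^ l := Odd.neg_pow ⟨_, h⟩ u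
    rw [h3]
    generalize j - l = i
    subst h
    rw [pow_succ u (2 * m), pow_mul u 2 m, hu, mul_pow, mul_pow]
    ring

noncomputable def bT (n j l : ℕ) : ℝ := (Chebyshev.T ℝ (n : ℤ)).coeff j * (j.choose l : ℝ)

lemma FF_bT (n : ℕ) (t u : ℝ) : FF n (bT n) t u = (Chebyshev.T ℝ (n : ℤ)).eval (t + u) := by
  have hd : (Chebyshev.T ℝ (n : ℤ)).natDegree < n + 1 := by
    rw [Chebyshev.natDegree_T]; simp
  rw [eval_eq_sum_range' hd, FF]
  refine Finset.sum_congr rfl fun j _ => ?_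
  rw [add_comm t u, add_pow, Finset.mul_sum]
  refine Finset.sum_congr rfl fun l _ => ?_
  rw [bT]; ring

lemma ec_bT (n k : ℕ) : (k.factorial : ℝ) * ec n k (bT n)
    = (derivative^[k] (Chebyshev.T ℝ (n : ℤ))).eval 1 := by
  have hd : (Chebyshev.T ℝ (n : ℤ)).natDegree < n + 1 := by
    rw [Chebyshev.natDegree_T]; simp
  have h' : derivative^[k] (Chebyshev.T ℝ (n : ℤ)) = k.factorial • hasseDeriv k (Chebyshev.T ℝ (n : ℤ)) := by
    rw [← factorial_smul_hasseDeriv]; rfl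
  rw [h', eval_smul, nsmul_eq_mul, hasseDeriv_apply, sum_over_range' _ (by simp) (n+1) hd,
    eval_finsetSum]
  congr 1
  unfold ec
  refine Finset.sum_congr rfl fun j _ => ?_
  rw [Finset.sum_ite_eq']
  simp only [eval_monomial, one_pow, mul_one, Finset.mem_range, bT]
  split_ifs with hh
  · ring
  · rw [Nat.choose_eq_zero_of_lt (by omega)]; simp

lemma weight_sign (N : ℕ) (v : ℕ → ℝ) (hv : ∀ i j, i < j → j < N → v j < v i) (i : ℕ) (hi : i < N) :
    0 ≤ (-1) ^ i * Lagrange.nodalWeight ((Finset.range N).image v) id (v i) := by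
  have hinj : ∀ a ∈ Finset.range N, ∀ b ∈ Finset.range N, v a = v b → a = b := by
    intro a ha b hb hab
    simp only [Finset.mem_range] at ha hb
    rcases lt_trichotomy a b with h | h | h
    · exact absurd hab (hv a b h hb).ne'
    · exact h
    · exact absurd hab (hv b a h ha).ne
  have he : ((Finset.range N).image v).erase (v i) = ((Finset.range N).erase i).image v := by
    ext z
    simp only [Finset.mem_erase, Finset.mem_image]
    constructor
    · rintro ⟨h1, a, ha, rfl⟩
      exact ⟨a, ⟨fun h => h1 (by rw [h]), ha⟩, rfl⟩
    · rintro ⟨a, ⟨h1, ha⟩, rfl⟩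
      exact ⟨fun h => h1 (hinj a ha i (Finset.mem_range.2 hi) h), a, ha, rfl⟩
  rw [Lagrange.nodalWeight, he, Finset.prod_image (fun a ha b hb h =>
    hinj a (Finset.mem_of_mem_erase ha) b (Finset.mem_of_mem_erase hb) h)]
  have union : (Finset.range N).erase i = (Finset.range i) ∪ Finset.Ioo i N := by grind
  have disjoint : Disjoint (Finset.range i) (Finset.Ioo i N) := by grind [Finset.disjoint_iff_ne]
  rw [union, Finset.prod_union disjoint, ← mul_assoc]
  have h₁ : 0 ≤ ∏ j ∈ Finset.range i, ((-1) * (id (v i) - id (v j))⁻¹) := by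
    refine Finset.prod_nonneg fun j hj => ?_
    have := hv j i (Finset.mem_range.1 hj) hi
    have : (v i - v j)⁻¹ < 0 := inv_lt_zero.2 (by linarith)
    simp only [id]; linarith
  rw [Finset.prod_mul_distrib, Finset.prod_const, Finset.card_range] at h₁
  refine mul_nonneg h₁ (Finset.prod_nonneg fun j hj => ?_)
  have := hv i j (Finset.mem_Ioo.1 hj).1 (Finset.mem_Ioo.1 hj).2
  simp only [id]
  exact inv_nonneg.2 (by linarith)

lemma trig_bound (a a' : ℝ) : |cos a * cos a'| + |sin a * sin a'| ≤ 1 := by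
  have h1 := sin_sq_add_cos_sq a
  have h2 := sin_sq_add_cos_sq a'
  rw [abs_mul, abs_mul]
  nlinarith [sq_nonneg (|cos a| - |cos a'|), sq_nonneg (|sin a| - |sin a'|), sq_abs (cos a),
    sq_abs (cos a'), sq_abs (sin a), sq_abs (sin a')]

lemma main_even (n k : ℕ) (hn : 0 < n) (hk : k % 2 = 0) (b : ℕ → ℕ → ℝ)
    (hF : ∀ t u, |t| + |u| ≤ 1 → |FF n b t u| ≤ 1) : |ec n k b| ≤ ec n k (bT n) := by
  set θ : ℕ → ℝ := fun i => i * π / n with hθ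
  set v : ℕ → ℝ := fun i => cos (θ i) with hvdef
  have hn' : (0:ℝ) < n := by exact_mod_cast hn
  have hv : ∀ i j, i < j → j < n + 1 → v j < v i := by
    intro i j hij hj
    have hij' : (i:ℝ) < j := by exact_mod_cast hij
    have hj' : (j:ℝ) ≤ n := by exact_mod_cast Nat.lt_succ_iff.1 hj
    refine cos_lt_cos_of_nonneg_of_le_pi (by positivity) ?_ ?_
    · rw [hθ, div_le_iff₀ hn', mul_comm π]; gcongr
    · simp only [hθ]; gcongr
  have hs : ∀ i, sin (n * θ i) = 0 := fun i => by
    have : n * θ i = i * π := by simp only [hθ]; field_simp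
    rw [this, sin_nat_mul_pi]
  have hc : ∀ i, cos (n * θ i) = (-1) ^ i := fun i => by
    have : n * θ i = i * π := by simp only [hθ]; field_simp
    rw [this, cos_nat_mul_pi]
  have hT : ∀ i, (Chebyshev.T ℝ (n : ℤ)).eval (v i) = (-1) ^ i := fun i => by
    rw [← hc, hvdef, Chebyshev.T_real_cos]; simp
  have hinj : Set.InjOn v (Finset.range (n + 1)) := by
    intro a ha b hb hab
    simp only [Finset.coe_range, Set.mem_Iio] at ha hb
    rcases lt_trichotomy a b with h | h | h
    · exact absurd hab (hv a b h hb).ne'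
    · exact h
    · exact absurd hab (hv b a h ha).ne
  have hu : ∀ i j, (sin (θ i) * sin (θ j)) ^ 2 = (1 - v i ^ 2) * (1 - v j ^ 2) := by
    intro i j
    rw [mul_pow, sin_sq, sin_sq]
  refine compare ((Finset.range (n + 1)).image v) ?_ ?_ n k ?_ b (bT n)
    (fun z => (Chebyshev.T ℝ (n : ℤ)).eval z) ?_ ?_ ?_
  · simp only [Finset.mem_image, Finset.mem_range]
    rintro _ ⟨i, hi, rfl⟩
    refine ⟨n - i, by omega, ?_⟩
    have : θ (n - i) = π - θ i := by
      simp only [hθ]; rw [Nat.cast_sub (by omega)]; field_simp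
    simp only [hvdef, this, cos_pi_sub]
  · simp only [Finset.mem_image, Finset.mem_range]
    rintro _ ⟨i, hi, rfl⟩
    exact abs_cos_le_one _
  · rw [Finset.card_image_of_injOn hinj, Finset.card_range]; omega
  · simp only [Finset.mem_image, Finset.mem_range]
    rintro _ ⟨i, hi, rfl⟩
    rw [hT]; exact weight_sign (n + 1) v hv i hi
  · simp only [Finset.mem_image, Finset.mem_range]
    rintro _ ⟨i, hi, rfl⟩ _ ⟨j, hj, rfl⟩
    rw [hT, hT]
    simp only [abs_mul, abs_pow, abs_neg, abs_one, one_pow, mul_one]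
    have h1 := Phi_even n k hk b (v i) (v j) _ (hu i j)
    have h2 := hF (v i * v j) (sin (θ i) * sin (θ j)) (trig_bound _ _)
    have h3 := hF (v i * v j) (-(sin (θ i) * sin (θ j))) (by rw [abs_neg]; exact trig_bound _ _)
    rw [abs_le] at h2 h3 ⊢
    constructor <;> linarith
  · simp only [Finset.mem_image, Finset.mem_range]
    rintro _ ⟨i, hi, rfl⟩ _ ⟨j, hj, rfl⟩
    have h1 := Phi_even n k hk (bT n) (v i) (v j) _ (hu i j)
    rw [FF_bT, FF_bT] at h1
    have e1 : v i * v j + sin (θ i) * sin (θ j) = cos (θ i - θ j) := by rw [cos_sub]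
    have e2 : v i * v j + -(sin (θ i) * sin (θ j)) = cos (θ i + θ j) := by rw [cos_add]; ring
    rw [e1, e2, Chebyshev.T_real_cos, Chebyshev.T_real_cos] at h1
    push_cast at h1
    rw [mul_sub, mul_add, cos_sub, cos_add] at h1
    rw [hT, hT, ← hc, ← hc]
    linarith

lemma main_odd (n k : ℕ) (hn : 0 < n) (hk : k % 2 = 1) (b : ℕ → ℕ → ℝ)
    (hF : ∀ t u, |t| + |u| ≤ 1 → |FF n b t u| ≤ 1) : |ec n k b| ≤ ec n k (bT n) := by
  set θ : ℕ → ℝ := fun i => (2 * i + 1) * π / (2 * n) with hθ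
  set v : ℕ → ℝ := fun i => cos (θ i) with hvdef
  have hn' : (0:ℝ) < n := by exact_mod_cast hn
  have hpos : ∀ i, 0 < θ i := fun i => by simp only [hθ]; positivity
  have hlt : ∀ i, i < n → θ i < π := by
    intro i hi
    have hi' : (i:ℝ) + 1 ≤ n := by exact_mod_cast hi
    simp only [hθ]
    rw [div_lt_iff₀ (by positivity), mul_comm π]
    apply mul_lt_mul_of_pos_right _ pi_pos
    linarith
  have hv : ∀ i j, i < j → j < n → v j < v i := by
    intro i j hij hj
    have hij' : (i:ℝ) < j := by exact_mod_cast hij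
    refine cos_lt_cos_of_nonneg_of_le_pi (hpos i).le (hlt j hj).le ?_
    simp only [hθ]; gcongr
  have hnθ : ∀ i : ℕ, n * θ i = i * π + π / 2 := fun i => by simp only [hθ]; field_simp
  have hs : ∀ i, sin (n * θ i) = (-1) ^ i := fun i => by
    rw [hnθ, sin_add_pi_div_two, cos_nat_mul_pi]
  have hU : ∀ i, (Chebyshev.U ℝ ((n : ℤ) - 1)).eval (v i) * sin (θ i) = (-1) ^ i := fun i => by
    rw [← hs, hvdef, Chebyshev.U_real_cos]; simp
  have hsp : ∀ i, i < n → 0 < sin (θ i) := fun i hi => sin_pos_of_pos_of_lt_pi (hpos i) (hlt i hi)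
  have hinj : Set.InjOn v (Finset.range n) := by
    intro a ha b hb hab
    simp only [Finset.coe_range, Set.mem_Iio] at ha hb
    rcases lt_trichotomy a b with h | h | h
    · exact absurd hab (hv a b h hb).ne'
    · exact h
    · exact absurd hab (hv b a h ha).ne
  have hu : ∀ i j, (sin (θ i) * sin (θ j)) ^ 2 = (1 - v i ^ 2) * (1 - v j ^ 2) := by
    intro i j
    rw [mul_pow, sin_sq, sin_sq]
  refine compare ((Finset.range n).image v) ?_ ?_ n k ?_ b (bT n)
    (fun z => (Chebyshev.U ℝ ((n : ℤ) - 1)).eval z) ?_ ?_ ?_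
  · simp only [Finset.mem_image, Finset.mem_range]
    rintro _ ⟨i, hi, rfl⟩
    refine ⟨n - 1 - i, by omega, ?_⟩
    have : θ (n - 1 - i) = π - θ i := by
      simp only [hθ]; rw [Nat.cast_sub (by omega), Nat.cast_sub (by omega)]
      field_simp; push_cast; ring
    simp only [hvdef, this, cos_pi_sub]
  · simp only [Finset.mem_image, Finset.mem_range]
    rintro _ ⟨i, hi, rfl⟩
    exact abs_cos_le_one _
  · rw [Finset.card_image_of_injOn hinj, Finset.card_range]; omega
  · simp only [Finset.mem_image, Finset.mem_range]
    rintro _ ⟨i, hi, rfl⟩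
    have h1 := weight_sign n v hv i hi
    rw [← hU] at h1
    have h2 := hsp i hi
    rw [mul_right_comm] at h1
    exact nonneg_of_mul_nonneg_left h1 h2
  · simp only [Finset.mem_image, Finset.mem_range]
    rintro _ ⟨i, hi, rfl⟩ _ ⟨j, hj, rfl⟩
    have h1 := Phi_odd n k hk b (v i) (v j) _ (hu i j)
    have h2 := hF (v i * v j) (sin (θ i) * sin (θ j)) (trig_bound _ _)
    have h3 := hF (v i * v j) (-(sin (θ i) * sin (θ j))) (by rw [abs_neg]; exact trig_bound _ _)
    have hup : 0 < sin (θ i) * sin (θ j) := mul_pos (hsp i hi) (hsp j hj)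
    have h4 : |Phi n k b (v i) (v j)| * (sin (θ i) * sin (θ j)) ≤ 1 := by
      have h6 : |Phi n k b (v i) (v j)| * (sin (θ i) * sin (θ j))
          = |Phi n k b (v i) (v j) * (sin (θ i) * sin (θ j))| := by
        rw [abs_mul (Phi n k b (v i) (v j)), abs_of_pos hup]
      rw [h6]
      rw [abs_le] at h2 h3 ⊢
      constructor <;> linarith
    have h5 : |(Chebyshev.U ℝ ((n : ℤ) - 1)).eval (v i) * (Chebyshev.U ℝ ((n : ℤ) - 1)).eval (v j)|
        * (sin (θ i) * sin (θ j)) = 1 := by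
      have h6 : ∀ A : ℝ, |A| * (sin (θ i) * sin (θ j)) = |A * (sin (θ i) * sin (θ j))| := by
        intro A
        rw [abs_mul A, abs_of_pos hup]
      rw [h6, mul_mul_mul_comm, hU, hU]
      simp
    exact le_of_mul_le_mul_right (h4.trans h5.ge) hup
  · simp only [Finset.mem_image, Finset.mem_range]
    rintro _ ⟨i, hi, rfl⟩ _ ⟨j, hj, rfl⟩
    have hup : 0 < sin (θ i) * sin (θ j) := mul_pos (hsp i hi) (hsp j hj)
    have h1 := Phi_odd n k hk (bT n) (v i) (v j) _ (hu i j)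
    rw [FF_bT, FF_bT] at h1
    have e1 : v i * v j + sin (θ i) * sin (θ j) = cos (θ i - θ j) := by rw [cos_sub]
    have e2 : v i * v j + -(sin (θ i) * sin (θ j)) = cos (θ i + θ j) := by rw [cos_add]; ring
    rw [e1, e2, Chebyshev.T_real_cos, Chebyshev.T_real_cos] at h1
    push_cast at h1
    rw [mul_sub, mul_add, cos_sub, cos_add, hs, hs, ← hU, ← hU] at h1
    refine mul_right_cancel₀ hup.ne' ?_
    linarith


lemma ml_expand {X : Type*} [NormedAddCommGroup X] [NormedSpace ℝ X] (j : ℕ)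
    (L : ContinuousMultilinearMap ℝ (fun _ : Fin j => X) ℝ) (x y : X) :
    ∃ b : ℕ → ℝ, ∀ t u : ℝ, L (fun _ => t • x + u • y)
      = ∑ l ∈ Finset.range (j + 1), b l * t ^ (j - l) * u ^ l := by
  refine ⟨fun l => ∑ s ∈ (Finset.univ : Finset (Finset (Fin j))) with s.card = l,
    L (s.piecewise (fun _ => y) (fun _ => x)), fun t u => ?_⟩
  have h1 : L (fun _ => t • x + u • y)
      = ∑ s : Finset (Fin j), L (s.piecewise (fun _ => u • y) (fun _ => t • x)) := by
    have := L.toMultilinearMap.map_add_univ (fun _ => u • y) (fun _ => t • x)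
    refine Eq.trans ?_ this
    change L _ = L _
    congr 1
    funext i
    simp [add_comm]
  have h2 : ∀ s : Finset (Fin j), L (s.piecewise (fun _ => u • y) (fun _ => t • x))
      = L (s.piecewise (fun _ => y) (fun _ => x)) * t ^ (j - s.card) * u ^ s.card := by
    intro s
    have h3 : (s.piecewise (fun _ => u • y) (fun _ => t • x) : Fin j → X)
        = fun i => (s.piecewise (fun _ => u) (fun _ => t) : Fin j → ℝ) i •
          (s.piecewise (fun _ => y) (fun _ => x) : Fin j → X) i := by
      funext i
      by_cases hi : i ∈ s <;> simp [hi]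
    rw [h3, L.map_smul_univ, Finset.prod_piecewise]
    simp only [Finset.prod_const, Finset.univ_inter, smul_eq_mul]
    rw [Finset.card_univ_sdiff, Fintype.card_fin]
    ring
  rw [h1, ← Finset.sum_fiberwise_of_maps_to (s := Finset.univ) (t := Finset.range (j + 1))
    (g := fun s : Finset (Fin j) => s.card)]
  · refine Finset.sum_congr rfl fun l _ => ?_
    rw [Finset.sum_mul, Finset.sum_mul]
    refine Finset.sum_congr rfl fun s hs => ?_
    rw [h2, (Finset.mem_filter.1 hs).2]
  · intro s _
    have := s.card_le_univ
    simp only [Fintype.card_fin] at this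
    simp only [Finset.mem_range]; omega

lemma iterD (p : ℝ[X]) (k : ℕ) : iteratedDeriv k (fun r => p.eval r) = fun r => (derivative^[k] p).eval r := by
  induction k with
  | zero => simp
  | succ k ih =>
    rw [iteratedDeriv_succ, ih, Function.iterate_succ_apply']
    funext r
    exact Polynomial.deriv _

lemma iterD_FF (n k : ℕ) (b : ℕ → ℕ → ℝ) :
    iteratedDeriv k (fun r => FF n b 1 r) 0 = (k.factorial : ℝ) * ec n k b := by
  have h : (fun r => FF n b 1 r) = fun r => (∑ j ∈ Finset.range (n + 1),
      ∑ l ∈ Finset.range (j + 1), monomial l (b j l) : ℝ[X]).eval r := by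
    funext r
    simp [FF, eval_finsetSum]
  rw [h, iterD]
  simp only
  rw [← coeff_zero_eq_eval_zero, coeff_iterate_derivative, zero_add, Nat.descFactorial_self,
    nsmul_eq_mul, finsetSum_coeff]
  congr 1
  unfold ec
  refine Finset.sum_congr rfl fun j _ => ?_
  rw [finsetSum_coeff]
  simp only [coeff_monomial]

lemma iterF {X : Type*} [NormedAddCommGroup X] [NormedSpace ℝ X] (k : ℕ) (P : X → ℝ)
    (hP : ContDiff ℝ k P) (x y : X) :
    iteratedFDeriv ℝ k P x (fun _ => y) = iteratedDeriv k (fun r : ℝ => P (x + r • y)) 0 := by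
  have h1 : (fun r : ℝ => P (x + r • y))
      = (fun z => P (x + z)) ∘ (ContinuousLinearMap.toSpanSingleton ℝ y) := by
    funext r; simp
  have h2 : ContDiff ℝ k (fun z => P (x + z)) := hP.comp (contDiff_const.add contDiff_id)
  rw [iteratedDeriv_eq_iteratedFDeriv, h1,
    ContinuousLinearMap.iteratedFDeriv_comp_right _ h2 _ le_rfl, iteratedFDeriv_comp_add_left]
  simp

lemma final {X : Type*} [NormedAddCommGroup X] [NormedSpace ℝ X]
    (n k : ℕ) (hn : 0 < n) (P : X → ℝ)
    (hP : ∃ L : (j : Fin (n + 1)) → ContinuousMultilinearMap ℝ (fun _ : Fin (j : ℕ) => X) ℝ,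
      ∀ x, P x = ∑ j, L j (fun _ => x))
    (hPnorm : ∀ x : X, ‖x‖ ≤ 1 → |P x| ≤ 1)
    (x : X) (hx : ‖x‖ ≤ 1) (y : X) (hy : ‖y‖ ≤ 1) :
    ‖iteratedFDeriv ℝ k P x (fun _ => y)‖ ≤ (derivative^[k] (Chebyshev.T ℝ (n : ℤ))).eval 1 := by
  obtain ⟨L, hL⟩ := hP
  have hcd : ContDiff ℝ k P := by
    rw [show P = fun x => ∑ j, L j (fun _ => x) from funext hL]
    refine ContDiff.sum fun j _ => (L j).contDiff.comp ?_
    exact contDiff_pi.2 fun _ => contDiff_id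
  choose b hb using fun j : Fin (n + 1) => ml_expand (j : ℕ) (L j) x y
  set b' : ℕ → ℕ → ℝ := fun j => if h : j < n + 1 then b ⟨j, h⟩ else 0 with hb'
  have hFF : ∀ t u : ℝ, P (t • x + u • y) = FF n b' t u := by
    intro t u
    rw [hL, FF, ← Fin.sum_univ_eq_sum_range
      (fun j => ∑ l ∈ Finset.range (j + 1), b' j l * t ^ (j - l) * u ^ l)]
    refine Finset.sum_congr rfl fun j _ => ?_
    rw [hb]
    refine Finset.sum_congr rfl fun l _ => ?_
    have hj : b' (j : ℕ) = b j := by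
      simp only [hb']
      rw [dif_pos j.2]
    rw [hj]
  have hF : ∀ t u, |t| + |u| ≤ 1 → |FF n b' t u| ≤ 1 := by
    intro t u htu
    rw [← hFF]
    apply hPnorm
    calc ‖t • x + u • y‖ ≤ ‖t • x‖ + ‖u • y‖ := norm_add_le _ _
      _ = |t| * ‖x‖ + |u| * ‖y‖ := by rw [norm_smul, norm_smul, Real.norm_eq_abs, Real.norm_eq_abs]
      _ ≤ |t| * 1 + |u| * 1 := by gcongr
      _ ≤ 1 := by linarith
  have hm : |ec n k b'| ≤ ec n k (bT n) := by
    rcases Nat.mod_two_eq_zero_or_one k with h | h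
    · exact main_even n k hn h b' hF
    · exact main_odd n k hn h b' hF
  have h1 : (fun r : ℝ => P (x + r • y)) = fun r => FF n b' 1 r := by
    funext r
    rw [← hFF, one_smul]
  rw [iterF k P hcd, h1, iterD_FF, ← ec_bT, Real.norm_eq_abs, abs_mul, Nat.abs_cast]
  gcongr

end MB

/-- V. A. Markov's theorem on a real Banach space: if `P` is a continuous polynomial of
degree at most `n` with `‖P‖ ≤ 1` and `1 ≤ k ≤ n`, then for every `‖x‖ ≤ 1`,
`‖D̂^k P(x)‖ ≤ T_n^{(k)}(1) = n²(n²-1²)⋯(n²-(k-1)²)/(1·3⋯(2k-1))`. -/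
theorem markov_banach
    {X : Type*} [NormedAddCommGroup X] [NormedSpace ℝ X] [CompleteSpace X]
    (n k : ℕ) (hk1 : 1 ≤ k) (hkn : k ≤ n) (P : X → ℝ)
    (hP : ∃ L : (j : Fin (n + 1)) → ContinuousMultilinearMap ℝ (fun _ : Fin (j : ℕ) => X) ℝ,
      ∀ x, P x = ∑ j, L j (fun _ => x))
    (hPnorm : ∀ x : X, ‖x‖ ≤ 1 → |P x| ≤ 1)
    (x : X) (hx : ‖x‖ ≤ 1) :
    sSup ((fun y => ‖iteratedFDeriv ℝ k P x (fun _ => y)‖) '' closedBall (0 : X) 1)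
        ≤ chebTDerivOne n k ∧
      chebTDerivOne n k
        = (∏ i ∈ Finset.range k, ((n : ℝ) ^ 2 - (i : ℝ) ^ 2)) /
            (∏ i ∈ Finset.range k, (2 * (i : ℝ) + 1)) := by
  refine ⟨?_, ?_⟩
  · refine csSup_le ((Set.nonempty_of_mem (mem_closedBall_self zero_le_one)).image _) ?_
    rintro _ ⟨y, hy, rfl⟩
    exact MB.final n k (by omega) P hP hPnorm x hx y (mem_closedBall_zero_iff.1 hy)
  · unfold chebTDerivOne
    rw [Polynomial.Chebyshev.iterate_derivative_T_eval_one_eq_div]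
    push_cast
    rfl
end

section
/- Let X be a real Banach space, let P be a continuous polynomial of degree at most n on X with ‖P‖ ≤ 1, and let x ∈ X with ‖x‖ < 1. Then the first Fréchet derivative of P satisfies ‖DP(x)‖ ≤ min{ n·√(1−P(x)²)/√(1−‖x‖²), n² }. -/
open Metric


open Complex in
/-- exponential -/
noncomputable def bsE (k : ℤ) : ℝ → ℂ := fun t => Complex.exp (k * t * Complex.I)

noncomputable def bsTP (n : ℕ) : Submodule ℂ (ℝ → ℂ) :=
  Submodule.span ℂ (bsE '' {k : ℤ | |k| ≤ n})

lemma bsE_mem {n : ℕ} {k : ℤ} (h : |k| ≤ n) : bsE k ∈ bsTP n :=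
  Submodule.subset_span ⟨k, h, rfl⟩

lemma bsTP_mono {a b : ℕ} (h : a ≤ b) : bsTP a ≤ bsTP b := by
  apply Submodule.span_mono
  apply Set.image_mono
  intro k hk
  simp only [Set.mem_ofPred_eq] at *
  have : (a : ℤ) ≤ b := by exact_mod_cast h
  omega

lemma bsTP_mul {a b : ℕ} {f g : ℝ → ℂ} (hf : f ∈ bsTP a) (hg : g ∈ bsTP b) :
    f * g ∈ bsTP (a + b) := by
  have h := Submodule.mul_mem_mul hf hg
  unfold bsTP at h
  rw [Submodule.span_mul_span] at h
  refine Submodule.span_mono ?_ h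
  rintro _ ⟨_, ⟨k, hk, rfl⟩, _, ⟨l, hl, rfl⟩, rfl⟩
  refine ⟨k + l, ?_, ?_⟩
  · simp only [Set.mem_ofPred_eq] at *
    push_cast
    exact (abs_add_le _ _).trans (add_le_add hk hl)
  · funext t
    simp only [bsE, Pi.mul_apply]
    rw [← Complex.exp_add]
    push_cast
    congr 1
    ring

lemma bsTP_one : (1 : ℝ → ℂ) ∈ bsTP 0 := by
  have : (1 : ℝ → ℂ) = bsE 0 := by funext t; simp [bsE]
  rw [this]; exact bsE_mem (by simp)

lemma bsTP_pow {a : ℕ} {f : ℝ → ℂ} (hf : f ∈ bsTP a) (k : ℕ) : f ^ k ∈ bsTP (k * a) := by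
  induction k with
  | zero => simpa using bsTP_one
  | succ k ih =>
    rw [pow_succ, Nat.succ_mul]
    exact bsTP_mul ih hf

lemma bsTP_cos : (fun t : ℝ => ((Real.cos t : ℝ) : ℂ)) ∈ bsTP 1 := by
  have : (fun t : ℝ => ((Real.cos t : ℝ) : ℂ)) = (1/2 : ℂ) • (bsE 1 + bsE (-1)) := by
    funext t
    simp [bsE, Complex.cos]
    ring
  rw [this]
  exact Submodule.smul_mem _ _ (Submodule.add_mem _ (bsE_mem (by simp)) (bsE_mem (by simp)))

lemma bsTP_sin : (fun t : ℝ => ((Real.sin t : ℝ) : ℂ)) ∈ bsTP 1 := by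
  have : (fun t : ℝ => ((Real.sin t : ℝ) : ℂ)) = (Complex.I/2 : ℂ) • (bsE (-1) - bsE 1) := by
    funext t
    simp [bsE, Complex.sin]
    ring
  rw [this]
  exact Submodule.smul_mem _ _ (Submodule.sub_mem _ (bsE_mem (by simp)) (bsE_mem (by simp)))

lemma bs_geo (n : ℕ) (hn : 0 < n) (r : ℤ) :
    ∑ j ∈ Finset.range (2 * n), Complex.exp (Real.pi * r / n * Complex.I) ^ j
      = if (2 * n : ℤ) ∣ r then (2 * n : ℂ) else 0 := by
  have hn' : (n : ℂ) ≠ 0 := by exact_mod_cast hn.ne'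
  have hpi : (Real.pi : ℂ) ≠ 0 := by exact_mod_cast Real.pi_ne_zero
  split_ifs with h
  · obtain ⟨q, rfl⟩ := h
    have : Complex.exp (Real.pi * ((2 * n * q : ℤ) : ℂ) / n * Complex.I) = 1 := by
      rw [Complex.exp_eq_one_iff]
      refine ⟨q, ?_⟩
      push_cast
      field_simp
    rw [this]
    simp
  · have h1 : Complex.exp (Real.pi * r / n * Complex.I) ≠ 1 := by
      intro h1
      rw [Complex.exp_eq_one_iff] at h1
      obtain ⟨q, hq⟩ := h1
      apply h
      refine ⟨q, ?_⟩
      have h2 := mul_right_cancel₀ Complex.I_ne_zero (hq.trans (by ring : _ = (q * (2 * Real.pi)) * Complex.I))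
      have h3 : (r : ℂ) = 2 * n * q := by
        field_simp at h2
        linear_combination h2
      exact_mod_cast h3
    rw [geom_sum_eq h1, ← Complex.exp_nat_mul]
    have : Complex.exp (((2 * n : ℕ) : ℂ) * (Real.pi * r / n * Complex.I)) = 1 := by
      rw [Complex.exp_eq_one_iff]
      refine ⟨r, ?_⟩
      push_cast
      field_simp
    rw [this]; simp

/-- nodes -/
noncomputable def bsNode (n : ℕ) (j : ℕ) : ℝ := (Real.pi / 2 + Real.pi * j) / n

noncomputable def bsK (n : ℕ) (j : ℕ) : ℂ :=
  ∑ a ∈ Finset.range n, ∑ b ∈ Finset.range n, bsE ((a : ℤ) - b) (bsNode n j)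

lemma bsK_norm (n j : ℕ) : ((‖bsK n j‖ : ℝ) : ℂ) = bsK n j := by
  have : bsK n j = ((‖∑ a ∈ Finset.range n, bsE a (bsNode n j)‖ ^ 2 : ℝ) : ℂ) := by
    push_cast
    rw [← Complex.mul_conj', map_sum, Finset.sum_mul_sum]
    unfold bsK
    refine Finset.sum_congr rfl fun a _ => Finset.sum_congr rfl fun b _ => ?_
    simp only [bsE]
    rw [← Complex.exp_conj, ← Complex.exp_add]
    congr 1
    simp
    ring
  rw [this, Complex.norm_real, Real.norm_of_nonneg (by positivity)]

lemma bs_inner0 (n : ℕ) (hn : 0 < n) (r : ℤ) (hr : |r| < n) :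
    ∑ j ∈ Finset.range (2 * n), bsE r (bsNode n j) = if r = 0 then (2 * n : ℂ) else 0 := by
  have hn' : (n : ℂ) ≠ 0 := by exact_mod_cast hn.ne'
  have h := bs_geo n hn r
  have h2 : ∀ j : ℕ, bsE r (bsNode n j) = Complex.exp (Real.pi * r / (2 * n) * Complex.I) *
      Complex.exp (Real.pi * r / n * Complex.I) ^ j := by
    intro j
    rw [← Complex.exp_nat_mul, ← Complex.exp_add]
    simp only [bsE, bsNode]
    congr 1
    push_cast
    field_simp
  simp only [h2, ← Finset.mul_sum, h]
  by_cases hr0 : r = 0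
  · simp [hr0]
  · have : ¬ (2 * n : ℤ) ∣ r := by
      intro hd
      have := Int.le_of_dvd (abs_pos.mpr hr0) ((dvd_abs _ _).mpr hd)
      omega
    simp [hr0, this]

lemma bs_inner1 (n : ℕ) (hn : 0 < n) (r : ℤ) (hr : |r| < 2 * n) :
    ∑ j ∈ Finset.range (2 * n), (-1 : ℂ) ^ j * bsE r (bsNode n j) =
      2 * n * Complex.I * ((if r = n then 1 else 0) - (if r = -n then 1 else 0)) := by
  have hn' : (n : ℂ) ≠ 0 := by exact_mod_cast hn.ne'
  have hnz : (n : ℤ) ≠ -n := by omega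
  have hnz' : -(n : ℤ) ≠ n := by omega
  have h := bs_geo n hn (r + n)
  have h2 : ∀ j : ℕ, (-1 : ℂ) ^ j * bsE r (bsNode n j) =
      Complex.exp (Real.pi * r / (2 * n) * Complex.I) *
      Complex.exp (Real.pi * (r + n : ℤ) / n * Complex.I) ^ j := by
    intro j
    rw [← Complex.exp_pi_mul_I, ← Complex.exp_nat_mul, ← Complex.exp_nat_mul,
      ← Complex.exp_add]
    simp only [bsE, bsNode]
    rw [← Complex.exp_add]
    congr 1
    push_cast
    field_simp
    ring
  simp only [h2, ← Finset.mul_sum, h]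
  rw [abs_lt] at hr
  by_cases h3 : r = n
  · subst h3
    have e : Complex.exp (Real.pi * ((n : ℤ) : ℂ) / (2 * n) * Complex.I) = Complex.I := by
      have e0 : (Real.pi * ((n : ℤ) : ℂ) / (2 * n) * Complex.I) = Real.pi / 2 * Complex.I := by
        push_cast
        field_simp
      rw [e0, Complex.exp_pi_div_two_mul_I]
    have d : (2 * n : ℤ) ∣ n + n := ⟨1, by ring⟩
    rw [e]; simp [d, hnz]; ring
  by_cases h4 : r = -n
  · subst h4
    have e : Complex.exp (Real.pi * ((-n : ℤ) : ℂ) / (2 * n) * Complex.I) = -Complex.I := by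
      rw [← Complex.exp_neg_pi_div_two_mul_I]
      congr 1
      push_cast
      field_simp
    rw [e]; simp [hnz']; ring
  · have : ¬ (2 * n : ℤ) ∣ r + n := by
      rintro ⟨q, hq⟩
      have q1 : q < 2 := by nlinarith
      have q0 : -1 < q := by nlinarith
      have : q = 0 ∨ q = 1 := by omega
      rcases this with rfl | rfl <;> omega
    simp [h3, h4, this]

lemma bs_count (n : ℕ) (d : ℤ) (hd : 0 ≤ d) :
    ∑ a ∈ Finset.range n, ∑ b ∈ Finset.range n, (if (a : ℤ) - b = d then (1:ℂ) else 0)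
      = ((n - d.toNat : ℕ) : ℂ) := by
  obtain ⟨d, rfl⟩ := Int.eq_ofNat_of_zero_le hd
  have : ∀ a ∈ Finset.range n, ∑ b ∈ Finset.range n, (if (a : ℤ) - b = d then (1:ℂ) else 0)
      = if d ≤ a then 1 else 0 := by
    intro a ha
    rw [Finset.mem_range] at ha
    split_ifs with h
    · rw [Finset.sum_eq_single (a - d)]
      · rw [if_pos (by omega)]
      · intro b _ hb
        rw [if_neg (by omega)]
      · intro h'
        rw [Finset.mem_range] at h'
        omega
    · apply Finset.sum_eq_zero
      intro b _
      rw [if_neg (by omega)]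
  rw [Finset.sum_congr rfl this, Finset.sum_boole]
  congr 1
  have : (Finset.range n).filter (fun a => d ≤ a) = Finset.Ico d n := by
    ext a; simp; omega
  rw [this]; simp

lemma bs_count' (n : ℕ) (d : ℤ) :
    ∑ a ∈ Finset.range n, ∑ b ∈ Finset.range n, (if (a : ℤ) - b = d then (1:ℂ) else 0)
      = ((n - d.natAbs : ℕ) : ℂ) := by
  rcases le_total 0 d with h | h
  · rw [bs_count n d h]; congr 2; omega
  · have := bs_count n (-d) (by omega)
    rw [Finset.sum_comm] at this
    have e : d.natAbs = (-d).toNat := by omega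
    rw [e, ← this]
    refine Finset.sum_congr rfl fun a _ => Finset.sum_congr rfl fun b _ => ?_
    congr 1
    apply propext; omega

lemma bs_Ksum (n : ℕ) (hn : 0 < n) : ∑ j ∈ Finset.range (2 * n), ‖bsK n j‖ = 2 * n * n := by
  have : ((∑ j ∈ Finset.range (2 * n), ‖bsK n j‖ : ℝ) : ℂ) = ((2 * n * n : ℝ) : ℂ) := by
    rw [Complex.ofReal_sum]
    simp only [bsK_norm]
    unfold bsK
    rw [Finset.sum_comm]
    have : ∀ a ∈ Finset.range n, ∑ j ∈ Finset.range (2 * n),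
        ∑ b ∈ Finset.range n, bsE ((a : ℤ) - b) (bsNode n j)
        = ∑ b ∈ Finset.range n, 2 * n * (if (a : ℤ) - b = 0 then (1:ℂ) else 0) := by
      intro a ha
      rw [Finset.sum_comm]
      refine Finset.sum_congr rfl fun b hb => ?_
      rw [Finset.mem_range] at ha hb
      rw [bs_inner0 n hn _ (by rw [abs_lt]; omega)]
      simp
    rw [Finset.sum_congr rfl this]
    simp only [← Finset.mul_sum]
    rw [bs_count']
    simp
  exact_mod_cast this

lemma bs_riesz (n : ℕ) (hn : 0 < n) (m : ℤ) (hm : |m| ≤ n) :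
    ∑ j ∈ Finset.range (2 * n), (-1 : ℂ) ^ j * bsK n j * bsE m (bsNode n j)
      = 2 * n * (m * Complex.I) := by
  have e : ∀ j ∈ Finset.range (2 * n), (-1 : ℂ) ^ j * bsK n j * bsE m (bsNode n j)
      = ∑ a ∈ Finset.range n, ∑ b ∈ Finset.range n,
        (-1 : ℂ) ^ j * bsE ((a : ℤ) - b + m) (bsNode n j) := by
    intro j _
    unfold bsK
    simp only [Finset.mul_sum, Finset.sum_mul]
    refine Finset.sum_congr rfl fun a _ => Finset.sum_congr rfl fun b _ => ?_
    rw [mul_assoc]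
    congr 1
    simp only [bsE]
    rw [← Complex.exp_add]
    congr 1
    push_cast
    ring
  rw [Finset.sum_congr rfl e, Finset.sum_comm]
  rw [abs_le] at hm
  have : ∀ a ∈ Finset.range n, ∑ j ∈ Finset.range (2 * n),
        ∑ b ∈ Finset.range n, (-1 : ℂ) ^ j * bsE ((a : ℤ) - b + m) (bsNode n j)
        = ∑ b ∈ Finset.range n, 2 * n * Complex.I * ((if (a : ℤ) - b = n - m then (1:ℂ) else 0)
          - (if (a : ℤ) - b = -n - m then (1:ℂ) else 0)) := by
    intro a ha
    rw [Finset.sum_comm]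
    refine Finset.sum_congr rfl fun b hb => ?_
    rw [Finset.mem_range] at ha hb
    rw [bs_inner1 n hn _ (by rw [abs_lt]; omega)]
    have e1 : ((a : ℤ) - b + m = n) = ((a : ℤ) - b = n - m) := by apply propext; omega
    have e2 : ((a : ℤ) - b + m = -n) = ((a : ℤ) - b = -n - m) := by apply propext; omega
    simp only [e1, e2]
  rw [Finset.sum_congr rfl this]
  simp only [← Finset.mul_sum, Finset.sum_sub_distrib]
  rw [bs_count', bs_count']
  have : ((n - ((n:ℤ) - m).natAbs : ℕ) : ℤ) - ((n - (-(n:ℤ) - m).natAbs : ℕ) : ℤ) = m := by omega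
  have h2 : ((n - ((n:ℤ) - m).natAbs : ℕ) : ℂ) - ((n - (-(n:ℤ) - m).natAbs : ℕ) : ℂ) = m := by
    exact_mod_cast congrArg (Int.cast : ℤ → ℂ) this
  rw [h2]; ring

lemma bsE_deriv (m : ℤ) : HasDerivAt (bsE m) (m * Complex.I) 0 := by
  have h : HasDerivAt (fun t : ℝ => ((m : ℂ) * (t : ℂ) * Complex.I)) ((m : ℂ) * 1 * Complex.I) 0 :=
    ((Complex.ofRealCLM.hasDerivAt (x := (0:ℝ))).const_mul (m : ℂ)).mul_const Complex.I
  have := h.cexp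
  refine HasDerivAt.congr_deriv this ?_
  simp

lemma bs_formula (n : ℕ) {f : ℝ → ℂ} (hf : f ∈ bsTP n) :
    HasDerivAt f (1 / (2 * n) * ∑ j ∈ Finset.range (2 * n), (-1 : ℂ) ^ j * bsK n j * f (bsNode n j))
      0 := by
  unfold bsTP at hf
  induction hf using Submodule.span_induction with
  | mem x h =>
    obtain ⟨m, hm, rfl⟩ := h
    simp only [Set.mem_ofPred_eq] at hm
    have := bsE_deriv m
    rcases Nat.eq_zero_or_pos n with rfl | hn
    · have : m = 0 := by simpa using hm
      subst this
      simpa using this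
    · rw [bs_riesz n hn m hm]
      have hn' : (n : ℂ) ≠ 0 := by exact_mod_cast hn.ne'
      convert this using 1
      field_simp
  | zero => exact (hasDerivAt_const (0:ℝ) (0:ℂ)).congr_deriv (by simp)
  | add f g _ _ h1 h2 =>
    refine (h1.add h2).congr_deriv ?_
    simp only [Pi.add_apply, mul_add, Finset.sum_add_distrib]
  | smul c f _ h =>
    refine (h.const_smul c).congr_deriv ?_
    simp only [Pi.smul_apply, smul_eq_mul, Finset.mul_sum]
    refine Finset.sum_congr rfl fun j _ => ?_
    ring

lemma bs_bernstein (n : ℕ) {f : ℝ → ℂ} (hf : f ∈ bsTP n) (M : ℝ) (hM : ∀ t, ‖f t‖ ≤ M) {d : ℂ}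
    (hd : HasDerivAt f d 0) : ‖d‖ ≤ n * M := by
  rw [hd.unique (bs_formula n hf)]
  rcases Nat.eq_zero_or_pos n with rfl | hn
  · simp
  have hn' : (0 : ℝ) < n := by exact_mod_cast hn
  rw [norm_mul]
  have : ‖∑ j ∈ Finset.range (2 * n), (-1 : ℂ) ^ j * bsK n j * f (bsNode n j)‖
      ≤ 2 * n * n * M := by
    rw [← bs_Ksum n hn, Finset.sum_mul]
    refine norm_sum_le_of_le _ fun j _ => ?_
    rw [norm_mul, norm_mul]
    simp only [norm_pow, norm_neg, norm_one, one_pow, one_mul]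
    exact mul_le_mul_of_nonneg_left (hM _) (norm_nonneg _)
  have e : ‖(1 / (2 * n) : ℂ)‖ = 1 / (2 * n) := by simp
  rw [e]
  calc _ ≤ 1 / (2 * (n:ℝ)) * (2 * n * n * M) := by gcongr
    _ = _ := by field_simp

lemma bs_cheb (n m : ℕ) {f : ℝ → ℝ} (hf : (fun t => (f t : ℂ)) ∈ bsTP n) :
    (fun t => (((Polynomial.Chebyshev.T ℝ (m : ℤ)).eval (f t) : ℝ) : ℂ)) ∈ bsTP (m * n) := by
  set p := Polynomial.Chebyshev.T ℝ (m : ℤ)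
  have hp : p.natDegree = m := by
    simp [p, Polynomial.Chebyshev.natDegree_T]
  have : (fun t => ((p.eval (f t) : ℝ) : ℂ))
      = ∑ k ∈ Finset.range (p.natDegree + 1), (p.coeff k : ℂ) • (fun t => (f t : ℂ)) ^ k := by
    funext t
    rw [Polynomial.eval_eq_sum_range]
    simp
  rw [this]
  refine Submodule.sum_mem _ fun k hk => Submodule.smul_mem _ _ ?_
  refine bsTP_mono ?_ (bsTP_pow hf k)
  rw [Finset.mem_range, hp] at hk
  exact Nat.mul_le_mul_right _ (by omega)

lemma bs_key (n m : ℕ) (hm : 0 < m) {f : ℝ → ℝ} (hf : (fun t => (f t : ℂ)) ∈ bsTP n)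
    (hb : ∀ t, |f t| ≤ 1) {d : ℝ} (hd : HasDerivAt f d 0) (φ : ℝ) (h0 : 0 < φ) (h1 : φ < Real.pi)
    (hφ : f 0 = Real.cos φ) (hs : |Real.sin (m * φ)| = 1) : |d| ≤ n * Real.sin φ := by
  have hsin := Real.sin_pos_of_pos_of_lt_pi h0 h1
  have hcs := Real.sin_sq_add_cos_sq φ
  have hm' : (0 : ℝ) < m := by exact_mod_cast hm
  have hne1 : f 0 ≠ -1 := by rw [hφ]; intro h; rw [h] at hcs; nlinarith
  have hne2 : f 0 ≠ 1 := by rw [hφ]; intro h; rw [h] at hcs; nlinarith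
  have harc : Real.arccos (f 0) = φ := by rw [hφ, Real.arccos_cos h0.le h1.le]
  have hsq : √(1 - f 0 ^ 2) = Real.sin φ := by
    rw [hφ, ← Real.abs_sin_eq_sqrt_one_sub_cos_sq, abs_of_pos hsin]
  have hg : (fun t => (Polynomial.Chebyshev.T ℝ (m : ℤ)).eval (f t))
      = fun t => Real.cos (m * Real.arccos (f t)) := by
    funext t
    have := Polynomial.Chebyshev.T_real_cos (Real.arccos (f t)) (m : ℤ)
    rw [Real.cos_arccos (abs_le.mp (hb t)).1 (abs_le.mp (hb t)).2] at this
    simpa using this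
  have hD : HasDerivAt (fun t => Real.cos (m * Real.arccos (f t)))
      (-Real.sin (m * Real.arccos (f 0)) * (m * (-(1 / √(1 - f 0 ^ 2)) * d))) 0 :=
    (((Real.hasDerivAt_arccos hne1 hne2).comp 0 hd).const_mul (m : ℝ)).cos
  rw [← hg] at hD
  have := bs_bernstein (m * n) (bs_cheb n m hf) 1 (fun t => by
    rw [Complex.norm_real]
    exact Polynomial.Chebyshev.abs_eval_T_real_le_one _ (hb t)) hD.ofReal_comp
  rw [Complex.norm_real, harc, hsq, Real.norm_eq_abs, abs_mul, abs_neg, hs, one_mul, abs_mul,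
    abs_mul, abs_neg, abs_of_pos hm', abs_of_pos (by positivity : 0 < 1 / Real.sin φ)] at this
  push_cast at this
  rw [mul_one] at this
  have h2 := le_of_mul_le_mul_left this hm'
  field_simp at h2
  linarith

lemma bs_szego_pos (n : ℕ) {f : ℝ → ℝ} (hf : (fun t => (f t : ℂ)) ∈ bsTP n)
    (hb : ∀ t, |f t| ≤ 1) {d : ℝ} (hd : HasDerivAt f d 0) (hf0 : 0 < f 0) :
    |d| ≤ n * √(1 - f 0 ^ 2) := by
  set φ := Real.arccos (f 0) with hφ
  have hcos : Real.cos φ = f 0 :=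
    Real.cos_arccos (abs_le.mp (hb 0)).1 (abs_le.mp (hb 0)).2
  have hsin : Real.sin φ = √(1 - f 0 ^ 2) := Real.sin_arccos _
  have hφ0 : 0 ≤ φ := Real.arccos_nonneg _
  have hφ1 : φ < Real.pi / 2 := Real.arccos_lt_pi_div_two.mpr hf0
  have hpi := Real.pi_pos
  rw [← hsin]
  -- sequence of good angles
  let k : ℕ → ℕ := fun m => ⌈(m : ℝ) * φ / Real.pi⌉₊
  let ψ : ℕ → ℝ := fun m => Real.pi * (2 * k m + 1) / (2 * m)
  have hlow : ∀ m : ℕ, 0 < m → φ + Real.pi / 2 * (1 / m) ≤ ψ m := by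
    intro m hm
    have hm' : (0 : ℝ) < m := by exact_mod_cast hm
    have h1 : (m : ℝ) * φ / Real.pi ≤ k m := Nat.le_ceil _
    rw [div_le_iff₀ hpi] at h1
    simp only [ψ]
    rw [le_div_iff₀ (by positivity)]
    have : (φ + Real.pi / 2 * (1 / m)) * (2 * m) = 2 * (m * φ) + Real.pi := by field_simp
    rw [this]; nlinarith
  have hup : ∀ m : ℕ, 0 < m → ψ m ≤ φ + 3 * Real.pi / 2 * (1 / m) := by
    intro m hm
    have hm' : (0 : ℝ) < m := by exact_mod_cast hm
    have h1 : (k m : ℝ) < (m : ℝ) * φ / Real.pi + 1 := Nat.ceil_lt_add_one (by positivity)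
    have h2 : (k m : ℝ) * Real.pi < m * φ + Real.pi := by
      have := mul_lt_mul_of_pos_right h1 hpi
      rwa [add_mul, div_mul_cancel₀ _ hpi.ne', one_mul] at this
    simp only [ψ]
    rw [div_le_iff₀ (by positivity)]
    have : (φ + 3 * Real.pi / 2 * (1 / m)) * (2 * m) = 2 * (m * φ) + 3 * Real.pi := by field_simp
    rw [this]; nlinarith
  have hlim0 : Filter.Tendsto (fun m : ℕ => 1 / (m : ℝ)) Filter.atTop (nhds 0) :=
    tendsto_one_div_atTop_nhds_zero_nat
  have hlim : Filter.Tendsto ψ Filter.atTop (nhds φ) := by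
    refine tendsto_of_tendsto_of_tendsto_of_le_of_le'
      (g := fun m : ℕ => φ + Real.pi / 2 * (1 / m))
      (h := fun m : ℕ => φ + 3 * Real.pi / 2 * (1 / m)) ?_ ?_ ?_ ?_
    · simpa using (hlim0.const_mul (Real.pi / 2)).const_add φ
    · simpa using (hlim0.const_mul (3 * Real.pi / 2)).const_add φ
    · filter_upwards [Filter.eventually_gt_atTop 0] with m hm using hlow m hm
    · filter_upwards [Filter.eventually_gt_atTop 0] with m hm using hup m hm
  have hev : ∀ᶠ m in Filter.atTop, Real.cos (ψ m) / f 0 * |d| ≤ n * Real.sin (ψ m) := by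
    filter_upwards [Filter.eventually_gt_atTop 0, hlim.eventually_lt_const hφ1] with m hm hm2
    have hm' : (0 : ℝ) < m := by exact_mod_cast hm
    have hgt : φ < ψ m := lt_of_lt_of_le (by
      have : 0 < Real.pi / 2 * (1 / (m:ℝ)) := by positivity
      linarith) (hlow m hm)
    have hcpos : 0 ≤ Real.cos (ψ m) := Real.cos_nonneg_of_mem_Icc ⟨by linarith, by linarith⟩
    have hcle : Real.cos (ψ m) ≤ f 0 := by
      rw [← hcos]
      exact Real.cos_le_cos_of_nonneg_of_le_pi hφ0 (by linarith) hgt.le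
    set c := Real.cos (ψ m) / f 0 with hc
    have hc0 : 0 ≤ c := by positivity
    have hc1 : c ≤ 1 := by rw [hc, div_le_one hf0]; exact hcle
    have hmem : (fun t => ((c * f t : ℝ) : ℂ)) ∈ bsTP n := by
      have : (fun t => ((c * f t : ℝ) : ℂ)) = (c : ℂ) • (fun t => (f t : ℂ)) := by
        funext t; simp
      rw [this]; exact Submodule.smul_mem _ _ hf
    have := bs_key n m hm hmem (fun t => by
      rw [abs_mul, abs_of_nonneg hc0]
      exact mul_le_one₀ hc1 (abs_nonneg _) (hb t)) (hd.const_mul c) (ψ m) (by linarith)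
      (by linarith) (by rw [hc]; field_simp) (by
        have e : (m : ℝ) * ψ m = Real.pi / 2 + k m * Real.pi := by
          simp only [ψ]; field_simp; ring
        rw [e, Real.sin_add_nat_mul_pi]
        simp)
    rwa [abs_mul, abs_of_nonneg hc0] at this
  have hL : Filter.Tendsto (fun m => Real.cos (ψ m) / f 0 * |d|) Filter.atTop
      (nhds (Real.cos φ / f 0 * |d|)) :=
    (((Real.continuous_cos.tendsto φ).comp hlim).div_const _).mul_const _
  have hR : Filter.Tendsto (fun m => (n : ℝ) * Real.sin (ψ m)) Filter.atTop
      (nhds (n * Real.sin φ)) :=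
    ((Real.continuous_sin.tendsto φ).comp hlim).const_mul _
  have := le_of_tendsto_of_tendsto hL hR hev
  rwa [hcos, div_self hf0.ne', one_mul] at this

lemma bs_szego (n : ℕ) {f : ℝ → ℝ} (hf : (fun t => (f t : ℂ)) ∈ bsTP n)
    (hb : ∀ t, |f t| ≤ 1) {d : ℝ} (hd : HasDerivAt f d 0) :
    |d| ≤ n * √(1 - f 0 ^ 2) := by
  rcases lt_trichotomy (f 0) 0 with h | h | h
  · have hm : (fun t => ((-f t : ℝ) : ℂ)) ∈ bsTP n := by
      have : (fun t => ((-f t : ℝ) : ℂ)) = -(fun t => (f t : ℂ)) := by funext t; simp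
      rw [this]; exact Submodule.neg_mem _ hf
    have := bs_szego_pos n hm (fun t => by simpa using hb t) hd.neg (by simpa using h)
    simpa using this
  · have := bs_bernstein n hf 1 (fun t => by simpa using hb t) hd.ofReal_comp
    simpa [h] using this
  · exact bs_szego_pos n hf hb hd h

/-- bivariate polynomials of degree at most n -/
noncomputable def bsBP (n : ℕ) : Submodule ℝ (ℝ → ℝ → ℝ) :=
  Submodule.span ℝ {F | ∃ k l : ℕ, k + l ≤ n ∧ F = fun a b => a ^ k * b ^ l}

lemma bsBP_trig {n : ℕ} {F : ℝ → ℝ → ℝ} (hF : F ∈ bsBP n) (r : ℝ) :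
    (fun t => ((F (Real.cos t) (r * Real.sin t) : ℝ) : ℂ)) ∈ bsTP n := by
  unfold bsBP at hF
  induction hF using Submodule.span_induction with
  | mem F h =>
    obtain ⟨k, l, hkl, rfl⟩ := h
    have : (fun t => (((Real.cos t) ^ k * (r * Real.sin t) ^ l : ℝ) : ℂ))
        = ((r : ℂ) ^ l) • ((fun t : ℝ => ((Real.cos t : ℝ) : ℂ)) ^ k *
          (fun t : ℝ => ((Real.sin t : ℝ) : ℂ)) ^ l) := by
      funext t; simp; ring
    rw [this]
    exact Submodule.smul_mem _ _ (bsTP_mono (by omega)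
      (bsTP_mul (bsTP_pow bsTP_cos k) (bsTP_pow bsTP_sin l)))
  | zero =>
    convert Submodule.zero_mem (bsTP n) using 1
    funext t; simp
  | add f g _ _ h1 h2 =>
    convert Submodule.add_mem _ h1 h2 using 1
    funext t; simp
  | smul c f _ h =>
    convert Submodule.smul_mem _ (c : ℂ) h using 1
    funext t; simp

lemma bsBP_deriv {n : ℕ} {F : ℝ → ℝ → ℝ} (hF : F ∈ bsBP n) :
    ∃ G : ℝ → ℝ, (∀ a, HasDerivAt (F a) (G a) 0) ∧ Continuous G ∧
      (fun t => ((Real.sin t * G (Real.cos t) : ℝ) : ℂ)) ∈ bsTP n := by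
  unfold bsBP at hF
  induction hF using Submodule.span_induction with
  | mem F h =>
    obtain ⟨k, l, hkl, rfl⟩ := h
    refine ⟨fun a => a ^ k * (l * 0 ^ (l - 1)), fun a => (hasDerivAt_pow l (0:ℝ)).const_mul _,
      by fun_prop, ?_⟩
    rcases Nat.eq_zero_or_pos l with rfl | hl
    · convert Submodule.zero_mem (bsTP n) using 1
      funext t; simp
    have : (fun t => ((Real.sin t * (Real.cos t ^ k * (l * 0 ^ (l - 1))) : ℝ) : ℂ))
        = ((l : ℂ) * 0 ^ (l - 1)) • ((fun t : ℝ => ((Real.cos t : ℝ) : ℂ)) ^ k *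
          (fun t : ℝ => ((Real.sin t : ℝ) : ℂ)) ^ 1) := by
      funext t; simp; ring
    rw [this]
    exact Submodule.smul_mem _ _ (bsTP_mono (by omega)
      (bsTP_mul (bsTP_pow bsTP_cos k) (bsTP_pow bsTP_sin 1)))
  | zero => exact ⟨0, fun a => hasDerivAt_const _ _, continuous_const,
      by convert Submodule.zero_mem (bsTP n) using 1; funext t; simp⟩
  | add f g _ _ h1 h2 =>
    obtain ⟨G, hG, hGc, hG'⟩ := h1
    obtain ⟨H, hH, hHc, hH'⟩ := h2
    refine ⟨G + H, fun a => (hG a).add (hH a), hGc.add hHc, ?_⟩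
    convert Submodule.add_mem _ hG' hH' using 1
    funext t; simp; ring
  | smul c f _ h =>
    obtain ⟨G, hG, hGc, hG'⟩ := h
    refine ⟨c • G, fun a => (hG a).const_smul c, hGc.const_smul c, ?_⟩
    convert Submodule.smul_mem _ (c : ℂ) hG' using 1
    funext t; simp; ring

lemma bsBP_of_poly {X : Type*} [NormedAddCommGroup X] [NormedSpace ℝ X]
    (n : ℕ) (P : X → ℝ)
    (hP : ∃ L : (j : Fin (n + 1)) → ContinuousMultilinearMap ℝ (fun _ : Fin (j : ℕ) => X) ℝ,
      ∀ x, P x = ∑ j, L j (fun _ => x)) (x y : X) :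
    (fun a b => P (a • x + b • y)) ∈ bsBP n := by
  obtain ⟨L, hL⟩ := hP
  have : (fun a b => P (a • x + b • y)) = ∑ j : Fin (n + 1), ∑ r : Fin (j : ℕ) → Bool,
      (L j (fun i => if r i then x else y)) •
        (fun a b : ℝ => a ^ (Finset.univ.filter (fun i => r i = true)).card *
          b ^ (Finset.univ.filter (fun i => ¬ (r i = true))).card) := by
    funext a b
    rw [hL]
    simp only [Finset.sum_apply, Pi.smul_apply]
    refine Finset.sum_congr rfl fun j _ => ?_
    have h1 : (fun _ : Fin (j : ℕ) => a • x + b • y)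
        = fun _ => ∑ s : Bool, (if s then a else b) • (if s then x else y) := by
      funext i; simp
    rw [h1, ContinuousMultilinearMap.map_sum (L j)
      (fun _ (s : Bool) => (if s then a else b) • (if s then x else y))]
    refine Finset.sum_congr rfl fun r _ => ?_
    rw [ContinuousMultilinearMap.map_smul_univ (L j) (fun i => if r i then a else b)
      (fun i => if r i then x else y), Finset.prod_ite, Finset.prod_const, Finset.prod_const]
    simp only [smul_eq_mul]
    ring
  rw [this]
  refine Submodule.sum_mem _ fun j _ => Submodule.sum_mem _ fun r _ => Submodule.smul_mem _ _
    (Submodule.subset_span ⟨_, _, ?_, rfl⟩)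
  rw [Finset.card_filter_add_card_filter_not]
  simp only [Finset.card_univ, Fintype.card_fin]
  omega

lemma bs_diff {X : Type*} [NormedAddCommGroup X] [NormedSpace ℝ X]
    (n : ℕ) (P : X → ℝ)
    (hP : ∃ L : (j : Fin (n + 1)) → ContinuousMultilinearMap ℝ (fun _ : Fin (j : ℕ) => X) ℝ,
      ∀ x, P x = ∑ j, L j (fun _ => x)) : Differentiable ℝ P := by
  obtain ⟨L, hL⟩ := hP
  have : P = fun x => ∑ j, L j (fun _ => x) := funext hL
  rw [this]
  refine Differentiable.fun_sum fun j _ => ?_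
  have h1 : Differentiable ℝ (L j) := (L j).contDiff (n := 1).differentiable (by simp)
  exact h1.comp (differentiable_pi.mpr fun _ => differentiable_id)

lemma bs_first {X : Type*} [NormedAddCommGroup X] [NormedSpace ℝ X]
    (n : ℕ) (P : X → ℝ)
    (hP : ∃ L : (j : Fin (n + 1)) → ContinuousMultilinearMap ℝ (fun _ : Fin (j : ℕ) => X) ℝ,
      ∀ x, P x = ∑ j, L j (fun _ => x))
    (hPnorm : ∀ x : X, ‖x‖ ≤ 1 → |P x| ≤ 1)
    (x : X) (hx : ‖x‖ ≤ 1) (y : X) (hy : ‖y‖ ≤ 1) :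
    √(1 - ‖x‖ ^ 2) * |fderiv ℝ P x y| ≤ n * √(1 - P x ^ 2) := by
  set r := √(1 - ‖x‖ ^ 2) with hr
  have hx0 := norm_nonneg x
  have hr0 : 0 ≤ r := Real.sqrt_nonneg _
  have hr2 : r ^ 2 = 1 - ‖x‖ ^ 2 := Real.sq_sqrt (by nlinarith)
  have hmem := bsBP_trig (bsBP_of_poly n P hP x y) r
  have hb : ∀ t, |P (Real.cos t • x + (r * Real.sin t) • y)| ≤ 1 := by
    intro t
    apply hPnorm
    have h1 : ‖Real.cos t • x + (r * Real.sin t) • y‖ ≤ |Real.cos t| * ‖x‖ + r * |Real.sin t| := by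
      refine (norm_add_le _ _).trans ?_
      rw [norm_smul, norm_smul, Real.norm_eq_abs, Real.norm_eq_abs, abs_mul, abs_of_nonneg hr0]
      have : r * |Real.sin t| * ‖y‖ ≤ r * |Real.sin t| * 1 := by gcongr
      linarith
    refine h1.trans ?_
    have h2 : |Real.cos t| ^ 2 + |Real.sin t| ^ 2 = 1 := by
      rw [sq_abs, sq_abs, Real.cos_sq_add_sin_sq]
    nlinarith [sq_nonneg (|Real.cos t| - ‖x‖), sq_nonneg (|Real.sin t| - r)]
  have hd : HasDerivAt (fun t => P (Real.cos t • x + (r * Real.sin t) • y))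
      (fderiv ℝ P x (r • y)) 0 := by
    have hg : HasDerivAt (fun t : ℝ => Real.cos t • x + (r * Real.sin t) • y) (r • y) 0 := by
      have := ((Real.hasDerivAt_cos 0).smul_const x).add
        (((Real.hasDerivAt_sin 0).const_mul r).smul_const y)
      refine this.congr_deriv ?_
      simp
    have hf : HasFDerivAt P (fderiv ℝ P x) (Real.cos 0 • x + (r * Real.sin 0) • y) := by
      have := (bs_diff n P hP x).hasFDerivAt
      simpa using this
    exact hf.comp_hasDerivAt 0 hg
  have := bs_szego n hmem hb hd
  simpa [abs_mul, abs_of_nonneg hr0] using this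

lemma bs_second {X : Type*} [NormedAddCommGroup X] [NormedSpace ℝ X]
    (n : ℕ) (P : X → ℝ)
    (hP : ∃ L : (j : Fin (n + 1)) → ContinuousMultilinearMap ℝ (fun _ : Fin (j : ℕ) => X) ℝ,
      ∀ x, P x = ∑ j, L j (fun _ => x))
    (hPnorm : ∀ x : X, ‖x‖ ≤ 1 → |P x| ≤ 1)
    (x : X) (hx : ‖x‖ ≤ 1) (y : X) (hy : ‖y‖ ≤ 1) :
    |fderiv ℝ P x y| ≤ (n : ℝ) ^ 2 := by
  obtain ⟨G, hG, hGc, hmem⟩ := bsBP_deriv (bsBP_of_poly n P hP x y)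
  have hGe : ∀ a, G a = fderiv ℝ P (a • x) y := by
    intro a
    have hg : HasDerivAt (fun b : ℝ => a • x + b • y) y 0 := by
      have := ((hasDerivAt_id (0:ℝ)).smul_const y).const_add (a • x)
      refine this.congr_deriv ?_
      simp
    have hf : HasFDerivAt P (fderiv ℝ P (a • x)) (a • x + (0:ℝ) • y) := by
      have := (bs_diff n P hP (a • x)).hasFDerivAt
      simpa using this
    exact (hG a).unique (hf.comp_hasDerivAt 0 hg)
  have hb : ∀ t, ‖((Real.sin t * G (Real.cos t) : ℝ) : ℂ)‖ ≤ n := by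
    intro t
    rw [Complex.norm_real, Real.norm_eq_abs, abs_mul, hGe]
    have hn : ‖Real.cos t • x‖ ^ 2 ≤ Real.cos t ^ 2 := by
      rw [norm_smul, mul_pow, Real.norm_eq_abs, sq_abs]
      have : ‖x‖ ^ 2 ≤ 1 := pow_le_one₀ (norm_nonneg _) hx
      nlinarith [sq_nonneg (Real.cos t)]
    have h1 : ‖Real.cos t • x‖ ≤ 1 := by
      have := Real.cos_sq_le_one t
      nlinarith [norm_nonneg (Real.cos t • x)]
    have h2 := bs_first n P hP hPnorm _ h1 y hy
    have h3 : |Real.sin t| ≤ √(1 - ‖Real.cos t • x‖ ^ 2) := by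
      rw [Real.abs_sin_eq_sqrt_one_sub_cos_sq]
      exact Real.sqrt_le_sqrt (by linarith)
    have h4 : √(1 - P (Real.cos t • x) ^ 2) ≤ 1 := by
      rw [Real.sqrt_le_iff]; refine ⟨by norm_num, ?_⟩
      nlinarith [sq_nonneg (P (Real.cos t • x))]
    calc _ ≤ √(1 - ‖Real.cos t • x‖ ^ 2) * |fderiv ℝ P (Real.cos t • x) y| := by gcongr
      _ ≤ _ := h2
      _ ≤ n * 1 := by gcongr
      _ = n := mul_one _
  have hd : HasDerivAt (fun t => Real.sin t * G (Real.cos t)) (G 1) 0 := by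
    rw [hasDerivAt_iff_tendsto_slope]
    have h1 := (hasDerivAt_iff_tendsto_slope.mp (Real.hasDerivAt_sin 0))
    have h2 : Filter.Tendsto (fun t => G (Real.cos t)) (nhdsWithin 0 {0}ᶜ) (nhds (G 1)) := by
      have : Continuous fun t => G (Real.cos t) := hGc.comp Real.continuous_cos
      have h := this.tendsto 0
      rw [Real.cos_zero] at h
      exact h.mono_left nhdsWithin_le_nhds
    have h3 := h1.mul h2
    rw [Real.cos_zero, one_mul] at h3
    refine h3.congr fun t => ?_
    simp [slope]
    ring
  have := bs_bernstein n hmem n hb hd.ofReal_comp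
  rw [Complex.norm_real, Real.norm_eq_abs, hGe, one_smul] at this
  linarith [sq (n : ℝ)]

/-- Bernstein-type inequality for the first Fréchet derivative of a polynomial of degree
at most `n` on a real Banach space: if `‖P‖ ≤ 1` and `‖x‖ < 1`, then
`‖DP(x)‖ ≤ min (n √(1 - P(x)²)/√(1 - ‖x‖²)) n²`. -/
theorem bernstein_first_derivative_banach
    {X : Type*} [NormedAddCommGroup X] [NormedSpace ℝ X] [CompleteSpace X]
    (n : ℕ) (P : X → ℝ)
    (hP : ∃ L : (j : Fin (n + 1)) → ContinuousMultilinearMap ℝ (fun _ : Fin (j : ℕ) => X) ℝ,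
      ∀ x, P x = ∑ j, L j (fun _ => x))
    (hPnorm : ∀ x : X, ‖x‖ ≤ 1 → |P x| ≤ 1)
    (x : X) (hx : ‖x‖ < 1) :
    ‖fderiv ℝ P x‖
      ≤ min ((n : ℝ) * Real.sqrt (1 - P x ^ 2) / Real.sqrt (1 - ‖x‖ ^ 2)) ((n : ℝ) ^ 2) := by
  have hx0 := norm_nonneg x
  have hpos : 0 < 1 - ‖x‖ ^ 2 := by nlinarith
  have hs : 0 < Real.sqrt (1 - ‖x‖ ^ 2) := Real.sqrt_pos.mpr hpos
  refine le_min ?_ ?_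
  · refine ContinuousLinearMap.opNorm_le_of_unit_norm (by positivity) fun y hy => ?_
    rw [le_div_iff₀ hs, mul_comm]
    exact bs_first n P hP hPnorm x hx.le y hy.le
  · refine ContinuousLinearMap.opNorm_le_of_unit_norm (by positivity) fun y hy => ?_
    exact bs_second n P hP hPnorm x hx.le y hy.le
end

section
/- Let X be a real Banach space and let L̂ : X → ℝ be a continuous m-homogeneous polynomial. Then for every k ≤ m and every x ∈ X with ‖x‖ < 1, ‖D̂^k L̂(x)‖ ≤ C(m,k) · k! · (1−‖x‖²)^{−k/2} · ‖L̂‖, where C(m,k) is the binomial coefficient m choose k. -/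
open Metric

lemma bern_bil {E : Type*} [NormedAddCommGroup E] [InnerProductSpace ℝ E]
    (g : E → E → ℝ) (hadd : ∀ a b c, g (a + b) c = g a c + g b c)
    (hsmul : ∀ (t : ℝ) a c, g (t • a) c = t * g a c) (hsym : ∀ a b, g a b = g b a)
    (M : ℝ) (hM : ∀ a b, ‖a‖ = 1 → ‖b‖ = 1 → |g a b| ≤ M)
    (u v : E) (hu : ‖u‖ = 1) (hv : ‖v‖ = 1) (h : |g u v| = M) (hne : u + v ≠ 0) :
    |g (‖u + v‖⁻¹ • (u + v)) (‖u + v‖⁻¹ • (u + v))| = M := by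
  have hss : ∀ (t : ℝ) a, g (t • a) (t • a) = t ^ 2 * g a a := by
    intro t a
    rw [hsmul, hsym, hsmul]; ring
  have hq : ∀ a, |g a a| ≤ M * ‖a‖ ^ 2 := by
    intro a
    by_cases ha : a = 0
    · subst ha
      have := hss 0 0
      simp at this
      simp [this]
    · have hn : 0 < ‖a‖ := norm_pos_iff.2 ha
      have h1 : ‖(‖a‖⁻¹ • a)‖ = 1 := by
        rw [norm_smul, norm_inv, norm_norm, inv_mul_cancel₀ hn.ne']
      have h2 := hM _ _ h1 h1
      rw [hss, abs_mul, abs_of_nonneg (by positivity)] at h2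
      have h3 : |g a a| = ‖a‖ ^ 2 * (‖a‖⁻¹ ^ 2 * |g a a|) := by
        field_simp
      rw [h3, mul_comm M]
      exact mul_le_mul_of_nonneg_left h2 (by positivity)
  have hadd' : ∀ a b c, g c (a + b) = g c a + g c b := by
    intro a b c
    rw [hsym, hadd, hsym a, hsym b]
  have hneg : ∀ a c, g (-a) c = - g a c := by
    intro a c
    have := hsmul (-1) a c
    simpa using this
  have hneg' : ∀ a c, g c (-a) = - g c a := by
    intro a c
    rw [hsym, hneg, hsym]
  have e1 : g (u + v) (u + v) - g (u - v) (u - v) = 4 * g u v := by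
    simp only [sub_eq_add_neg, hadd, hadd', hneg, hneg', hsym v u]
    ring
  have hp : ‖u + v‖ ^ 2 + ‖u - v‖ ^ 2 = 4 := by
    have := parallelogram_law_with_norm ℝ u v
    rw [hu, hv] at this
    nlinarith
  have hs := hq (u + v)
  have hd := hq (u - v)
  have hn : 0 < ‖u + v‖ := norm_pos_iff.2 hne
  have key : |g (u + v) (u + v)| = M * ‖u + v‖ ^ 2 := by
    apply le_antisymm hs
    have h4 : 4 * M ≤ |g (u + v) (u + v)| + |g (u - v) (u - v)| := by
      rw [← h]
      calc 4 * |g u v| = |g (u + v) (u + v) - g (u - v) (u - v)| := by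
            rw [e1, abs_mul]; norm_num
        _ ≤ _ := abs_sub _ _
    have : M * ‖u + v‖ ^ 2 = 4 * M - M * ‖u - v‖ ^ 2 := by rw [← hp]; ring
    linarith
  rw [hss, abs_mul, key, abs_of_nonneg (by positivity)]
  field_simp

/-- Banach's theorem on symmetric multilinear forms on Euclidean spaces. -/
lemma bern_banach {E : Type*} [NormedAddCommGroup E] [InnerProductSpace ℝ E] [ProperSpace E]
    (m : ℕ) (L : ContinuousMultilinearMap ℝ (fun _ : Fin m => E) ℝ)
    (hsym : ∀ (σ : Equiv.Perm (Fin m)) (v : Fin m → E), L (v ∘ σ) = L v)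
    (N : ℝ) (hN : ∀ u : E, ‖u‖ = 1 → |L (fun _ => u)| ≤ N)
    (w : Fin m → E) (hw : ∀ i, ‖w i‖ = 1) (hE : ∃ e : E, ‖e‖ = 1) : |L w| ≤ N := by
  classical
  set S : Set (Fin m → E) := Set.pi Set.univ (fun _ => sphere (0 : E) 1) with hS
  have hSc : IsCompact S := isCompact_univ_pi (fun _ => isCompact_sphere _ _)
  have hmem : ∀ v : Fin m → E, v ∈ S ↔ ∀ i, ‖v i‖ = 1 := by
    intro v; simp [hS, Set.mem_pi]
  have hLc : Continuous (fun v : Fin m → E => |L v|) := L.cont.abs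
  obtain ⟨v0, hv0, hmax⟩ := hSc.exists_isMaxOn ⟨w, (hmem w).2 hw⟩ hLc.continuousOn
  set M := |L v0| with hMdef
  have hM : ∀ v : Fin m → E, (∀ i, ‖v i‖ = 1) → |L v| ≤ M := fun v hv => hmax ((hmem v).2 hv)
  have hKc : IsCompact (S ∩ {v | |L v| = M}) :=
    hSc.inter_right (isClosed_eq hLc continuous_const)
  have hfc : Continuous (fun v : Fin m → E => ‖∑ i, v i‖) := by fun_prop
  obtain ⟨v, ⟨hvS, hvM⟩, hvmax⟩ := hKc.exists_isMaxOn ⟨v0, hv0, rfl⟩ hfc.continuousOn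
  rw [hmem] at hvS
  have hvM' : |L v| = M := hvM
  have hf : ∀ z : Fin m → E, (∀ i, ‖z i‖ = 1) → |L z| = M → ‖∑ i, z i‖ ≤ ‖∑ i, v i‖ :=
    fun z hz hz' => hvmax ⟨(hmem z).2 hz, hz'⟩
  refine (hM w hw).trans ?_
  -- all entries equal
  have heq : ∀ i j, v i = v j := by
    intro i j
    by_contra hij
    have hne : i ≠ j := fun h => hij (by rw [h])
    let T : E → E → (Fin m → E) := fun a b => Function.update (Function.update v i a) j b
    have hTv : T (v i) (v j) = v := by simp [T]
    have hTn : ∀ a b, ‖a‖ = 1 → ‖b‖ = 1 → ∀ l, ‖T a b l‖ = 1 := by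
      intro a b ha hb l
      simp only [T, Function.update_apply]
      split_ifs <;> simp [ha, hb, hvS]
    obtain ⟨R, hR⟩ : ∃ R, ∀ a b, ∑ l, T a b l = a + b + R := by
      refine ⟨∑ l ∈ (Finset.univ.erase j).erase i, v l, fun a b => ?_⟩
      rw [← Finset.add_sum_erase _ _ (Finset.mem_univ j),
        ← Finset.add_sum_erase _ _ (Finset.mem_erase.2 ⟨hne, Finset.mem_univ i⟩)]
      have : ∑ l ∈ (Finset.univ.erase j).erase i, T a b l
          = ∑ l ∈ (Finset.univ.erase j).erase i, v l := by
        apply Finset.sum_congr rfl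
        intro l hl
        simp only [Finset.mem_erase] at hl
        simp [T, Function.update_apply, hl.1, hl.2.1]
      rw [this]
      simp [T, hne]
      abel
    let g : E → E → ℝ := fun a b => L (T a b)
    have hTc : ∀ a b, T a b = Function.update (Function.update v j b) i a := by
      intro a b
      exact Function.update_comm hne _ _ _
    have gsym : ∀ a b, g a b = g b a := by
      intro a b
      have : T a b = T b a ∘ Equiv.swap i j := by
        funext l
        simp only [T, Function.comp, Function.update_apply]
        by_cases h1 : l = i
        · subst h1; simp [hne]
        · by_cases h2 : l = j
          · subst h2; simp [h1, hne]
          · simp [Equiv.swap_apply_of_ne_of_ne h1 h2, h1, h2]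
      simp only [g]
      rw [this, hsym]
    have gadd : ∀ a b c, g (a + b) c = g a c + g b c := by
      intro a b c
      simp only [g, hTc]
      exact L.map_update_add _ _ _ _
    have gsmul : ∀ (t : ℝ) a c, g (t • a) c = t * g a c := by
      intro t a c
      simp only [g, hTc]
      exact L.map_update_smul _ _ _ _
    have gM : ∀ a b, ‖a‖ = 1 → ‖b‖ = 1 → |g a b| ≤ M := fun a b ha hb => hM _ (hTn a b ha hb)
    have gv : |g (v i) (v j)| = M := by simp only [g, hTv, hvM']
    have gneg : ∀ a c, g (-a) c = - g a c := by
      intro a c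
      have := gsmul (-1) a c
      simpa using this
    have gneg' : ∀ a c, g c (-a) = - g c a := by
      intro a c
      rw [gsym, gneg, gsym]
    have hfs : ∀ a b, ‖a‖ = 1 → ‖b‖ = 1 → |g a b| = M →
        ‖a + b + R‖ ^ 2 ≤ ‖v i + v j + R‖ ^ 2 := by
      intro a b ha hb hab
      have h1 := hf _ (hTn a b ha hb) hab
      have h2 := hR (v i) (v j)
      rw [hTv] at h2
      rw [hR, h2] at h1
      gcongr
    have hi := hvS i
    have hj := hvS j
    by_cases h0 : v i + v j = 0
    · have hji : v j = - v i := by rw [eq_neg_iff_add_eq_zero, add_comm, h0]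
      have h1 := hfs (v i) (-(v j)) hi (by rw [norm_neg, hj]) (by rw [gneg', abs_neg, gv])
      have h2 := hfs (-(v i)) (v j) (by rw [norm_neg, hi]) hj (by rw [gneg, abs_neg, gv])
      rw [h0, hji, zero_add] at h1 h2
      rw [neg_neg, ← two_smul ℝ, norm_add_sq_real, norm_smul, inner_smul_left, hi] at h1
      rw [← two_smul ℝ, norm_add_sq_real, norm_smul, inner_smul_left, norm_neg, hi,
        inner_neg_left] at h2
      norm_num at h1 h2
      linarith
    · have h1 := hfs (-(v i)) (-(v j)) (by rw [norm_neg, hi]) (by rw [norm_neg, hj])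
        (by rw [gneg, gneg', neg_neg, gv])
      have hb := bern_bil g gadd gsmul gsym M gM _ _ hi hj gv h0
      have hn : 0 < ‖v i + v j‖ := norm_pos_iff.2 h0
      have hn1 : ‖(‖v i + v j‖⁻¹ • (v i + v j))‖ = 1 := by
        rw [norm_smul, norm_inv, norm_norm, inv_mul_cancel₀ hn.ne']
      have h2 := hfs _ _ hn1 hn1 hb
      rw [← neg_add, norm_add_sq_real, norm_add_sq_real, norm_neg, inner_neg_left] at h1
      rw [← two_smul ℝ, norm_add_sq_real, norm_add_sq_real, norm_smul, hn1, inner_smul_left,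
        inner_smul_left] at h2
      have hlt : ‖v i + v j‖ < 2 := by
        have hpar := parallelogram_law_with_norm ℝ (v i) (v j)
        rw [hi, hj] at hpar
        have : 0 < ‖v i - v j‖ := norm_pos_iff.2 (sub_ne_zero.2 hij)
        nlinarith
      simp only [RCLike.conj_to_real] at h2
      norm_num at h2
      set n := ‖v i + v j‖
      set r := inner ℝ (v i + v j) R
      have hr : 0 ≤ r := by linarith
      have h3 : r ≤ 2 * (n⁻¹ * r) := by
        have : 1 ≤ 2 * n⁻¹ := by
          rw [← div_eq_mul_inv, le_div_iff₀ hn]; linarith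
        nlinarith
      nlinarith
  obtain ⟨e, he⟩ : ∃ e : E, ‖e‖ = 1 ∧ v = fun _ => e := by
    rcases Nat.eq_zero_or_pos m with rfl | hm
    · obtain ⟨e, he⟩ := hE
      exact ⟨e, he, funext fun i => i.elim0⟩
    · exact ⟨v ⟨0, hm⟩, hvS _, funext fun i => heq _ _⟩
  rw [← hvM', he.2]
  exact hN e he.1

lemma bern_mix {X : Type*} [NormedAddCommGroup X] [NormedSpace ℝ X]
    (m k : ℕ) (L : ContinuousMultilinearMap ℝ (fun _ : Fin m => X) ℝ)
    (hsym : ∀ (σ : Equiv.Perm (Fin m)) (v : Fin m → X), L (v ∘ σ) = L v)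
    (N : ℝ) (hN : ∀ u : X, ‖u‖ ≤ 1 → |L (fun _ => u)| ≤ N)
    (x y : X) (hx : ‖x‖ < 1) (hy : ‖y‖ ≤ 1) (s : Finset (Fin m)) (hs : s.card = k) :
    |L (fun j => if j ∈ s then y else x)| ≤ (1 - ‖x‖ ^ 2) ^ (-(k : ℝ) / 2) * N := by
  have hpos : 0 < 1 - ‖x‖ ^ 2 := by nlinarith [norm_nonneg x]
  set c := Real.sqrt (1 - ‖x‖ ^ 2) with hc
  have hc0 : 0 < c := Real.sqrt_pos.2 hpos
  have hc2 : c ^ 2 = 1 - ‖x‖ ^ 2 := Real.sq_sqrt hpos.le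
  let A : ℂ →L[ℝ] X := Complex.reCLM.smulRight x + Complex.imCLM.smulRight (c • y)
  have hA : ∀ z : ℂ, A z = z.re • x + z.im • (c • y) := fun z => rfl
  have hAn : ∀ z : ℂ, ‖z‖ = 1 → ‖A z‖ ≤ 1 := by
    intro z hz
    have hz2 : z.re ^ 2 + z.im ^ 2 = 1 := by
      have := Complex.sq_norm z
      rw [hz, Complex.normSq_apply] at this
      nlinarith
    have h1 : ‖A z‖ ≤ |z.re| * ‖x‖ + |z.im| * c := by
      rw [hA]
      refine (norm_add_le _ _).trans ?_
      rw [norm_smul, norm_smul, norm_smul, Real.norm_eq_abs, Real.norm_eq_abs, Real.norm_eq_abs,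
        abs_of_pos hc0]
      gcongr
      nlinarith
    refine h1.trans ?_
    rw [← sq_abs z.re, ← sq_abs z.im] at hz2
    nlinarith [sq_nonneg (|z.re| - ‖x‖), sq_nonneg (|z.im| - c)]
  have hb := bern_banach (E := ℂ) m (L.compContinuousLinearMap (fun _ => A))
    (fun σ v => hsym σ (fun i => A (v i))) N (fun u hu => hN _ (hAn u hu))
    (fun j => if j ∈ s then Complex.I else 1) (fun i => by split_ifs <;> simp)
    ⟨1, by simp⟩
  have hL : (L.compContinuousLinearMap (fun _ => A)) (fun j => if j ∈ s then Complex.I else 1)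
      = c ^ k * L (fun j => if j ∈ s then y else x) := by
    have : (fun j : Fin m => A (if j ∈ s then Complex.I else 1))
        = s.piecewise (fun j => c • (if j ∈ s then y else x)) (fun j => if j ∈ s then y else x) := by
      funext j
      by_cases hj : j ∈ s <;> simp [hj, hA]
    rw [ContinuousMultilinearMap.compContinuousLinearMap_apply, this]
    have := L.toMultilinearMap.map_piecewise_smul (fun _ => c)
      (fun j => if j ∈ s then y else x) s
    simp only [Finset.prod_const, hs] at this
    exact this
  rw [hL, abs_mul, abs_of_pos (pow_pos hc0 k)] at hb
  have hck : (1 - ‖x‖ ^ 2) ^ (-(k : ℝ) / 2) = (c ^ k)⁻¹ := by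
    rw [neg_div, Real.rpow_neg hpos.le, hc, Real.sqrt_eq_rpow, ← Real.rpow_natCast _ k,
      ← Real.rpow_mul hpos.le]
    congr 2; ring
  rw [hck, inv_mul_eq_div, le_div_iff₀ (pow_pos hc0 k)]
  linarith

/-- Bernstein-type inequality for an `m`-homogeneous polynomial `L̂` on a real Banach
space: for `k ≤ m` and `‖x‖ < 1`, `‖D̂^k L̂(x)‖ ≤ (m choose k) k! (1-‖x‖²)^(-k/2) ‖L̂‖`. -/
theorem bernstein_homogeneous_hat_banach
    {X : Type*} [NormedAddCommGroup X] [NormedSpace ℝ X] [CompleteSpace X]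
    (m k : ℕ) (hk : k ≤ m) (F : X → ℝ)
    (hF : ∃ L : ContinuousMultilinearMap ℝ (fun _ : Fin m => X) ℝ,
      (∀ (σ : Equiv.Perm (Fin m)) (v : Fin m → X), L (v ∘ σ) = L v) ∧
      ∀ u, F u = L (fun _ => u))
    (x : X) (hx : ‖x‖ < 1) :
    sSup ((fun y => ‖iteratedFDeriv ℝ k F x (fun _ => y)‖) '' closedBall (0 : X) 1)
      ≤ (m.choose k : ℝ) * (k.factorial : ℝ) * (1 - ‖x‖ ^ 2) ^ (-(k : ℝ) / 2)
          * sSup ((fun y => ‖F y‖) '' closedBall (0 : X) 1) := by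
  classical
  obtain ⟨L, hsym, hFL⟩ := hF
  set N := sSup ((fun y => ‖F y‖) '' closedBall (0 : X) 1) with hNdef
  have hbdd : BddAbove ((fun y => ‖F y‖) '' closedBall (0 : X) 1) := by
    refine ⟨‖L‖, ?_⟩
    rintro _ ⟨u, hu, rfl⟩
    have hu' : ‖u‖ ≤ 1 := by simpa using hu
    simp only [hFL]
    refine (L.le_opNorm _).trans ?_
    refine mul_le_of_le_one_right (norm_nonneg _) ?_
    exact Finset.prod_le_one (fun _ _ => norm_nonneg _) (fun _ _ => hu')
  have hN : ∀ u : X, ‖u‖ ≤ 1 → |L (fun _ => u)| ≤ N := by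
    intro u hu
    have := le_csSup hbdd (Set.mem_image_of_mem (fun y => ‖F y‖)
      (show u ∈ closedBall (0 : X) 1 by simpa using hu))
    rw [← hFL, ← Real.norm_eq_abs]
    exact this
  apply csSup_le ((nonempty_closedBall.2 zero_le_one).image _)
  rintro _ ⟨y, hy, rfl⟩
  have hy' : ‖y‖ ≤ 1 := by simpa using hy
  let g : X →L[ℝ] (Fin m → X) := ContinuousLinearMap.pi (fun i ↦ ContinuousLinearMap.id ℝ X)
  have hFg : F = L ∘ g := by
    funext u; rw [hFL]; rfl
  have hD : iteratedFDeriv ℝ k F x (fun _ => y)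
      = ∑ e : Fin k ↪ Fin m, L (fun j => if j ∈ Finset.univ.map e then y else x) := by
    rw [hFg, ContinuousLinearMap.iteratedFDeriv_comp_right _ L.contDiff _ le_rfl,
      L.iteratedFDeriv_eq]
    simp only [ContinuousMultilinearMap.iteratedFDeriv,
      ContinuousMultilinearMap.compContinuousLinearMap_apply, sum_apply,
      ContinuousMultilinearMap.iteratedFDerivComponent_apply, Set.mem_range, Pi.compRightL_apply]
    refine Finset.sum_congr rfl fun e _ => ?_
    congr 1
    funext j
    simp [g]
  dsimp only
  rw [hD]
  refine (norm_sum_le _ _).trans ?_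
  refine (Finset.sum_le_card_nsmul _ _ _ (fun e _ =>
    bern_mix m k L hsym N hN x y hx hy' (Finset.univ.map e) (by simp))).trans ?_
  rw [Finset.card_univ, Fintype.card_embedding_eq, Fintype.card_fin, Fintype.card_fin,
    Nat.descFactorial_eq_factorial_mul_choose, nsmul_eq_mul]
  push_cast
  exact le_of_eq (by ring)
end

section
/- Let X be a real Banach space and let L̂ : X → ℝ be a continuous m-homogeneous polynomial. Then for every k ≤ m and every x ∈ X with ‖x‖ < 1, the k-th Fréchet derivative satisfies ‖D^k L̂(x)‖ ≤ C(m,k) · k^k · (1−‖x‖²)^{−k/2} · ‖L̂‖, where C(m,k) is the binomial coefficient m choose k. -/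
open Metric

lemma bh_polar_identity {X : Type*} [AddCommGroup X] [Module ℝ X] (k : ℕ)
    (D : MultilinearMap ℝ (fun _ : Fin k => X) ℝ)
    (hD : ∀ (σ : Equiv.Perm (Fin k)) (v : Fin k → X), D (v ∘ σ) = D v) (y : Fin k → X) :
    ∑ s : Fin k → ℤˣ, (∏ i, (((s i : ℤ) : ℝ))) * D (fun _ => ∑ j, ((s j : ℤ) : ℝ) • y j)
      = 2 ^ k * (k.factorial : ℝ) * D y := by
  classical
  have h1 : ∀ s : Fin k → ℤˣ, D (fun _ => ∑ j, ((s j : ℤ) : ℝ) • y j)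
      = ∑ r : Fin k → Fin k, (∏ i, (((s (r i) : ℤ) : ℝ))) * D (y ∘ r) := by
    intro s
    rw [D.map_sum (fun _ j => ((s j : ℤ) : ℝ) • y j)]
    refine Finset.sum_congr rfl fun r _ => ?_
    rw [D.map_smul_univ (fun i => ((s (r i) : ℤ) : ℝ)) (fun i => y (r i))]
    rfl
  simp_rw [h1, Finset.mul_sum]
  rw [Finset.sum_comm]
  have h2 : ∀ r : Fin k → Fin k,
      ∑ s : Fin k → ℤˣ, (∏ i, (((s i : ℤ) : ℝ))) * ((∏ i, (((s (r i) : ℤ) : ℝ))) * D (y ∘ r))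
        = if Function.Bijective r then 2 ^ k * D y else 0 := by
    intro r
    split_ifs with hr
    · have h3 : ∀ s : Fin k → ℤˣ,
          (∏ i, (((s i : ℤ) : ℝ))) * ((∏ i, (((s (r i) : ℤ) : ℝ))) * D (y ∘ r)) = D y := by
        intro s
        have e1 : ∏ i, (((s (r i) : ℤ) : ℝ)) = ∏ i, (((s i : ℤ) : ℝ)) :=
          (Equiv.ofBijective r hr).prod_comp (fun i => ((s i : ℤ) : ℝ))
        have e2 : D (y ∘ r) = D y := hD (Equiv.ofBijective r hr) y
        rw [e1, e2, ← mul_assoc, ← Finset.prod_mul_distrib]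
        have : ∀ i, ((s i : ℤ) : ℝ) * ((s i : ℤ) : ℝ) = 1 := by
          intro i
          rcases Int.units_eq_one_or (s i) with h | h <;> simp [h]
        simp [this]
      rw [Finset.sum_congr rfl (fun s _ => h3 s)]
      simp
    · have hr' : ¬ Function.Surjective r := fun h => hr (Finite.surjective_iff_bijective.mp h)
      rw [Function.Surjective] at hr'
      push Not at hr'
      obtain ⟨j, hj⟩ := hr'
      set t : Fin k → ℤˣ := Pi.mulSingle j (-1) with ht
      have key := Equiv.sum_comp (Equiv.mulRight t) (fun s : Fin k → ℤˣ =>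
        (∏ i, (((s i : ℤ) : ℝ))) * ((∏ i, (((s (r i) : ℤ) : ℝ))) * D (y ∘ r)))
      have h4 : ∀ s : Fin k → ℤˣ, ∏ i, ((((s * t) i : ℤˣ) : ℤ) : ℝ) = - ∏ i, (((s i : ℤ) : ℝ)) := by
        intro s
        have : ∏ i, (((t i : ℤ) : ℝ)) = -1 := by
          rw [Finset.prod_eq_single j]
          · simp [ht]
          · intro b _ hb; simp [ht, Pi.mulSingle_eq_of_ne hb]
          · simp
        simp only [Pi.mul_apply, Units.val_mul, Int.cast_mul, Finset.prod_mul_distrib, this]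
        ring
      have h5 : ∀ s : Fin k → ℤˣ, ∀ i, (s * t) (r i) = s (r i) := by
        intro s i
        simp [ht, Pi.mulSingle_eq_of_ne (hj i)]
      simp only [Equiv.coe_mulRight, h4, h5, neg_mul, Finset.sum_neg_distrib] at key
      linarith
  rw [Finset.sum_congr rfl (fun r _ => h2 r), ← Finset.sum_filter, Finset.sum_const]
  have hc : (Finset.univ.filter (fun r : Fin k → Fin k => Function.Bijective r)).card
      = k.factorial := by
    rw [← Fintype.card_subtype,
      Fintype.card_congr (Equiv.ofBijective (fun σ : Equiv.Perm (Fin k) =>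
        (⟨σ, σ.bijective⟩ : {r : Fin k → Fin k // Function.Bijective r}))
        ⟨fun a b h => by
          apply Equiv.ext
          intro i
          exact congrFun (congrArg Subtype.val h) i,
         fun r => ⟨Equiv.ofBijective r.1 r.2, rfl⟩⟩).symm, Fintype.card_perm, Fintype.card_fin]
  rw [hc, nsmul_eq_mul]
  ring

lemma bh_polar_bound {X : Type*} [NormedAddCommGroup X] [NormedSpace ℝ X] (k : ℕ)
    (D : ContinuousMultilinearMap ℝ (fun _ : Fin k => X) ℝ)
    (hD : ∀ (σ : Equiv.Perm (Fin k)) (v : Fin k → X), D (v ∘ σ) = D v)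
    (c : ℝ) (hc : 0 ≤ c) (hb : ∀ z : X, ‖z‖ ≤ 1 → |D (fun _ => z)| ≤ c) :
    ‖D‖ ≤ c * ((k : ℝ) ^ k / k.factorial) := by
  have hfac : (0 : ℝ) < k.factorial := by exact_mod_cast k.factorial_pos
  -- diagonal bound for arbitrary vectors of norm at most `k`
  have hdiag : ∀ z : X, ‖z‖ ≤ k → |D (fun _ => z)| ≤ c * (k : ℝ) ^ k := by
    intro z hz
    rcases Nat.eq_zero_or_pos k with h0 | h0
    · have := hb 0 (by simp)
      subst h0
      have e : (fun _ : Fin 0 => z) = fun _ => 0 := Subsingleton.elim _ _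
      rw [e]; simpa using this
    · have hk : (0 : ℝ) < k := by exact_mod_cast h0
      have e : (fun _ : Fin k => z) = fun i => ((fun _ => (k : ℝ)) i) • ((k : ℝ)⁻¹ • z) := by
        funext i; simp [smul_smul, hk.ne']
      rw [e, D.map_smul_univ (fun _ => (k : ℝ)) (fun _ => (k : ℝ)⁻¹ • z)]
      simp only [Finset.prod_const, Finset.card_univ, Fintype.card_fin, smul_eq_mul, abs_mul,
        abs_pow, Nat.abs_cast]
      rw [mul_comm]
      gcongr
      apply hb
      rw [norm_smul, norm_inv, Real.norm_of_nonneg hk.le, inv_mul_le_iff₀ hk]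
      simpa using hz
  have hunit : ∀ y : Fin k → X, (∀ i, ‖y i‖ ≤ 1) → |D y| ≤ c * ((k : ℝ) ^ k / k.factorial) := by
    intro y hy
    have id := bh_polar_identity k D.toMultilinearMap hD y
    simp only [ContinuousMultilinearMap.coe_coe] at id
    have habs : ∀ u : ℤˣ, |((u : ℤ) : ℝ)| = 1 := by
      intro u
      rcases Int.units_eq_one_or u with h | h <;> simp [h]
    have hle : |2 ^ k * (k.factorial : ℝ) * D y| ≤ 2 ^ k * (c * (k : ℝ) ^ k) := by
      rw [← id]
      refine (Finset.abs_sum_le_sum_abs _ _).trans ?_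
      have : ∀ s ∈ (Finset.univ : Finset (Fin k → ℤˣ)),
          |(∏ i, (((s i : ℤ) : ℝ))) * D (fun _ => ∑ j, ((s j : ℤ) : ℝ) • y j)|
            ≤ c * (k : ℝ) ^ k := by
        intro s _
        rw [abs_mul, Finset.abs_prod]
        simp only [habs, Finset.prod_const_one, one_mul]
        apply hdiag
        refine (norm_sum_le _ _).trans ?_
        calc ∑ j, ‖((s j : ℤ) : ℝ) • y j‖ ≤ ∑ j : Fin k, (1 : ℝ) := by
              refine Finset.sum_le_sum fun j _ => ?_
              rw [norm_smul, Real.norm_eq_abs, habs, one_mul]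
              exact hy j
          _ = k := by simp
      refine (Finset.sum_le_sum this).trans ?_
      simp
    rw [abs_mul, abs_of_pos (by positivity), mul_assoc] at hle
    have h2 := le_of_mul_le_mul_left hle (by positivity)
    rw [← mul_div_assoc, le_div_iff₀ hfac]
    linarith
  refine D.opNorm_le_bound (by positivity) fun y => ?_
  have e : y = fun i => ‖y i‖ • (‖y i‖⁻¹ • y i) := by
    funext i
    by_cases h : y i = 0
    · simp [h]
    · rw [smul_smul, mul_inv_cancel₀ (norm_ne_zero_iff.mpr h), one_smul]
  conv_lhs => rw [e]
  rw [D.map_smul_univ, norm_smul, mul_comm, Real.norm_eq_abs, norm_prod]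
  simp only [norm_norm]
  refine mul_le_mul_of_nonneg_right (hunit _ fun i => ?_) (by positivity)
  rw [norm_smul, norm_inv, norm_norm]
  exact inv_mul_le_one

lemma bh_coef_zero (M b : ℝ) (h : ∀ t : ℝ, Real.cos t * M + Real.sin t * b ≤ M) : b = 0 := by
  have hd : HasDerivAt (fun t : ℝ => Real.cos t * M + Real.sin t * b)
      (-Real.sin 0 * M + Real.cos 0 * b) 0 :=
    ((Real.hasDerivAt_cos 0).mul_const M).add ((Real.hasDerivAt_sin 0).mul_const b)
  have hm : IsLocalMax (fun t : ℝ => Real.cos t * M + Real.sin t * b) 0 := by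
    refine Filter.Eventually.of_forall fun t => ?_
    simpa using h t
  have := hm.hasDerivAt_eq_zero hd
  simpa using this

lemma bh_two_var (h : ℝ → ℝ → ℝ) (δ : ℝ)
    (H1 : ∀ s t, h s t = Real.cos t * h s 0 + Real.sin t * h s (Real.pi / 2))
    (H2 : ∀ s t, h s t = Real.cos s * h 0 t + Real.sin s * h (Real.pi / 2) t)
    (hs : h 0 0 = h (-δ) δ) (hmax : ∀ s t, h s t ≤ h 0 0) (hδ : Real.sin δ ≠ 0) (s : ℝ) :
    h s (-s) = h 0 0 := by
  have hb : h 0 (Real.pi / 2) = 0 := by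
    apply bh_coef_zero (h 0 0)
    intro t
    rw [← H1]; exact hmax _ _
  have hc : h (Real.pi / 2) 0 = 0 := by
    apply bh_coef_zero (h 0 0)
    intro t
    rw [← H2]; exact hmax _ _
  have hf : ∀ s t, h s t = Real.cos s * Real.cos t * h 0 0
      + Real.sin s * Real.sin t * h (Real.pi / 2) (Real.pi / 2) := by
    intro s t
    rw [H1 s t, H2 s 0, H2 s (Real.pi / 2), hb, hc]
    ring
  have h3 := hf (-δ) δ
  rw [← hs, Real.cos_neg, Real.sin_neg] at h3
  have h4 : Real.sin δ ^ 2 * (h 0 0 + h (Real.pi / 2) (Real.pi / 2)) = 0 := by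
    linear_combination h3 + h 0 0 * (Real.sin_sq_add_cos_sq δ)
  have h5 : h 0 0 + h (Real.pi / 2) (Real.pi / 2) = 0 := by
    rcases mul_eq_zero.mp h4 with h | h
    · exact absurd (pow_eq_zero_iff (two_ne_zero) |>.mp h) hδ
    · exact h
  rw [hf s (-s), Real.cos_neg, Real.sin_neg]
  linear_combination h 0 0 * (Real.sin_sq_add_cos_sq s) - Real.sin s ^ 2 * h5

lemma bh_trig {X : Type*} [NormedAddCommGroup X] [NormedSpace ℝ X] (m : ℕ)
    (L : ContinuousMultilinearMap ℝ (fun _ : Fin m => X) ℝ)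
    (hL : ∀ (σ : Equiv.Perm (Fin m)) (v : Fin m → X), L (v ∘ σ) = L v)
    (u v : X) (K : ℝ)
    (hK : ∀ t : ℝ, |L (fun _ => Real.cos t • u + Real.sin t • v)| ≤ K) (θ : Fin m → ℝ) :
    L (fun i => Real.cos (θ i) • u + Real.sin (θ i) • v) ≤ K := by
  classical
  rcases Nat.eq_zero_or_pos m with h0 | h0
  · subst h0
    have e : (fun i => Real.cos (θ i) • u + Real.sin (θ i) • v)
      = fun _ => Real.cos 0 • u + Real.sin 0 • v := Subsingleton.elim _ _
    rw [e]
    exact (le_abs_self _).trans (hK 0)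
  set w : ℝ → X := fun t => Real.cos t • u + Real.sin t • v with hw
  set g : (Fin m → ℝ) → ℝ := fun θ => L (fun i => w (θ i)) with hg
  have hwc : Continuous w := by
    simp only [hw]; fun_prop
  have hgc : Continuous g := by
    simp only [hg]
    exact L.cont.comp (continuous_pi fun i => hwc.comp (continuous_apply i))
  have hwadd : ∀ a t, w (a + t) = Real.cos t • w a + Real.sin t • w (a + Real.pi / 2) := by
    intro a t
    simp only [hw, Real.cos_add, Real.sin_add, Real.cos_pi_div_two, Real.sin_pi_div_two]
    module
  have hupd : ∀ (θ : Fin m → ℝ) i a, g (Function.update θ i a)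
      = L (Function.update (fun i => w (θ i)) i (w a)) := by
    intro θ i a
    simp only [hg]
    congr 1
    funext l
    by_cases hl : l = i
    · subst hl; simp
    · simp [hl]
  have P1 : ∀ (θ : Fin m → ℝ) i a t, g (Function.update θ i (a + t))
      = Real.cos t * g (Function.update θ i a)
        + Real.sin t * g (Function.update θ i (a + Real.pi / 2)) := by
    intro θ i a t
    rw [hupd, hupd, hupd, hwadd, L.map_update_add, L.map_update_smul, L.map_update_smul]
    rfl
  have P2 : ∀ (σ : Equiv.Perm (Fin m)) (θ : Fin m → ℝ), g (θ ∘ σ) = g θ := by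
    intro σ θ
    exact hL σ (fun i => w (θ i))
  set box : Set (Fin m → ℝ) := Set.Icc (fun _ => -Real.pi) (fun _ => Real.pi) with hbox
  have hcomp : IsCompact box := isCompact_Icc
  have hne : box.Nonempty := ⟨fun _ => 0, fun _ => by simp [Real.pi_pos.le],
    fun _ => by simp [Real.pi_pos.le]⟩
  obtain ⟨φ, hφ, hφmax⟩ := hcomp.exists_isMaxOn hne hgc.continuousOn
  have hmax : ∀ θ, g θ ≤ g φ := by
    intro θ
    have : g θ = g (fun i => ((θ i : ℝ) : Real.Angle).toReal) := by
      simp only [hg, hw, Real.Angle.cos_toReal, Real.Angle.sin_toReal, Real.Angle.cos_coe,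
        Real.Angle.sin_coe]
    rw [this]
    exact hφmax ⟨fun i => (Real.Angle.neg_pi_lt_toReal _).le, fun i => Real.Angle.toReal_le_pi _⟩
  have hcompS : IsCompact (box ∩ {θ | g θ = g φ}) :=
    hcomp.inter_right (isClosed_eq hgc continuous_const)
  have hsqc : Continuous (fun θ : Fin m → ℝ => ∑ i, θ i ^ 2) := by fun_prop
  obtain ⟨ψ, ⟨hψb, hψe⟩, hψmin⟩ := hcompS.exists_isMinOn ⟨φ, hφ, rfl⟩ hsqc.continuousOn
  have hψe' : g ψ = g φ := hψe
  have hsin : ∀ i j, Real.sin (ψ i - ψ j) = 0 := by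
    intro i j
    by_contra hs
    have hij : i ≠ j := by
      rintro rfl; simp at hs
    have hji := hij.symm
    let h : ℝ → ℝ → ℝ := fun s t =>
      g (Function.update (Function.update ψ i (ψ i + s)) j (ψ j + t))
    have h00 : h 0 0 = g ψ := by simp [h]
    have key := bh_two_var h (ψ i - ψ j)
      (by
        intro s t
        simp only [h, add_zero]
        exact P1 _ j (ψ j) t)
      (by
        intro s t
        simp only [h, add_zero]
        simp only [Function.update_comm hij]
        exact P1 _ i (ψ i) s)
      (by
        rw [h00, ← P2 (Equiv.swap i j) ψ]
        simp only [h]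
        congr 1
        funext l
        by_cases hl : l = i
        · subst hl; simp [hij]
        · by_cases hl' : l = j
          · subst hl'; simp
          · simp [hl, hl', Equiv.swap_apply_of_ne_of_ne hl hl'])
      (by
        intro s t
        rw [h00, hψe']
        exact hmax _) hs ((ψ j - ψ i) / 2)
    rw [h00] at key
    set χ := Function.update (Function.update ψ i ((ψ i + ψ j) / 2)) j ((ψ i + ψ j) / 2) with hχ
    have hkey : g χ = g ψ := by
      rw [← key]
      simp only [h, hχ]
      congr 3 <;> ring
    have hχi : χ i = (ψ i + ψ j) / 2 := by simp [hχ, hij]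
    have hχj : χ j = (ψ i + ψ j) / 2 := by simp [hχ]
    have hχl : ∀ l, l ≠ i → l ≠ j → χ l = ψ l := by
      intro l h1 h2; simp [hχ, h1, h2]
    have hχb : χ ∈ box := by
      constructor
      · intro l
        have a1 := hψb.1 l
        have a2 := hψb.1 i
        have a3 := hψb.1 j
        simp only at a1 a2 a3 ⊢
        by_cases h1 : l = i
        · rw [h1, hχi]; linarith
        · by_cases h2 : l = j
          · rw [h2, hχj]; linarith
          · rw [hχl l h1 h2]; exact a1
      · intro l
        have a1 := hψb.2 l
        have a2 := hψb.2 i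
        have a3 := hψb.2 j
        simp only at a1 a2 a3 ⊢
        by_cases h1 : l = i
        · rw [h1, hχi]; linarith
        · by_cases h2 : l = j
          · rw [h2, hχj]; linarith
          · rw [hχl l h1 h2]; exact a1
    have hle : ∑ l, ψ l ^ 2 ≤ ∑ l, χ l ^ 2 := hψmin ⟨hχb, hkey.trans hψe'⟩
    have hdiff : ∑ l, (χ l ^ 2 - ψ l ^ 2)
        = (χ i ^ 2 - ψ i ^ 2) + (χ j ^ 2 - ψ j ^ 2) := by
      rw [← Finset.sum_pair hij (f := fun l => χ l ^ 2 - ψ l ^ 2)]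
      symm
      apply Finset.sum_subset (Finset.subset_univ _)
      intro l _ hl
      simp only [Finset.mem_insert, Finset.mem_singleton, not_or] at hl
      rw [hχl l hl.1 hl.2]; ring
    rw [Finset.sum_sub_distrib, hχi, hχj] at hdiff
    have hne : ψ i - ψ j ≠ 0 := by
      intro h; rw [h] at hs; simp at hs
    have := pow_pos (abs_pos.mpr hne) 2
    rw [sq_abs] at this
    nlinarith
  refine (hmax θ).trans ?_
  rw [← hψe']
  set i0 : Fin m := ⟨0, h0⟩
  have hwi : ∀ i, w (ψ i) = Real.cos (ψ i - ψ i0) • w (ψ i0) := by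
    intro i
    have := hwadd (ψ i0) (ψ i - ψ i0)
    rw [hsin i i0, add_sub_cancel, zero_smul, add_zero] at this
    exact this
  have hgψ : g ψ = (∏ i, Real.cos (ψ i - ψ i0)) * L (fun _ => w (ψ i0)) := by
    simp only [hg]
    rw [show (fun i => w (ψ i)) = fun i => Real.cos (ψ i - ψ i0) • w (ψ i0) from funext hwi,
      L.map_smul_univ (fun i => Real.cos (ψ i - ψ i0)) (fun _ => w (ψ i0))]
    rfl
  rw [hgψ]
  refine (le_abs_self _).trans ?_
  rw [abs_mul, Finset.abs_prod]
  have hp : ∏ i, |Real.cos (ψ i - ψ i0)| ≤ 1 :=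
    Finset.prod_le_one (fun _ _ => abs_nonneg _) (fun _ _ => Real.abs_cos_le_one _)
  exact (mul_le_of_le_one_left (abs_nonneg _) hp).trans (hK _)

/-- Bernstein-type inequality for the `k`-th Fréchet derivative of an `m`-homogeneous
polynomial `L̂` on a real Banach space: for `k ≤ m` and `‖x‖ < 1`,
`‖D^k L̂(x)‖ ≤ (m choose k) k^k (1-‖x‖²)^(-k/2) ‖L̂‖`. -/
theorem bernstein_homogeneous_multilinear_banach
    {X : Type*} [NormedAddCommGroup X] [NormedSpace ℝ X] [CompleteSpace X]
    (m k : ℕ) (hk : k ≤ m) (F : X → ℝ)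
    (hF : ∃ L : ContinuousMultilinearMap ℝ (fun _ : Fin m => X) ℝ,
      (∀ (σ : Equiv.Perm (Fin m)) (v : Fin m → X), L (v ∘ σ) = L v) ∧
      ∀ u, F u = L (fun _ => u))
    (x : X) (hx : ‖x‖ < 1) :
    ‖iteratedFDeriv ℝ k F x‖
      ≤ (m.choose k : ℝ) * (k : ℝ) ^ k * (1 - ‖x‖ ^ 2) ^ (-(k : ℝ) / 2)
          * sSup ((fun y => ‖F y‖) '' closedBall (0 : X) 1) := by
  classical
  obtain ⟨L, hL, hFL⟩ := hF
  obtain rfl : F = fun u => L (fun _ => u) := funext hFL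
  set K := sSup ((fun y => ‖L (fun _ => y)‖) '' closedBall (0 : X) 1) with hKdef
  have hbdd : BddAbove ((fun y => ‖L (fun _ => y)‖) '' closedBall (0 : X) 1) := by
    refine ⟨‖L‖, ?_⟩
    rintro _ ⟨y, hy, rfl⟩
    have hy' : ‖y‖ ≤ 1 := by simpa using hy
    refine (L.le_opNorm _).trans ?_
    refine mul_le_of_le_one_right (norm_nonneg _) ?_
    exact Finset.prod_le_one (fun _ _ => norm_nonneg _) (fun _ _ => hy')
  have hKb : ∀ y : X, ‖y‖ ≤ 1 → |L (fun _ => y)| ≤ K := fun y hy =>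
    le_csSup hbdd ⟨y, by simpa using hy, rfl⟩
  have hK0 : 0 ≤ K := (abs_nonneg _).trans (hKb 0 (by simp))
  have hr : 0 < 1 - ‖x‖ ^ 2 := by nlinarith [norm_nonneg x]
  set ρ := Real.sqrt (1 - ‖x‖ ^ 2) with hρ
  have hρ0 : 0 < ρ := Real.sqrt_pos.mpr hr
  have hρ2 : ρ ^ 2 = 1 - ‖x‖ ^ 2 := Real.sq_sqrt hr.le
  have hpow : (1 - ‖x‖ ^ 2) ^ (-(k : ℝ) / 2) = (ρ ^ k)⁻¹ := by
    rw [hρ, Real.sqrt_eq_rpow, ← Real.rpow_natCast (_ ^ (1 / 2 : ℝ)) k, ← Real.rpow_mul hr.le, ← Real.rpow_neg hr.le]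
    congr 1; ring
  -- bound for mixed values
  have hmix : ∀ (z : X), ‖z‖ ≤ 1 → ∀ (s : Set (Fin m)) [DecidablePred (· ∈ s)],
      |L (fun j => if j ∈ s then ρ • z else x)| ≤ K := by
    intro z hz s _
    have hdiag : ∀ t : ℝ, |L (fun _ => Real.cos t • x + Real.sin t • (ρ • z))| ≤ K := by
      intro t
      apply hKb
      have h1 : ‖Real.cos t • x + Real.sin t • (ρ • z)‖
          ≤ |Real.cos t| * ‖x‖ + |Real.sin t| * ρ := by
        refine (norm_add_le _ _).trans ?_
        rw [norm_smul, norm_smul, norm_smul, Real.norm_eq_abs, Real.norm_eq_abs,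
          Real.norm_of_nonneg hρ0.le]
        gcongr
        exact mul_le_of_le_one_right hρ0.le hz
      refine h1.trans ?_
      have h2 : |Real.cos t| ^ 2 + |Real.sin t| ^ 2 = 1 := by
        rw [sq_abs, sq_abs]; exact Real.cos_sq_add_sin_sq t
      nlinarith [sq_nonneg (|Real.cos t| - ‖x‖), sq_nonneg (|Real.sin t| - ρ)]
    let θ : Fin m → ℝ := fun j => if j ∈ s then Real.pi / 2 else 0
    have e : (fun j => if j ∈ s then ρ • z else x)
        = fun j => Real.cos (θ j) • x + Real.sin (θ j) • (ρ • z) := by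
      funext j
      by_cases hj : j ∈ s <;> simp [θ, hj]
    rw [e, abs_le]
    constructor
    · have := bh_trig m (-L) (fun σ v => by simp [hL σ v]) x (ρ • z) K
        (fun t => by simpa using hdiag t) θ
      simp only [neg_apply] at this
      linarith
    · exact bh_trig m L hL x (ρ • z) K hdiag θ
  have hmix' : ∀ (z : X), ‖z‖ ≤ 1 → ∀ e : Fin k ↪ Fin m,
      |L (fun j => if j ∈ Set.range e then z else x)| ≤ (ρ ^ k)⁻¹ * K := by
    intro z hz e
    have h1 := hmix z hz (Set.range e)
    have e1 : (fun j => if j ∈ Set.range e then ρ • z else x)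
        = fun j => (if j ∈ Set.range e then ρ else 1) • (if j ∈ Set.range e then z else x) := by
      funext j
      split_ifs <;> simp
    have e2 : ∏ j, (if j ∈ Set.range e then ρ else 1) = ρ ^ k := by
      rw [← Finset.prod_filter, Finset.prod_const]
      congr 1
      have : Finset.univ.filter (fun j => j ∈ Set.range e) = Finset.univ.map e := by
        ext j; simp
      rw [this]; simp
    rw [e1, L.map_smul_univ, e2, smul_eq_mul, abs_mul, abs_of_pos (pow_pos hρ0 k)] at h1
    rw [inv_mul_eq_div, le_div_iff₀ (pow_pos hρ0 k)]
    linarith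
  set D := iteratedFDeriv ℝ k (fun u => L (fun _ => u)) x with hDdef
  let gd : X →L[ℝ] (Fin m → X) := ContinuousLinearMap.pi (fun _ => ContinuousLinearMap.id ℝ X)
  have hDapply : ∀ z : X, D (fun _ => z)
      = ∑ e : Fin k ↪ Fin m, L (fun j => if j ∈ Set.range e then z else x) := by
    intro z
    change iteratedFDeriv ℝ k (L ∘ gd) x (fun _ => z) = _
    rw [ContinuousLinearMap.iteratedFDeriv_comp_right (n := k) _ L.contDiff _ le_rfl,
      L.iteratedFDeriv_eq]
    simp only [ContinuousMultilinearMap.iteratedFDeriv,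
      ContinuousMultilinearMap.compContinuousLinearMap_apply, sum_apply,
      ContinuousMultilinearMap.iteratedFDerivComponent_apply, Pi.compRightL_apply]
    refine Finset.sum_congr rfl fun e _ => ?_
    congr 1
    funext j
    by_cases hj : j ∈ Set.range e
    · simp only [hj, dif_pos, if_pos]; rfl
    · simp only [hj, if_neg, not_false_iff, dif_neg]; rfl
  have hDsym : ∀ (σ : Equiv.Perm (Fin k)) (v : Fin k → X), D (v ∘ σ) = D v := by
    intro σ v
    have hcd : ContDiffAt ℝ ⊤ (L ∘ gd) x := (L.contDiff.comp gd.contDiff).contDiffAt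
    exact hcd.iteratedFDeriv_comp_perm v σ
  have hfin := bh_polar_bound k D hDsym (m.descFactorial k * ((ρ ^ k)⁻¹ * K)) (by positivity)
    (by
      intro z hz
      rw [hDapply]
      refine (Finset.abs_sum_le_sum_abs _ _).trans ?_
      refine (Finset.sum_le_sum (fun e _ => hmix' z hz e)).trans ?_
      simp)
  refine hfin.trans (le_of_eq ?_)
  rw [hpow, Nat.descFactorial_eq_factorial_mul_choose]
  have hfac : (k.factorial : ℝ) ≠ 0 := by exact_mod_cast k.factorial_pos.ne'
  push_cast
  field_simp
end

section
/- Let X be a real Banach space and let L̂ : X → ℝ be a continuous m-homogeneous polynomial. Then for every k ≤ m and every x ∈ X with ‖x‖ ≤ 1: (a) ‖D̂^k L̂(x)‖ ≤ C(m,k) · k! · m^{m/2} / ((m−k)^{(m−k)/2} · k^{k/2}) · ‖L̂‖, and (b) ‖D^k L̂(x)‖ ≤ C(m,k) · m^{m/2} · k^{k/2} / (m−k)^{(m−k)/2} · ‖L̂‖, where C(m,k) is the binomial coefficient m choose k (and 0⁰ is read as 1 when k = m). -/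
open Metric

lemma sum_update_aux {ι E : Type*} [Fintype ι] [DecidableEq ι] [AddCommGroup E]
    (x : ι → E) (i : ι) (u : E) :
    ∑ l, Function.update x i u l = ∑ l, x l - x i + u := by
  rw [← Finset.add_sum_erase _ _ (Finset.mem_univ i), ← Finset.add_sum_erase _ x (Finset.mem_univ i)]
  rw [Finset.sum_congr rfl (g := x)]
  · simp; abel
  · intro l hl
    rw [Function.update_of_ne (Finset.ne_of_mem_erase hl)]

lemma banach_symm {E : Type*} [NormedAddCommGroup E] [InnerProductSpace ℝ E] [ProperSpace E]
    (m : ℕ) (L : ContinuousMultilinearMap ℝ (fun _ : Fin m => E) ℝ)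
    (hL : ∀ (σ : Equiv.Perm (Fin m)) (v : Fin m → E), L (v ∘ σ) = L v)
    (C : ℝ) (hC : ∀ v, ‖v‖ ≤ 1 → |L (fun _ => v)| ≤ C)
    (v : Fin m → E) (hv : ∀ i, ‖v i‖ = 1) : |L v| ≤ C := by
  set K : Set (Fin m → E) := Set.pi Set.univ (fun _ => sphere (0:E) 1) with hK
  have memK : ∀ w, w ∈ K ↔ ∀ i, ‖w i‖ = 1 := by intro w; simp [hK]
  have hKc : IsCompact K := isCompact_univ_pi (fun _ => isCompact_sphere _ _)
  have hcont : Continuous (fun w => |L w|) := L.cont.abs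
  obtain ⟨x0, hx0, hmax⟩ := hKc.exists_isMaxOn ⟨v, (memK v).2 hv⟩ hcont.continuousOn
  set M := |L x0| with hM
  have hMb : ∀ w, (∀ i, ‖w i‖ = 1) → |L w| ≤ M := fun w hw => hmax ((memK w).2 hw)
  have hK'c : IsCompact (K ∩ {w | |L w| = M}) :=
    hKc.inter_right (isClosed_eq hcont continuous_const)
  have hc2 : Continuous (fun w : Fin m → E => ‖∑ i, w i‖) := by fun_prop
  obtain ⟨x, ⟨hxK, hxM⟩, hxmax⟩ := hK'c.exists_isMaxOn ⟨x0, hx0, rfl⟩ hc2.continuousOn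
  have hx1 := (memK x).1 hxK
  have hxM : |L x| = M := hxM
  have hS : ∀ w, (∀ i, ‖w i‖ = 1) → |L w| = M → ‖∑ i, w i‖ ≤ ‖∑ i, x i‖ :=
    fun w hw hw' => hxmax ⟨(memK w).2 hw, hw'⟩
  have hupd : ∀ w : Fin m → E, (∀ i, ‖w i‖ = 1) → ∀ i u, ‖u‖ = 1 →
      ∀ l, ‖Function.update w i u l‖ = 1 := by
    intro w hw i u hu l
    by_cases h : l = i
    · subst h; simpa using hu
    · simpa [Function.update_of_ne h] using hw l
  set S := ∑ i, x i with hSdef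
  have hin : ∀ i, 1 ≤ inner ℝ S (x i) := by
    intro i
    have h := hS (Function.update x i (-(x i))) (hupd x hx1 i _ (by simpa using hx1 i)) (by
      have := L.map_update_smul x i (-1 : ℝ) (x i)
      simp only [neg_smul, one_smul, Function.update_eq_self] at this
      rw [this, abs_neg, hxM])
    rw [sum_update_aux, ← hSdef] at h
    have e : S - x i + -(x i) = S - (2:ℝ) • x i := by rw [two_smul]; abel
    rw [e] at h
    have h2 := pow_le_pow_left₀ (norm_nonneg _) h 2
    rw [norm_sub_sq_real, inner_smul_right, norm_smul, hx1 i] at h2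
    norm_num at h2
    linarith
  have hall : ∀ i j, x i = x j := by
    intro i j
    by_contra hne
    have hij : i ≠ j := fun h => hne (by rw [h])
    set a := x i with ha
    set b := x j with hb
    set P : E → E → ℝ := fun u w => L (Function.update (Function.update x i u) j w) with hP
    have Padd1 : ∀ u u' w, P (u + u') w = P u w + P u' w := by
      intro u u' w
      simp only [hP, Function.update_comm hij]
      exact L.map_update_add _ _ _ _
    have Padd2 : ∀ u w w', P u (w + w') = P u w + P u w' := by
      intro u u' w
      exact L.map_update_add _ _ _ _
    have Psm1 : ∀ (c : ℝ) u w, P (c • u) w = c * P u w := by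
      intro u u' w
      simp only [hP, Function.update_comm hij]
      exact L.map_update_smul _ _ _ _
    have Psm2 : ∀ (c : ℝ) u w, P u (c • w) = c * P u w := by
      intro u u' w
      exact L.map_update_smul _ _ _ _
    have Pab : P a b = L x := by simp [hP, ha, hb]
    have Pba : P b a = L x := by
      rw [← hL (Equiv.swap i j) x]
      simp only [hP]
      congr 1
      ext l
      by_cases h1 : l = j
      · subst h1; simp [ha]
      · by_cases h2 : l = i
        · subst h2; simp [hb, Function.update_of_ne h1]
        · simp [h1, h2, Equiv.swap_apply_of_ne_of_ne h2 h1]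
    have Punit : ∀ u, ‖u‖ = 1 → |P u u| ≤ M := fun u hu =>
      hMb _ (hupd _ (hupd x hx1 i u hu) j u hu)
    have Pdiag : ∀ u, |P u u| ≤ M * ‖u‖ ^ 2 := by
      intro u
      by_cases hu : u = 0
      · have := Psm1 0 0 u
        subst hu
        simp at this
        simp [this]
      · have hu' : ‖u‖ ≠ 0 := norm_ne_zero_iff.2 hu
        have e : u = ‖u‖ • (‖u‖⁻¹ • u) := by rw [smul_smul, mul_inv_cancel₀ hu', one_smul]
        have h1 := Punit (‖u‖⁻¹ • u) (by rw [norm_smul, norm_inv, norm_norm, inv_mul_cancel₀ hu'])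
        rw [show P u u = P (‖u‖ • (‖u‖⁻¹ • u)) (‖u‖ • (‖u‖⁻¹ • u)) by rw [← e],
          Psm1, Psm2, abs_mul, abs_mul, abs_norm]
        nlinarith [mul_le_mul_of_nonneg_left h1 (mul_self_nonneg ‖u‖)]
    have hpol : P (a + b) (a + b) - P (a + (-1:ℝ) • b) (a + (-1:ℝ) • b) = 4 * L x := by
      simp only [Padd1, Padd2, Psm1, Psm2, Pab, Pba]; ring
    have hna : ‖a‖ = 1 := hx1 i
    have hnb : ‖b‖ = 1 := hx1 j
    have e1 : ‖a + b‖ ^ 2 = 2 + 2 * inner ℝ a b := by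
      rw [norm_add_sq_real, hna, hnb]; ring
    have e2 : ‖a + (-1:ℝ) • b‖ ^ 2 = 2 - 2 * inner ℝ a b := by
      rw [norm_add_sq_real, inner_smul_right, norm_smul, hna, hnb]; norm_num; ring
    have hlow : M * ‖a + b‖ ^ 2 ≤ |P (a + b) (a + b)| := by
      have h1 := Pdiag (a + (-1:ℝ) • b)
      have h2 : 4 * M ≤ |P (a + b) (a + b)| + |P (a + (-1:ℝ) • b) (a + (-1:ℝ) • b)| := by
        calc 4 * M = |4 * L x| := by rw [abs_mul, hxM]; norm_num
          _ ≤ _ := by rw [← hpol]; exact abs_sub _ _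
      rw [e2] at h1
      rw [e1]; nlinarith
    set r := ‖a + b‖ with hr
    have hSab : 2 ≤ inner ℝ S (a + b) := by
      rw [inner_add_right]; linarith [hin i, hin j]
    have hr0 : r ≠ 0 := by
      intro h0
      rw [hr, norm_eq_zero] at h0
      rw [h0, inner_zero_right] at hSab
      linarith
    have hrpos : 0 < r := lt_of_le_of_ne (norm_nonneg _) (Ne.symm hr0)
    set z := r⁻¹ • (a + b) with hz
    have hzn : ‖z‖ = 1 := by
      rw [hz, norm_smul, norm_inv, Real.norm_of_nonneg hrpos.le, ← hr, inv_mul_cancel₀ hr0]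
    have hzr : a + b = r • z := by rw [hz, smul_smul, mul_inv_cancel₀ hr0, one_smul]
    have hPz : |P z z| = M := by
      apply le_antisymm (Punit z hzn)
      rw [hzr, Psm1, Psm2, abs_mul, abs_mul, abs_of_pos hrpos] at hlow
      have : 0 < r ^ 2 := by positivity
      nlinarith
    have h := hS _ (hupd _ (hupd x hx1 i z hzn) j z hzn) hPz
    rw [sum_update_aux, sum_update_aux, Function.update_of_ne hij.symm, ← hSdef, ← ha, ← hb] at h
    have e3 : S - a + z - b + z = S + (2 - r) • z := by
      rw [sub_smul, ← hzr, two_smul]; abel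
    rw [e3] at h
    have h2 := pow_le_pow_left₀ (norm_nonneg _) h 2
    rw [norm_add_sq_real, inner_smul_right, norm_smul, hzn, mul_one, Real.norm_eq_abs, sq_abs] at h2
    rw [hzr, inner_smul_right] at hSab
    have hz0 : 0 < inner ℝ S z := by
      by_contra hcon
      push Not at hcon
      nlinarith
    have hr2 : r ≤ 2 := by
      calc r ≤ ‖a‖ + ‖b‖ := norm_add_le _ _
        _ = 2 := by rw [hna, hnb]; norm_num
    have hr2' : r = 2 := by
      by_contra hcon
      have : 0 < 2 - r := sub_pos.2 (lt_of_le_of_ne hr2 hcon)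
      nlinarith [mul_pos this hz0]
    have : ‖a + (-1:ℝ) • b‖ ^ 2 = 0 := by
      rw [e2]; rw [hr2'] at e1; linarith
    have := norm_eq_zero.1 (pow_eq_zero_iff (two_ne_zero) |>.1 this)
    apply hne
    rw [neg_smul, one_smul, ← sub_eq_add_neg] at this
    exact sub_eq_zero.1 this
  refine (hMb v hv).trans ?_
  rw [← hxM]
  rcases Nat.eq_zero_or_pos m with h0 | h0
  · subst h0
    rw [Subsingleton.elim x (fun _ => 0)]
    exact hC 0 (by simp)
  · have : x = fun _ => x ⟨0, h0⟩ := funext fun l => hall _ _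
    rw [this]
    exact hC _ (hx1 _).le

lemma polar_aux {X : Type*} [NormedAddCommGroup X] [NormedSpace ℝ X] (k : ℕ)
    (G : ContinuousMultilinearMap ℝ (fun _ : Fin k => X) ℝ)
    (hG : ∀ (σ : Equiv.Perm (Fin k)) (v : Fin k → X), G (v ∘ σ) = G v)
    (A : ℝ) (hA0 : 0 ≤ A) (hA : ∀ u, |G (fun _ => u)| ≤ A * ‖u‖ ^ k)
    (y : Fin k → X) (hy : ∀ i, ‖y i‖ ≤ 1) : (k.factorial : ℝ) * |G y| ≤ (k:ℝ) ^ k * A := by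
  classical
  let c : (Fin k → ℤˣ) → Fin k → ℝ := fun ε i => ((ε i : ℤ) : ℝ)
  have hc : ∀ ε i, |c ε i| = 1 := by
    intro ε i
    rcases Int.units_eq_one_or (ε i) with h | h <;> simp [c, h]
  have hexp : ∀ ε, G (fun _ => ∑ i, c ε i • y i)
      = ∑ r : Fin k → Fin k, (∏ j, c ε (r j)) * G (y ∘ r) := by
    intro ε
    rw [G.map_sum (fun _ i => c ε i • y i)]
    refine Finset.sum_congr rfl fun r _ => ?_
    exact G.map_smul_univ (fun j => c ε (r j)) (fun j => y (r j))
  have hr1 : ∀ r : Fin k → Fin k, Function.Bijective r →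
      ∑ ε, (∏ i, c ε i) * (∏ j, c ε (r j)) = 2 ^ k := by
    intro r hr
    have : ∀ ε : Fin k → ℤˣ, (∏ i, c ε i) * (∏ j, c ε (r j)) = 1 := by
      intro ε
      rw [hr.prod_comp (fun i => c ε i), ← Finset.prod_mul_distrib]
      refine Finset.prod_eq_one fun i _ => ?_
      rw [← abs_mul_abs_self, hc, one_mul]
    simp [this]
  have hr2 : ∀ r : Fin k → Fin k, ¬ Function.Bijective r →
      ∑ ε, (∏ i, c ε i) * (∏ j, c ε (r j)) = 0 := by
    intro r hr
    have hs : ¬ Function.Surjective r := fun h => hr (Finite.surjective_iff_bijective.1 h)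
    unfold Function.Surjective at hs
    push Not at hs
    obtain ⟨i0, hi0⟩ := hs
    have h := Equiv.sum_comp (Equiv.mulLeft (Pi.mulSingle i0 (-1 : ℤˣ)))
      (fun ε : Fin k → ℤˣ => (∏ i, c ε i) * (∏ j, c ε (r j)))
    have h' : ∀ ε : Fin k → ℤˣ, (∏ i, c (Equiv.mulLeft (Pi.mulSingle i0 (-1 : ℤˣ)) ε) i) *
        (∏ j, c (Equiv.mulLeft (Pi.mulSingle i0 (-1 : ℤˣ)) ε) (r j))
        = - ((∏ i, c ε i) * (∏ j, c ε (r j))) := by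
      intro ε
      have e1 : ∀ i, c (Equiv.mulLeft (Pi.mulSingle i0 (-1 : ℤˣ)) ε) i
          = (if i = i0 then -1 else 1) * c ε i := by
        intro i
        by_cases hi : i = i0
        · subst hi; simp [c]
        · simp [c, hi]
      simp only [e1, Finset.prod_mul_distrib, hi0, if_false, Finset.prod_const_one]
      simp
    simp only [h', Finset.sum_neg_distrib] at h
    linarith
  have hcard : ∑ r : Fin k → Fin k, (if Function.Bijective r then (1:ℝ) else 0) = k.factorial := by
    rw [Finset.sum_boole]
    norm_cast
    rw [← Fintype.card_subtype]
    rw [Fintype.card_congr (Equiv.ofBijective (fun σ : Equiv.Perm (Fin k) =>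
      (⟨σ, σ.bijective⟩ : {r : Fin k → Fin k // Function.Bijective r})) ?_).symm]
    · rw [Fintype.card_perm, Fintype.card_fin]
    · constructor
      · intro s t h
        exact Equiv.ext fun i => congrFun (Subtype.ext_iff.1 h) i
      · rintro ⟨r, hr⟩
        exact ⟨Equiv.ofBijective r hr, rfl⟩
  have hmain : ∑ ε, (∏ i, c ε i) * G (fun _ => ∑ i, c ε i • y i) = 2 ^ k * k.factorial * G y := by
    simp only [hexp, Finset.mul_sum]
    rw [Finset.sum_comm]
    have : ∀ r : Fin k → Fin k, ∑ ε, (∏ i, c ε i) * ((∏ j, c ε (r j)) * G (y ∘ r))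
        = (if Function.Bijective r then (1:ℝ) else 0) * (2 ^ k * G y) := by
      intro r
      simp only [← mul_assoc, ← Finset.sum_mul]
      by_cases hr : Function.Bijective r
      · rw [hr1 r hr, if_pos hr]
        have := hG (Equiv.ofBijective r hr) y
        rw [Equiv.coe_ofBijective] at this
        rw [this, one_mul]
      · rw [hr2 r hr, if_neg hr]; simp
    simp only [this, ← Finset.sum_mul, hcard]
    ring
  have hterm : ∀ ε, |(∏ i, c ε i) * G (fun _ => ∑ i, c ε i • y i)| ≤ (k:ℝ) ^ k * A := by
    intro ε
    have hn : ‖∑ i, c ε i • y i‖ ≤ k := by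
      calc _ ≤ ∑ i, ‖c ε i • y i‖ := norm_sum_le _ _
        _ ≤ ∑ i : Fin k, (1:ℝ) := Finset.sum_le_sum fun i _ => by
            rw [norm_smul, Real.norm_eq_abs, hc, one_mul]; exact hy i
        _ = k := by simp
    rw [abs_mul, Finset.abs_prod]
    simp only [hc, Finset.prod_const_one, one_mul]
    refine (hA _).trans ?_
    rw [mul_comm]; gcongr
  have := Finset.abs_sum_le_sum_abs (fun ε => (∏ i, c ε i) * G (fun _ => ∑ i, c ε i • y i)) Finset.univ
  rw [hmain, abs_mul, abs_of_nonneg (by positivity)] at this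
  have h2 := this.trans (Finset.sum_le_sum fun ε _ => hterm ε)
  simp at h2
  have : (0:ℝ) < 2 ^ k := by positivity
  rw [mul_assoc] at h2
  exact le_of_mul_le_mul_left h2 this

lemma two_vec_aux {X : Type*} [NormedAddCommGroup X] [NormedSpace ℝ X]
    (m k : ℕ) (L : ContinuousMultilinearMap ℝ (fun _ : Fin m => X) ℝ)
    (hL : ∀ (σ : Equiv.Perm (Fin m)) (v : Fin m → X), L (v ∘ σ) = L v)
    (M : ℝ) (hM0 : 0 ≤ M) (hM : ∀ u, |L (fun _ => u)| ≤ M * ‖u‖ ^ m)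
    (x y : X) (hx : ‖x‖ ≤ 1) (hy : ‖y‖ ≤ 1) (a b : ℝ) (ha : 0 ≤ a) (hb : 0 ≤ b)
    (s : Finset (Fin m)) (hs : s.card = k) :
    a ^ (m - k) * b ^ k * |L (fun i => if i ∈ s then y else x)| ≤ Real.sqrt (a ^ 2 + b ^ 2) ^ m * M := by
  classical
  let T : EuclideanSpace ℝ (Fin 2) →L[ℝ] X :=
    (EuclideanSpace.proj (0 : Fin 2) : EuclideanSpace ℝ (Fin 2) →L[ℝ] ℝ).smulRight (a • x) +
    (EuclideanSpace.proj (1 : Fin 2) : EuclideanSpace ℝ (Fin 2) →L[ℝ] ℝ).smulRight (b • y)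
  have hT : ∀ v, T v = v 0 • (a • x) + v 1 • (b • y) := by intro v; simp [T]
  have hTn : ∀ v, ‖v‖ ≤ 1 → ‖T v‖ ≤ Real.sqrt (a ^ 2 + b ^ 2) := by
    intro v hv
    rw [hT]
    have h1 : ‖v 0 • (a • x) + v 1 • (b • y)‖ ≤ |v 0| * a + |v 1| * b := by
      refine (norm_add_le _ _).trans ?_
      simp only [norm_smul, Real.norm_eq_abs, abs_of_nonneg ha, abs_of_nonneg hb]
      gcongr
      · exact mul_le_of_le_one_right ha hx
      · exact mul_le_of_le_one_right hb hy
    refine h1.trans (Real.le_sqrt_of_sq_le ?_)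
    have h2 : |v 0| ^ 2 + |v 1| ^ 2 ≤ 1 := by
      have := EuclideanSpace.norm_sq_eq v
      rw [Fin.sum_univ_two] at this
      simp only [Real.norm_eq_abs] at this
      rw [← this]
      nlinarith [norm_nonneg v]
    nlinarith [sq_nonneg (|v 0| * b - |v 1| * a), mul_le_mul_of_nonneg_right h2 (by positivity : 0 ≤ a ^ 2 + b ^ 2)]
  have key := banach_symm m (L.compContinuousLinearMap (fun _ => T))
    (fun σ v => hL σ (fun i => T (v i))) (Real.sqrt (a ^ 2 + b ^ 2) ^ m * M) (by
      intro v hv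
      refine (hM (T v)).trans ?_
      rw [mul_comm]
      gcongr
      exact hTn v hv)
    (fun i => if i ∈ s then EuclideanSpace.single 1 1 else EuclideanSpace.single 0 1) (by
      intro i
      split_ifs <;> simp)
  refine le_of_eq_of_le ?_ key
  have e : (L.compContinuousLinearMap (fun _ => T))
      (fun i => if i ∈ s then EuclideanSpace.single 1 1 else EuclideanSpace.single 0 1)
      = L (fun i => (if i ∈ s then b else a) • (if i ∈ s then y else x)) := by
    change L _ = L _
    congr 1
    ext i
    dsimp only
    split_ifs <;> simp [hT]
  rw [e, L.map_smul_univ, smul_eq_mul, abs_mul]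
  congr 1
  rw [Finset.prod_ite]
  simp only [Finset.prod_const]
  have c1 : (Finset.univ.filter (fun i => i ∈ s)).card = k := by simp [hs]
  have c2 : (Finset.univ.filter (fun i => i ∉ s)).card = m - k := by
    rw [Finset.filter_not, Finset.card_sdiff]
    simp [hs]
  rw [c1, c2, abs_of_nonneg (by positivity), mul_comm]

theorem markov_homogeneous_banach
    {X : Type*} [NormedAddCommGroup X] [NormedSpace ℝ X] [CompleteSpace X]
    (m k : ℕ) (hk : k ≤ m) (F : X → ℝ)
    (hF : ∃ L : ContinuousMultilinearMap ℝ (fun _ : Fin m => X) ℝ,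
      (∀ (σ : Equiv.Perm (Fin m)) (v : Fin m → X), L (v ∘ σ) = L v) ∧
      ∀ u, F u = L (fun _ => u))
    (x : X) (hx : ‖x‖ ≤ 1) :
    sSup ((fun y => ‖iteratedFDeriv ℝ k F x (fun _ => y)‖) '' closedBall (0 : X) 1)
        ≤ (m.choose k : ℝ) * (k.factorial : ℝ) * (m : ℝ) ^ ((m : ℝ) / 2)
            / (((m : ℝ) - (k : ℝ)) ^ (((m : ℝ) - (k : ℝ)) / 2) * (k : ℝ) ^ ((k : ℝ) / 2))
            * sSup ((fun y => ‖F y‖) '' closedBall (0 : X) 1) ∧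
      ‖iteratedFDeriv ℝ k F x‖
        ≤ (m.choose k : ℝ) * (m : ℝ) ^ ((m : ℝ) / 2) * (k : ℝ) ^ ((k : ℝ) / 2)
            / ((m : ℝ) - (k : ℝ)) ^ (((m : ℝ) - (k : ℝ)) / 2)
            * sSup ((fun y => ‖F y‖) '' closedBall (0 : X) 1) := by
  classical
  obtain ⟨L, hL, hFL⟩ := hF
  set M := sSup ((fun y => ‖F y‖) '' closedBall (0 : X) 1) with hMdef
  have hbdd : BddAbove ((fun y => ‖F y‖) '' closedBall (0 : X) 1) := by
    refine ⟨‖L‖, ?_⟩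
    rintro _ ⟨y, hy, rfl⟩
    have hy' : ‖y‖ ≤ 1 := by simpa using hy
    dsimp only
    rw [hFL]
    refine (L.le_opNorm _).trans ?_
    simp only [Finset.prod_const]
    exact mul_le_of_le_one_right (norm_nonneg _) (pow_le_one₀ (norm_nonneg _) hy')
  have hM1 : ∀ u, ‖u‖ ≤ 1 → |L (fun _ => u)| ≤ M := fun u hu =>
    le_csSup hbdd ⟨u, by simpa using hu, by simp [hFL]⟩
  have hM0 : 0 ≤ M := (abs_nonneg _).trans (hM1 0 (by simp))
  have hscale : ∀ (n : ℕ) (G : ContinuousMultilinearMap ℝ (fun _ : Fin n => X) ℝ) (c : ℝ) (u : X),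
      G (fun _ => c • u) = c ^ n * G (fun _ => u) := by
    intro n G c u
    have := G.map_smul_univ (fun _ => c) (fun _ => u)
    simpa using this
  have hnorm : ∀ (n : ℕ) (G : ContinuousMultilinearMap ℝ (fun _ : Fin n => X) ℝ) (C : ℝ),
      (∀ u, ‖u‖ ≤ 1 → |G (fun _ => u)| ≤ C) → ∀ u, |G (fun _ => u)| ≤ C * ‖u‖ ^ n := by
    intro n G C hG u
    by_cases hu : u = 0
    · subst hu
      rcases Nat.eq_zero_or_pos n with h0 | h0
      · subst h0; simpa using hG 0 (by simp)
      · have := hscale n G 0 0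
        simp [h0.ne'] at this
        simp [this, h0.ne']
    · have hu' : ‖u‖ ≠ 0 := norm_ne_zero_iff.2 hu
      have h1 := hG (‖u‖⁻¹ • u) (by rw [norm_smul, norm_inv, norm_norm, inv_mul_cancel₀ hu'])
      have e : u = ‖u‖ • (‖u‖⁻¹ • u) := by rw [smul_smul, mul_inv_cancel₀ hu', one_smul]
      have h2 := hscale n G ‖u‖ (‖u‖⁻¹ • u)
      rw [← e] at h2
      rw [h2, abs_mul, abs_pow, abs_norm, mul_comm C]
      gcongr
  have hM : ∀ u, |L (fun _ => u)| ≤ M * ‖u‖ ^ m := hnorm m L M hM1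
  -- the derivative
  let Δ : X →L[ℝ] (Fin m → X) := ContinuousLinearMap.pi (fun _ => ContinuousLinearMap.id ℝ X)
  have hFc : F = (fun v => L v) ∘ Δ := by
    ext u
    rw [hFL]; rfl
  have hLω : ContDiff ℝ ⊤ (fun v => L v) := L.contDiff
  have hFω : ContDiff ℝ ⊤ F := by rw [hFc]; exact hLω.comp Δ.contDiff
  set G := iteratedFDeriv ℝ k F x with hGdef
  have hGsymm : ∀ (σ : Equiv.Perm (Fin k)) (v : Fin k → X), G (v ∘ σ) = G v := fun σ v =>
    hFω.contDiffAt.iteratedFDeriv_comp_perm v σ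
  have hGdiag : ∀ y, G (fun _ => y) =
      ∑ e : Fin k ↪ Fin m, L (fun i => if i ∈ Finset.univ.map e then y else x) := by
    intro y
    rw [hGdef, hFc, ContinuousLinearMap.iteratedFDeriv_comp_right Δ hLω x le_top]
    have : iteratedFDeriv ℝ k (fun v => L v) (Δ x) = L.iteratedFDeriv k (Δ x) :=
      congrFun (L.iteratedFDeriv_eq k) _
    rw [this]
    simp only [ContinuousMultilinearMap.compContinuousLinearMap_apply,
      ContinuousMultilinearMap.iteratedFDeriv, ContinuousMultilinearMap.sum_apply,
      ContinuousMultilinearMap.iteratedFDerivComponent_apply]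
    refine Finset.sum_congr rfl fun e _ => ?_
    congr 1
    ext i
    by_cases h : ∃ j, e j = i <;> simp [h, Δ]
  have hmk : ((m - k : ℕ) : ℝ) = (m : ℝ) - k := Nat.cast_sub hk
  have hmk0 : (0:ℝ) ≤ (m : ℝ) - k := by rw [← hmk]; positivity
  set a := Real.sqrt ((m : ℝ) - k) with ha
  set b := Real.sqrt (k : ℝ) with hb
  have ea : ((m : ℝ) - (k : ℝ)) ^ (((m : ℝ) - (k : ℝ)) / 2) = a ^ (m - k) := by
    rw [Real.rpow_div_two_eq_sqrt _ hmk0, ← ha, ← hmk, Real.rpow_natCast]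
  have eb : (k : ℝ) ^ ((k : ℝ) / 2) = b ^ k := by
    rw [Real.rpow_div_two_eq_sqrt _ (by positivity), ← hb, Real.rpow_natCast]
  have em : (m : ℝ) ^ ((m : ℝ) / 2) = Real.sqrt m ^ m := by
    rw [Real.rpow_div_two_eq_sqrt _ (by positivity), Real.rpow_natCast]
  have ha0 : 0 ≤ a := Real.sqrt_nonneg _
  have hb0 : 0 ≤ b := Real.sqrt_nonneg _
  have hab : a ^ 2 + b ^ 2 = m := by
    rw [ha, hb, Real.sq_sqrt hmk0, Real.sq_sqrt (by positivity)]; ring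
  have hapos : 0 < a ^ (m - k) := by
    rcases Nat.eq_zero_or_pos (m - k) with h | h
    · rw [h]; simp
    · have : 0 < a := Real.sqrt_pos.2 (by rw [← hmk]; exact_mod_cast h)
      positivity
  have hbpos : 0 < b ^ k := by
    rcases Nat.eq_zero_or_pos k with h | h
    · simp [h]
    · have : 0 < b := Real.sqrt_pos.2 (by exact_mod_cast h)
      positivity
  have hbb : b ^ k * b ^ k = (k:ℝ) ^ k := by
    rw [← mul_pow, hb, Real.mul_self_sqrt (by positivity)]
  rw [ea, eb, em]
  set A := (m.choose k : ℝ) * (k.factorial : ℝ) * Real.sqrt m ^ m / (a ^ (m - k) * b ^ k) * M with hA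
  have hA0 : 0 ≤ A := by positivity
  have hGA : ∀ y, ‖y‖ ≤ 1 → |G (fun _ => y)| ≤ A := by
    intro y hy
    rw [hGdiag]
    refine (Finset.abs_sum_le_sum_abs _ _).trans ?_
    have ht : ∀ e : Fin k ↪ Fin m, |L (fun i => if i ∈ Finset.univ.map e then y else x)|
        ≤ Real.sqrt m ^ m * M / (a ^ (m - k) * b ^ k) := by
      intro e
      rw [le_div_iff₀ (by positivity), mul_comm]
      have := two_vec_aux m k L hL M hM0 hM x y hx hy a b ha0 hb0 (Finset.univ.map e) (by simp)
      rwa [hab] at this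
    refine (Finset.sum_le_sum fun e _ => ht e).trans (le_of_eq ?_)
    rw [Finset.sum_const, Finset.card_univ, Fintype.card_embedding_eq, Fintype.card_fin,
      Fintype.card_fin, nsmul_eq_mul, Nat.descFactorial_eq_factorial_mul_choose, hA]
    push_cast
    ring
  constructor
  · refine csSup_le ⟨_, 0, by simp, rfl⟩ ?_
    rintro _ ⟨y, hy, rfl⟩
    exact hGA y (by simpa using hy)
  · have hkf : (0:ℝ) < k.factorial := by exact_mod_cast k.factorial_pos
    have hB : (m.choose k : ℝ) * Real.sqrt m ^ m * b ^ k / a ^ (m - k) * M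
        = (k:ℝ) ^ k * A / k.factorial := by
      rw [hA, ← hbb]
      field_simp
    rw [hB]
    refine G.opNorm_le_bound (by positivity) fun v => ?_
    have hunit : ∀ w : Fin k → X, (∀ i, ‖w i‖ ≤ 1) → |G w| ≤ (k:ℝ) ^ k * A / k.factorial := by
      intro w hw
      rw [le_div_iff₀ hkf, mul_comm]
      exact polar_aux k G hGsymm A hA0 (hnorm k G A hGA) w hw
    have e : v = fun i => ‖v i‖ • (‖v i‖⁻¹ • v i) := by
      ext i
      by_cases h : v i = 0
      · simp [h]
      · rw [smul_smul, mul_inv_cancel₀ (norm_ne_zero_iff.2 h), one_smul]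
    have h1 := hunit (fun i => ‖v i‖⁻¹ • v i) (by
      intro i
      rw [norm_smul, norm_inv, norm_norm]
      exact inv_mul_le_one)
    have h2 := G.map_smul_univ (fun i => ‖v i‖) (fun i => ‖v i‖⁻¹ • v i)
    rw [← e] at h2
    rw [h2, smul_eq_mul, norm_mul, mul_comm, Real.norm_eq_abs, Real.norm_eq_abs,
      abs_of_nonneg (Finset.prod_nonneg fun i _ => norm_nonneg _)]
    gcongr
end

section
/- Let L̂ : L_p(μ) → ℂ be a continuous m-homogeneous polynomial, m ≥ 2, on a complex L_p(μ) space with 1 ≤ p ≤ m′, where m′ = m/(m−1). Then for every k ≤ m and every x ∈ L_p(μ) with ‖x‖_p < 1, ‖D̂^k L̂(x)‖ ≤ k! · (1−‖x‖_p^p)^{−k/p} · ‖L̂‖. -/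
open Metric MeasureTheory

lemma aux_phase (a : ℂ) : ∃ α : ℂ, ‖α‖ ≤ 1 ∧ a = (‖a‖ : ℂ) * α ∧ a * starRingEnd ℂ α = (‖a‖ : ℂ) := by
  by_cases h : a = 0
  · exact ⟨0, by simp [h]⟩
  · have hn : (‖a‖ : ℂ) ≠ 0 := by simpa using h
    refine ⟨a / ‖a‖, ?_, ?_, ?_⟩
    · simp [h]
    · field_simp
    · rw [map_div₀, Complex.conj_ofReal, mul_div_assoc', Complex.mul_conj, Complex.normSq_eq_norm_sq]
      push_cast
      field_simp

lemma aux_l2 (N : ℕ) (ω : Fin N → ℂ) (h1 : ∀ i, ‖ω i‖ = 1) (h0 : ∑ i, ω i = 0) (u v : ℂ) :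
    ∑ i, ‖u + ω i * v‖ ^ 2 = N * (‖u‖ ^ 2 + ‖v‖ ^ 2) := by
  have : ∀ i, ‖u + ω i * v‖ ^ 2 = ‖u‖ ^ 2 + ‖v‖ ^ 2 + 2 * (u * starRingEnd ℂ (ω i * v)).re := by
    intro i
    rw [← Complex.normSq_eq_norm_sq, Complex.normSq_add, Complex.normSq_eq_norm_sq,
      Complex.normSq_eq_norm_sq, norm_mul, h1]
    ring
  simp_rw [this]
  rw [Finset.sum_add_distrib, ← Finset.mul_sum, ← Complex.re_sum, ← Finset.mul_sum, ← map_sum,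
    ← Finset.sum_mul, h0]
  simp [mul_add]

lemma aux_cpow (A : ℝ) (hA : 0 ≤ A) (z : ℂ) (hz : z.re ≤ 1) :
    ‖(A : ℂ) ^ (1 - z / 2)‖ = A ^ (1 - z.re / 2) := by
  have h : (1 - z / 2).re = 1 - z.re / 2 := by simp
  rw [Complex.norm_cpow_eq_rpow_re_of_nonneg hA, h]
  rw [h]; intro; linarith

lemma aux_rpow_le (A : ℝ) (hA : 0 ≤ A) (t : ℝ) (h0 : 0 ≤ t) (h1 : t ≤ 1) :
    A ^ t ≤ 1 + A := by
  rcases le_total A 1 with h | h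
  · linarith [Real.rpow_le_one hA h h0]
  · have := Real.rpow_le_rpow_of_exponent_le h h1
    rw [Real.rpow_one] at this; linarith

lemma aux_diff (A : ℝ) : DiffContOnCl ℂ (fun z : ℂ => (A : ℂ) ^ (1 - z / 2))
    (Complex.HadamardThreeLines.verticalStrip 0 1) := by
  apply DifferentiableOn.diffContOnCl
  intro z hz
  have hz' : z.re ≤ 1 := by
    have : z ∈ Complex.HadamardThreeLines.verticalClosedStrip 0 1 := by
      refine closure_minimal ?_ ?_ hz
      · intro w hw; exact ⟨hw.1.le, hw.2.le⟩
      · exact isClosed_Icc.preimage Complex.continuous_re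
    exact this.2
  apply DifferentiableAt.differentiableWithinAt
  refine DifferentiableAt.const_cpow (by fun_prop) (Or.inr ?_)
  intro h
  have := congrArg Complex.re h
  simp at this
  linarith

lemma aux_scalar (N : ℕ) (ω : Fin N → ℂ) (h1 : ∀ i, ‖ω i‖ = 1) (h0 : ∑ i, ω i = 0)
    (m : ℕ) (hm : 2 ≤ m) (a b : ℂ) (q : ℝ) (hq : q = m / ((m : ℝ) - 1)) :
    ∑ i, ‖a + ω i * b‖ ^ m ≤ N * (‖a‖ ^ q + ‖b‖ ^ q) ^ ((m : ℝ) - 1) := by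
  have hm' : (2 : ℝ) ≤ m := by exact_mod_cast hm
  have hm1 : (0 : ℝ) < m - 1 := by linarith
  have hq0 : 0 < q := by rw [hq]; positivity
  obtain ⟨α, hα, haα, -⟩ := aux_phase a
  obtain ⟨β, hβ, hbβ, -⟩ := aux_phase b
  choose γ hγ _ hcγ using fun i => aux_phase (a + ω i * b)
  set A := ‖a‖ ^ q with hA
  set B := ‖b‖ ^ q with hB
  set G : Fin N → ℝ := fun i => ‖a + ω i * b‖ ^ m with hG
  have hA0 : 0 ≤ A := by positivity
  have hB0 : 0 ≤ B := by positivity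
  have hG0 : ∀ i, 0 ≤ G i := fun i => by positivity
  set U := ∑ i, G i with hU
  have hU0 : 0 ≤ U := Finset.sum_nonneg fun i _ => hG0 i
  set S := A + B
  have hS0 : 0 ≤ S := by positivity
  let f : ℂ → ℂ := fun z => ∑ i, ((A : ℂ) ^ (1 - z / 2) * α + ω i * ((B : ℂ) ^ (1 - z / 2) * β))
    * ((G i : ℂ) ^ (1 - z / 2) * starRingEnd ℂ (γ i))
  have hfb : ∀ z : ℂ, z.re ≤ 1 → ‖f z‖ ≤
      ∑ i, (A ^ (1 - z.re / 2) + B ^ (1 - z.re / 2)) * G i ^ (1 - z.re / 2) := by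
    intro z hz
    refine (norm_sum_le _ _).trans (Finset.sum_le_sum fun i _ => ?_)
    rw [norm_mul]
    have e1 : ‖(A : ℂ) ^ (1 - z / 2) * α‖ ≤ A ^ (1 - z.re / 2) := by
      rw [norm_mul, aux_cpow A hA0 z hz]
      exact mul_le_of_le_one_right (by positivity) hα
    have e2 : ‖ω i * ((B : ℂ) ^ (1 - z / 2) * β)‖ ≤ B ^ (1 - z.re / 2) := by
      rw [norm_mul, norm_mul, aux_cpow B hB0 z hz, h1, one_mul]
      exact mul_le_of_le_one_right (by positivity) hβ
    have e3 : ‖(G i : ℂ) ^ (1 - z / 2) * starRingEnd ℂ (γ i)‖ ≤ G i ^ (1 - z.re / 2) := by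
      rw [norm_mul, aux_cpow _ (hG0 i) z hz, RCLike.norm_conj]
      exact mul_le_of_le_one_right (Real.rpow_nonneg (hG0 i) _) (hγ i)
    exact mul_le_mul ((norm_add_le _ _).trans (add_le_add e1 e2)) e3 (norm_nonneg _) (by positivity)
  have hf0 : ∀ z ∈ Complex.re ⁻¹' {0}, ‖f z‖ ≤ S * U := by
    intro z hz
    have hz : z.re = 0 := hz
    refine (hfb z (by linarith)).trans (le_of_eq ?_)
    rw [hz, hU, Finset.mul_sum]
    simp [S]
  have hf1 : ∀ z ∈ Complex.re ⁻¹' {1}, ‖f z‖ ≤ √(N * S) * √U := by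
    intro z hz
    have hz : z.re = 1 := hz
    have e0 : ∀ X : ℝ, 0 ≤ X → ‖(X : ℂ) ^ (1 - z / 2)‖ = √X := by
      intro X hX
      rw [aux_cpow X hX z hz.le, hz, Real.sqrt_eq_rpow]; norm_num
    set u := (A : ℂ) ^ (1 - z / 2) * α
    set v := (B : ℂ) ^ (1 - z / 2) * β
    have hu : ‖u‖ ^ 2 ≤ A := by
      have : ‖u‖ ≤ √A := by
        rw [norm_mul, e0 A hA0]; exact mul_le_of_le_one_right (by positivity) hα
      calc ‖u‖ ^ 2 ≤ (√A) ^ 2 := by gcongr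
        _ = A := Real.sq_sqrt hA0
    have hv : ‖v‖ ^ 2 ≤ B := by
      have : ‖v‖ ≤ √B := by
        rw [norm_mul, e0 B hB0]; exact mul_le_of_le_one_right (by positivity) hβ
      calc ‖v‖ ^ 2 ≤ (√B) ^ 2 := by gcongr
        _ = B := Real.sq_sqrt hB0
    calc ‖f z‖ ≤ ∑ i, ‖u + ω i * v‖ * √(G i) := by
          refine (norm_sum_le _ _).trans (Finset.sum_le_sum fun i _ => ?_)
          rw [norm_mul]
          refine mul_le_mul_of_nonneg_left ?_ (norm_nonneg _)
          rw [norm_mul, e0 _ (hG0 i), RCLike.norm_conj]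
          exact mul_le_of_le_one_right (by positivity) (hγ i)
      _ ≤ √(∑ i, ‖u + ω i * v‖ ^ 2) * √(∑ i, √(G i) ^ 2) :=
          Real.sum_mul_le_sqrt_mul_sqrt _ _ _
      _ ≤ √(N * S) * √U := by
          rw [aux_l2 N ω h1 h0]
          have : ∑ i, √(G i) ^ 2 = U := Finset.sum_congr rfl fun i _ => Real.sq_sqrt (hG0 i)
          rw [this]
          gcongr
          exact add_le_add hu hv
  have hd : DiffContOnCl ℂ f (Complex.HadamardThreeLines.verticalStrip 0 1) := by
    have key : ∀ i : Fin N, DiffContOnCl ℂ (fun z : ℂ =>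
        ((A : ℂ) ^ (1 - z / 2) * α + ω i * ((B : ℂ) ^ (1 - z / 2) * β))
        * ((G i : ℂ) ^ (1 - z / 2) * starRingEnd ℂ (γ i)))
        (Complex.HadamardThreeLines.verticalStrip 0 1) := by
      intro i
      have dA := aux_diff A
      have dB := aux_diff B
      have dG := aux_diff (G i)
      refine ⟨?_, ?_⟩
      · have := dA.1; have := dB.1; have := dG.1
        fun_prop
      · have := dA.2; have := dB.2; have := dG.2
        fun_prop
    refine ⟨?_, ?_⟩
    · exact DifferentiableOn.fun_sum fun i _ => (key i).1
    · exact continuousOn_finsetSum _ fun i _ => (key i).2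
  have hB' : BddAbove ((norm ∘ f) '' Complex.HadamardThreeLines.verticalClosedStrip 0 1) := by
    refine ⟨∑ i, ((1 + A) + (1 + B)) * (1 + G i), ?_⟩
    rintro _ ⟨z, hz, rfl⟩
    have hz0 : 0 ≤ z.re := hz.1
    have hz1 : z.re ≤ 1 := hz.2
    refine (hfb z hz1).trans (Finset.sum_le_sum fun i _ => ?_)
    have := hG0 i
    gcongr <;> exact aux_rpow_le _ (by assumption) _ (by linarith) (by linarith)
  have hθ : ((2 / m : ℝ) : ℂ) ∈ Complex.HadamardThreeLines.verticalClosedStrip 0 1 := by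
    constructor
    · rw [Complex.ofReal_re]; positivity
    · rw [Complex.ofReal_re, div_le_one (by positivity)]; exact hm'
  have main := Complex.HadamardThreeLines.norm_le_interp_of_mem_verticalClosedStrip₀₁' f hθ hd hB' hf0 hf1
  rw [Complex.ofReal_re] at main
  have hval : f ((2 / m : ℝ) : ℂ) = (U : ℂ) := by
    have hex : (1 - ((2 / m : ℝ) : ℂ) / 2) = ((((m : ℝ) - 1) / m : ℝ) : ℂ) := by
      push_cast
      have : (m : ℂ) ≠ 0 := by norm_cast; omega
      field_simp
    have c1 : ∀ t : ℝ, 0 ≤ t → (t ^ q) ^ (((m : ℝ) - 1) / m) = t := by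
      intro t ht
      rw [← Real.rpow_mul ht, hq]
      have : (m : ℝ) / (m - 1) * ((m - 1) / m) = 1 := by field_simp
      rw [this, Real.rpow_one]
    have c2 : ∀ t : ℝ, 0 ≤ t → (t ^ m) ^ (((m : ℝ) - 1) / m) = t ^ (m - 1) := by
      intro t ht
      rw [← Real.rpow_natCast, ← Real.rpow_mul ht, ← Real.rpow_natCast, Nat.cast_sub (by omega)]
      congr 1
      push_cast
      field_simp
    simp only [f]
    rw [hU, Complex.ofReal_sum]
    refine Finset.sum_congr rfl fun i _ => ?_
    rw [hex, ← Complex.ofReal_cpow hA0, ← Complex.ofReal_cpow hB0, ← Complex.ofReal_cpow (hG0 i),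
      hA, hB, c1 _ (norm_nonneg _), c1 _ (norm_nonneg _), ← haα, ← hbβ]
    simp only [hG]
    rw [c2 _ (norm_nonneg _), mul_left_comm, hcγ i]
    push_cast
    rw [← pow_succ]
    congr 1
    omega
  rw [hval, Complex.norm_real, Real.norm_of_nonneg hU0] at main
  rcases hU0.eq_or_lt with hUz | hUp
  · rw [← hUz]; positivity
  have hsq : (√(N * S) * √U) ^ (2 / m : ℝ) = (N * S * U) ^ (1 / m : ℝ) := by
    rw [← Real.sqrt_mul (by positivity), Real.sqrt_eq_rpow, ← Real.rpow_mul (by positivity)]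
    congr 1; field_simp
  rw [hsq] at main
  have hraise : U ^ m ≤ (S * U) ^ ((m : ℝ) - 2) * (N * S * U) := by
    calc U ^ m ≤ ((S * U) ^ (1 - 2 / m : ℝ) * (N * S * U) ^ (1 / m : ℝ)) ^ m := by gcongr
      _ = _ := by
        rw [mul_pow, ← Real.rpow_natCast, ← Real.rpow_natCast, ← Real.rpow_mul (by positivity),
          ← Real.rpow_mul (by positivity)]
        have e1 : (1 - 2 / (m : ℝ)) * m = m - 2 := by field_simp
        have e2 : (1 / (m : ℝ)) * m = 1 := by field_simp
        rw [e1, e2, Real.rpow_one]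
  have hN : (S * U) ^ ((m : ℝ) - 2) * (N * S * U) = N * S ^ ((m : ℝ) - 1) * U ^ (m - 1) := by
    obtain ⟨n, rfl⟩ := Nat.exists_eq_add_of_le hm
    have e1 : ((2 + n : ℕ) : ℝ) - 2 = (n : ℝ) := by push_cast; ring
    have e2 : ((2 + n : ℕ) : ℝ) - 1 = ((n + 1 : ℕ) : ℝ) := by push_cast; ring
    rw [e1, e2, Real.rpow_natCast, Real.rpow_natCast, show 2 + n - 1 = n + 1 by omega]
    ring
  rw [hN] at hraise
  have : U * U ^ (m - 1) ≤ N * S ^ ((m : ℝ) - 1) * U ^ (m - 1) := by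
    rwa [← pow_succ', show m - 1 + 1 = m by omega]
  exact le_of_mul_le_mul_right this (by positivity)

lemma aux_Lp_norm {α : Type*} [MeasurableSpace α] (μ : Measure α) (p : ℝ) (hp1 : 1 ≤ p)
    (x : Lp ℂ (ENNReal.ofReal p) μ) :
    Integrable (fun t => ‖x t‖ ^ p) μ ∧ ‖x‖ ^ p = ∫ t, ‖x t‖ ^ p ∂μ := by
  have hp : (ENNReal.ofReal p).toReal = p := ENNReal.toReal_ofReal (by linarith)
  have hp0 : ENNReal.ofReal p ≠ 0 := by simp; linarith
  have hint := (Lp.memLp x).integrable_norm_rpow hp0 ENNReal.ofReal_ne_top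
  rw [hp] at hint
  refine ⟨hint, ?_⟩
  rw [Lp.norm_def, toReal_eLpNorm (Lp.memLp x).1,
    lpNorm_eq_integral_norm_rpow_toReal hp0 ENNReal.ofReal_ne_top (Lp.memLp x).1, hp,
    Real.rpow_inv_rpow (integral_nonneg fun t => by positivity) (by linarith)]

lemma aux_mink {α : Type*} [MeasurableSpace α] (μ : Measure α) (N : ℕ) (r : ℝ) (hr : 1 ≤ r)
    (φ : Fin N → α → ℝ) (hφ : ∀ i, Integrable (φ i) μ) (h0 : ∀ i t, 0 ≤ φ i t) :
    (∑ i, (∫ t, φ i t ∂μ) ^ r) ^ (1 / r) ≤ ∫ t, (∑ i, φ i t ^ r) ^ (1 / r) ∂μ := by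
  have : Fact (1 ≤ ENNReal.ofReal r) := ⟨by simpa using hr⟩
  have hrr : (ENNReal.ofReal r).toReal = r := ENNReal.toReal_ofReal (by linarith)
  have hn : ∀ v : PiLp (ENNReal.ofReal r) (fun _ : Fin N => ℝ), ‖v‖ = (∑ i, ‖v i‖ ^ r) ^ (1 / r) := by
    intro v
    rw [PiLp.norm_eq_sum (by rw [hrr]; linarith), hrr]
  have h := norm_integral_le_integral_norm (μ := μ)
    (fun t => (WithLp.toLp (ENNReal.ofReal r) (fun i => φ i t) : PiLp (ENNReal.ofReal r) (fun _ : Fin N => ℝ)))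
  rw [hn] at h
  simp_rw [hn] at h
  have e : ∀ i, (∫ t, (WithLp.toLp (ENNReal.ofReal r) (fun i => φ i t) : PiLp (ENNReal.ofReal r) (fun _ : Fin N => ℝ)) ∂μ) i = ∫ t, φ i t ∂μ := by
    intro i
    exact eval_integral_piLp (f := fun t => (WithLp.toLp (ENNReal.ofReal r) (fun i => φ i t) : PiLp (ENNReal.ofReal r) (fun _ : Fin N => ℝ))) hφ i
  simp_rw [e] at h
  simpa only [Real.norm_of_nonneg (h0 _ _), Real.norm_of_nonneg (integral_nonneg (h0 _))] using h

lemma aux_scalar_p (N : ℕ) (ω : Fin N → ℂ) (h1 : ∀ i, ‖ω i‖ = 1) (h0 : ∑ i, ω i = 0)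
    (m : ℕ) (hm : 2 ≤ m) (a b : ℂ) (p : ℝ) (hp1 : 1 ≤ p) (hpm : p ≤ (m : ℝ) / ((m : ℝ) - 1)) :
    (∑ i, ‖a + ω i * b‖ ^ m) ^ (p / m) ≤ (N : ℝ) ^ (p / m) * (‖a‖ ^ p + ‖b‖ ^ p) := by
  have hm' : (2 : ℝ) ≤ m := by exact_mod_cast hm
  have hm1 : (0 : ℝ) < m - 1 := by linarith
  have h := aux_scalar N ω h1 h0 m hm a b _ rfl
  set q := (m : ℝ) / ((m : ℝ) - 1) with hq
  have hq0 : 0 < q := by positivity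
  have h2 := Real.rpow_add_rpow_le (norm_nonneg a) (norm_nonneg b) (by linarith : 0 < p) hpm
  calc (∑ i, ‖a + ω i * b‖ ^ m) ^ (p / m)
      ≤ (N * (‖a‖ ^ q + ‖b‖ ^ q) ^ ((m : ℝ) - 1)) ^ (p / m) := by
        gcongr
    _ = (N : ℝ) ^ (p / m) * ((‖a‖ ^ q + ‖b‖ ^ q) ^ (1 / q)) ^ p := by
        rw [Real.mul_rpow (by positivity) (by positivity), ← Real.rpow_mul (by positivity),
          ← Real.rpow_mul (by positivity)]
        congr 2
        rw [hq]; field_simp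
    _ ≤ (N : ℝ) ^ (p / m) * ((‖a‖ ^ p + ‖b‖ ^ p) ^ (1 / p)) ^ p := by gcongr
    _ = _ := by
        rw [one_div, Real.rpow_inv_rpow (by positivity) (by linarith)]

lemma aux_clarkson {α : Type*} [MeasurableSpace α] (μ : Measure α)
    (N : ℕ) (ω : Fin N → ℂ) (h1 : ∀ i, ‖ω i‖ = 1) (h0 : ∑ i, ω i = 0)
    (m : ℕ) (hm : 2 ≤ m) (p : ℝ) (hp1 : 1 ≤ p) (hpm : p ≤ (m : ℝ) / ((m : ℝ) - 1))
    [Fact (1 ≤ ENNReal.ofReal p)]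
    (x y : Lp ℂ (ENNReal.ofReal p) μ) (hxy : ‖x‖ ^ p + ‖y‖ ^ p ≤ 1) :
    ∑ i, ‖x + ω i • y‖ ^ m ≤ N := by
  have hm' : (2 : ℝ) ≤ m := by exact_mod_cast hm
  have hp0 : 0 < p := by linarith
  have hpm2 : p ≤ m := by
    refine hpm.trans ?_
    rw [div_le_iff₀ (by linarith)]
    nlinarith
  have hr : 1 ≤ (m : ℝ) / p := by rwa [one_le_div hp0]
  have hpow : ∀ t : ℝ, 0 ≤ t → (t ^ p) ^ ((m : ℝ) / p) = t ^ m := by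
    intro t ht
    rw [← Real.rpow_mul ht, mul_div_cancel₀ _ hp0.ne', Real.rpow_natCast]
  have hae : ∀ᵐ t ∂μ, ∀ i, (x + ω i • y : Lp ℂ (ENNReal.ofReal p) μ) t = x t + ω i * y t := by
    rw [ae_all_iff]
    intro i
    filter_upwards [Lp.coeFn_add x (ω i • y), Lp.coeFn_smul (ω i) y] with t e1 e2
    rw [e1, Pi.add_apply, e2, Pi.smul_apply, smul_eq_mul]
  have hmink := aux_mink μ N (m / p) hr (fun i t => ‖(x + ω i • y : Lp ℂ (ENNReal.ofReal p) μ) t‖ ^ p)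
    (fun i => (aux_Lp_norm μ p hp1 _).1) (fun i t => by positivity)
  simp_rw [← (aux_Lp_norm μ p hp1 _).2] at hmink
  simp_rw [hpow _ (norm_nonneg _), one_div_div] at hmink
  have hb : ∫ t, (∑ i, ‖(x + ω i • y : Lp ℂ (ENNReal.ofReal p) μ) t‖ ^ m) ^ (p / m) ∂μ
      ≤ (N : ℝ) ^ (p / m) * (‖x‖ ^ p + ‖y‖ ^ p) := by
    have hx := aux_Lp_norm μ p hp1 x
    have hy := aux_Lp_norm μ p hp1 y
    rw [hx.2, hy.2, ← integral_add hx.1 hy.1, ← integral_const_mul]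
    refine integral_mono_of_nonneg (Filter.Eventually.of_forall fun t => by positivity)
      ((hx.1.add hy.1).const_mul _) ?_
    filter_upwards [hae] with t ht
    simp_rw [ht]
    exact aux_scalar_p N ω h1 h0 m hm _ _ p hp1 hpm
  have hfin : (∑ i, ‖x + ω i • y‖ ^ m) ^ (p / m) ≤ (N : ℝ) ^ (p / m) :=
    (hmink.trans hb).trans (mul_le_of_le_one_right (by positivity) hxy)
  exact (Real.rpow_le_rpow_iff (by positivity) (by positivity) (by positivity)).1 hfin

lemma aux_coeff (m k : ℕ) (hk : k ≤ m) (ζ : ℂ) (hζ : IsPrimitiveRoot ζ (m + 1)) (c : ℕ → ℂ) :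
    ∑ i : Fin (m + 1), (ζ ^ (i : ℕ)) ^ (m + 1 - k) * ∑ j ∈ Finset.range (m + 1), (ζ ^ (i : ℕ)) ^ j * c j
      = (m + 1 : ℂ) * c k := by
  have : ∀ j ∈ Finset.range (m + 1), ∑ i : Fin (m + 1), (ζ ^ (i : ℕ)) ^ (m + 1 - k) * ((ζ ^ (i : ℕ)) ^ j * c j)
      = if j = k then (m + 1 : ℂ) * c k else 0 := by
    intro j hj
    have hj := Finset.mem_range.1 hj
    have e : ∀ i : Fin (m + 1), (ζ ^ (i : ℕ)) ^ (m + 1 - k) * ((ζ ^ (i : ℕ)) ^ j * c j)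
        = (ζ ^ (m + 1 - k + j)) ^ (i : ℕ) * c j := by
      intro i
      rw [← mul_assoc, ← pow_add, ← pow_mul, ← pow_mul, mul_comm (i : ℕ)]
    simp_rw [e]
    rw [← Finset.sum_mul, Fin.sum_univ_eq_sum_range (fun i => (ζ ^ (m + 1 - k + j)) ^ i)]
    split_ifs with h
    · subst h
      rw [show m + 1 - j + j = m + 1 by omega, hζ.pow_eq_one]
      simp
    · have hne : ζ ^ (m + 1 - k + j) ≠ 1 := by
        intro h'
        have hd := hζ.dvd_of_pow_eq_one _ h'
        obtain ⟨d, hd⟩ := hd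
        have : d = 1 := by
          rcases d with _ | _ | d
          · omega
          · rfl
          · exfalso
            have : (m + 1) * (d + 1 + 1) ≥ (m + 1) * 2 := by gcongr; omega
            omega
        subst this
        omega
      rw [geom_sum_eq hne, ← pow_mul, mul_comm _ (m + 1), pow_mul, hζ.pow_eq_one]
      simp
  simp_rw [Finset.mul_sum]
  rw [Finset.sum_comm, Finset.sum_congr rfl this]
  simp
  omega

theorem bernstein_homogeneous_Lp_small_p
    {α : Type*} [MeasurableSpace α] (μ : Measure α)
    (m k : ℕ) (hm : 2 ≤ m) (hk : k ≤ m) (p : ℝ)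
    (hp1 : 1 ≤ p) (hpm : p ≤ (m : ℝ) / ((m : ℝ) - 1)) [Fact (1 ≤ ENNReal.ofReal p)]
    (F : Lp ℂ (ENNReal.ofReal p) μ → ℂ)
    (hF : ∃ L : ContinuousMultilinearMap ℂ (fun _ : Fin m => Lp ℂ (ENNReal.ofReal p) μ) ℂ,
      (∀ (σ : Equiv.Perm (Fin m)) (v : Fin m → Lp ℂ (ENNReal.ofReal p) μ), L (v ∘ σ) = L v) ∧
      ∀ u, F u = L (fun _ => u))
    (x : Lp ℂ (ENNReal.ofReal p) μ) (hx : ‖x‖ < 1) :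
    sSup ((fun y => ‖iteratedFDeriv ℂ k F x (fun _ => y)‖)
        '' closedBall (0 : Lp ℂ (ENNReal.ofReal p) μ) 1)
      ≤ (k.factorial : ℝ) * (1 - ‖x‖ ^ p) ^ (-(k : ℝ) / p)
          * sSup ((fun y => ‖F y‖) '' closedBall (0 : Lp ℂ (ENNReal.ofReal p) μ) 1) := by
  obtain ⟨L, -, hL⟩ := hF
  have hp0 : 0 < p := by linarith
  set M := sSup ((fun y => ‖F y‖) '' closedBall (0 : Lp ℂ (ENNReal.ofReal p) μ) 1) with hM
  have hbdd : BddAbove ((fun y => ‖F y‖) '' closedBall (0 : Lp ℂ (ENNReal.ofReal p) μ) 1) := by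
    refine ⟨‖L‖, ?_⟩
    rintro _ ⟨y, hy, rfl⟩
    have hy : ‖y‖ ≤ 1 := by simpa using hy
    simp only [hL]
    refine (L.le_opNorm _).trans ?_
    refine mul_le_of_le_one_right (norm_nonneg _) ?_
    simpa using pow_le_one₀ (norm_nonneg y) hy
  have hhom : ∀ (c : ℂ) u, F (c • u) = c ^ m * F u := by
    intro c u
    rw [hL, hL]
    have := L.map_smul_univ (fun _ => c) (fun _ => u)
    simpa using this
  have hM0 : 0 ≤ M := Real.sSup_nonneg (by rintro _ ⟨y, _, rfl⟩; positivity)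
  have hFM : ∀ u, ‖F u‖ ≤ M * ‖u‖ ^ m := by
    intro u
    by_cases hu : u = 0
    · have : F u = 0 := by
        have := hhom 0 u
        rw [zero_smul, zero_pow (by omega), zero_mul] at this
        rw [hu, this]
      rw [this, norm_zero]; positivity
    · have hn : ‖u‖ ≠ 0 := by simpa using hu
      have h1 : ‖F (((‖u‖ : ℂ)⁻¹) • u)‖ ≤ M := by
        refine le_csSup hbdd ⟨_, ?_, rfl⟩
        simp [norm_smul, hn]
      rw [hhom, norm_mul, norm_pow, norm_inv, Complex.norm_real, norm_norm, inv_pow,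
        inv_mul_le_iff₀ (by positivity)] at h1
      linarith
  -- power series at `x`
  obtain ⟨P, hP⟩ : ∃ P : FormalMultilinearSeries ℂ (Lp ℂ (ENNReal.ofReal p) μ) ℂ,
      HasFiniteFPowerSeriesOnBall F P x (m + 1) ⊤ := by
    let Q : FormalMultilinearSeries ℂ (Lp ℂ (ENNReal.ofReal p) μ) ℂ :=
      fun n => if h : m = n then h ▸ L else 0
    have hQ : HasFiniteFPowerSeriesOnBall F Q 0 (m + 1) ⊤ := by
      refine .mk' (fun n hn => dif_neg (by omega)) ENNReal.zero_lt_top fun y _ => ?_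
      rw [Finset.sum_eq_single_of_mem m (Finset.self_mem_range_succ _)]
      · simp [Q, hL]
      · intro n _ hne
        simp [Q, dif_neg hne.symm]
    have := hQ.changeOrigin (y := x) (by simp)
    refine ⟨Q.changeOrigin x, ?_⟩
    simpa using this
  have hexp : ∀ (z : ℂ) y, F (x + z • y) = ∑ j ∈ Finset.range (m + 1), z ^ j * P j (fun _ => y) := by
    intro z y
    rw [hP.eq_partialSum' (x + z • y) (by simp) (m + 1) le_rfl]
    simp only [FormalMultilinearSeries.partialSum, add_sub_cancel_left]
    refine Finset.sum_congr rfl fun j _ => ?_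
    have := (P j).map_smul_univ (fun _ => z) (fun _ => y)
    simpa using this
  have hx1 : ‖x‖ ^ p < 1 := Real.rpow_lt_one (norm_nonneg _) hx hp0
  set T := 1 - ‖x‖ ^ p with hT
  have hT0 : 0 < T := by linarith
  set b := T ^ (1 / p) with hb
  have hb0 : 0 < b := by positivity
  have hbp : b ^ p = T := by rw [hb, one_div, Real.rpow_inv_rpow hT0.le hp0.ne']
  have hζ := Complex.isPrimitiveRoot_exp (m + 1) (by omega)
  set ζ := Complex.exp (2 * Real.pi * Complex.I / (m + 1 : ℕ)) with hζdef
  have hζn : ‖ζ‖ = 1 := hζ.norm'_eq_one (by omega)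
  refine Real.sSup_le ?_ (by positivity)
  rintro _ ⟨y, hy, rfl⟩
  have hy : ‖y‖ ≤ 1 := by simpa using hy
  have hcl := aux_clarkson μ (m + 1) (fun i => ζ ^ (i : ℕ)) (fun i => by simp [hζn])
    (by rw [Fin.sum_univ_eq_sum_range (fun i => ζ ^ i)]; exact hζ.geom_sum_eq_zero (by omega))
    m hm p hp1 hpm x ((b : ℂ) • y) (by
      rw [norm_smul, Complex.norm_real, Real.norm_of_nonneg hb0.le,
        Real.mul_rpow hb0.le (norm_nonneg _), hbp]
      have : ‖y‖ ^ p ≤ 1 := Real.rpow_le_one (norm_nonneg _) hy hp0.le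
      nlinarith)
  have hco := aux_coeff m k hk ζ hζ (fun j => P j (fun _ => (b : ℂ) • y))
  simp_rw [← hexp] at hco
  have hbound : (m + 1 : ℝ) * ‖P k (fun _ => (b : ℂ) • y)‖ ≤ M * (m + 1 : ℝ) := by
    have : ‖(m + 1 : ℂ)‖ = (m + 1 : ℝ) := by
      have := Complex.norm_natCast (m + 1)
      push_cast at this; exact this
    rw [← this, ← norm_mul, ← hco, this]
    refine (norm_sum_le _ _).trans ?_
    calc _ ≤ ∑ i : Fin (m + 1), M * ‖x + ζ ^ (i : ℕ) • (b : ℂ) • y‖ ^ m := by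
          refine Finset.sum_le_sum fun i _ => ?_
          rw [norm_mul, norm_pow, norm_pow, hζn, one_pow, one_pow, one_mul]
          exact hFM _
      _ ≤ M * (m + 1 : ℝ) := by
          rw [← Finset.mul_sum]
          refine mul_le_mul_of_nonneg_left ?_ hM0
          push_cast at hcl
          exact hcl
  have hPk : ‖P k (fun _ => (b : ℂ) • y)‖ = b ^ k * ‖P k (fun _ => y)‖ := by
    have := (P k).map_smul_univ (fun _ => (b : ℂ)) (fun _ => y)
    rw [this]
    simp [abs_of_pos hb0]
  have hle : b ^ k * ‖P k (fun _ => y)‖ ≤ M := by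
    rw [← hPk]
    have : (0 : ℝ) < m + 1 := by positivity
    nlinarith
  have hTk : T ^ (-(k : ℝ) / p) = (b ^ k)⁻¹ := by
    rw [hb, ← Real.rpow_natCast, ← Real.rpow_mul hT0.le, ← Real.rpow_neg hT0.le]
    congr 1; ring
  have hfac := hP.toHasFPowerSeriesOnBall.factorial_smul y k
  simp only
  rw [← hfac, nsmul_eq_mul, norm_mul, Complex.norm_natCast, hTk, mul_assoc]
  gcongr
  rw [inv_mul_eq_div, le_div_iff₀ (by positivity)]
  linarith
end
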